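/- arXiv:1602.01630 — 2 statements merged into one kernel-verified Lean document; each statement's English description precedes it below -/
import Mathlib

section
/- For every integer n ≥ 2, the set Γₙ of real algebraic integers of degree n, together with the function N(α) = H(α)^n, forms a regular system: there exist constants c₅ > 0 and c₁₅ > 0, depending only on n, such that for every interval I ⊆ [-1/2, 1/2] of positive length and every T > c₁₅·|I|^{-n}, there exist t elements γ₁, …, γ_t ∈ Γₙ ∩ I satisfying: (1) H(γᵢ)^n ≤ T for all 1 ≤ i ≤ t; (2) |γᵢ - γⱼ| > T^{-1} for all 1 ≤ i < j ≤ t; and (3) t > c₅·T·|I|. -/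
open Polynomial

/-!
Write `n = N + 1`. A monic polynomial `Xⁿ + 2 + 4 V` with `V` integral of degree at most `N` is
irreducible by Eisenstein's criterion at `2`, so real algebraic integers of degree `n` near `x` can
be produced by choosing `V`. We want its value at `x` to be `O(Q⁻ᴺ)`, its coefficients to be `O(Q)`
and its derivative near `x` to be of exact order `Q`: then it has a root within `O(Q⁻ⁿ)` of `x`.
These conditions ask for a point of the lattice of vectors `(Qᴺ V(x), Q⁻¹ V₁, …, Q⁻¹ V_N)` within
`O(1)` of a prescribed point of `ℝⁿ`. The lattice has covolume `1`, so by a packing argument such a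
point exists unless the lattice contains a nonzero vector of length less than some fixed `ε`.

By the nondivergence theorem of Kleinbock and Margulis, the set of `x ∈ [a, b]` for which there is
such a short vector has measure at most `(b - a) / 2` once `Q (b - a)` is large. The covolumes of
the sublattices are maxima of absolute values of polynomials in `x` of bounded degree, which are
rarely small compared with their supremum, and each of these suprema over `[a, b]` is at least `1`.

Hence intervals of length `O(Q⁻ⁿ)` around the algebraic integers of height `O(Q)` cover half of
`[a, b]`, and a maximal separated subset of these integers has at least `κ Qⁿ (b - a)` elements.
-/

open MeasureTheory Set
open scoped ENNReal

/-! ### Real polynomials away from their complex roots -/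

/-- The real points at distance less than `δ` from a complex root of `p`. Away from this set the
size of `p` is controlled in terms of `δ` alone, which makes polynomials of bounded degree *good
functions* in the sense of Kleinbock and Margulis. -/
def nearRoots (p : ℝ[X]) (δ : ℝ) : Set ℝ := {x | ∃ r ∈ p.aroots ℂ, ‖(x : ℂ) - r‖ < δ}

lemma abs_eval_eq_prod_aroots (p : ℝ[X]) (x : ℝ) :
    |p.eval x| = |p.leadingCoeff| * ((p.aroots ℂ).map fun r => ‖(x : ℂ) - r‖).prod := by
  calc |p.eval x| = ‖aeval (x : ℂ) p‖ := by
        rw [← Complex.coe_algebraMap, aeval_algebraMap_apply_eq_algebraMap_eval,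
          norm_algebraMap', Real.norm_eq_abs]
    _ = |p.leadingCoeff| * normHom ((p.aroots ℂ).map fun r => (x : ℂ) - r).prod := by
        rw [(IsAlgClosed.splits _).aeval_eq_prod_aroots, norm_mul, norm_algebraMap',
          Real.norm_eq_abs, normHom_apply]
    _ = _ := by rw [map_multiset_prod, Multiset.map_map]; rfl

lemma card_aroots_complex (p : ℝ[X]) : (p.aroots ℂ).card = p.natDegree := by
  rw [aroots, ← (IsAlgClosed.splits _).natDegree_eq_card_roots, natDegree_map]

lemma volume_nearRoots_le (p : ℝ[X]) {δ : ℝ} (hδ : 0 ≤ δ) :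
    volume (nearRoots p δ) ≤ ENNReal.ofReal (2 * δ * p.natDegree) := by
  classical
  have hsub : nearRoots p δ ⊆ ⋃ r ∈ (p.aroots ℂ).toFinset, Ioo (r.re - δ) (r.re + δ) := by
    rintro x ⟨r, hr, hx⟩
    have hre : |x - r.re| < δ := by
      simpa using (Complex.abs_re_le_norm ((x : ℂ) - r)).trans_lt hx
    simp only [mem_iUnion, Multiset.mem_toFinset]
    exact ⟨r, hr, by linarith [(abs_lt.1 hre).1], by linarith [(abs_lt.1 hre).2]⟩
  calc volume (nearRoots p δ)
      ≤ ∑ r ∈ (p.aroots ℂ).toFinset, volume (Ioo (r.re - δ) (r.re + δ)) :=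
        (measure_mono hsub).trans (measure_biUnion_finset_le _ _)
    _ = (p.aroots ℂ).toFinset.card * ENNReal.ofReal (2 * δ) := by
        simp only [Real.volume_Ioo, add_sub_sub_cancel, Finset.sum_const, nsmul_eq_mul, two_mul]
    _ ≤ p.natDegree * ENNReal.ofReal (2 * δ) := by
        gcongr
        exact (Multiset.toFinset_card_le _).trans (card_aroots_complex p).le
    _ = ENNReal.ofReal (2 * δ * p.natDegree) := by
        rw [ENNReal.ofReal_mul (p := 2 * δ) (by positivity), ENNReal.ofReal_natCast, mul_comm]

lemma abs_eval_le_of_notMem_nearRoots {p : ℝ[X]} {δ x : ℝ} (hδ : 0 < δ) (hx : x ∉ nearRoots p δ)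
    (y : ℝ) : |p.eval y| ≤ (1 + |y - x| / δ) ^ p.natDegree * |p.eval x| := by
  have hfactor : ∀ r ∈ p.aroots ℂ, ‖(y : ℂ) - r‖ ≤ (1 + |y - x| / δ) * ‖(x : ℂ) - r‖ := by
    intro r hr
    have hfar : δ ≤ ‖(x : ℂ) - r‖ := not_lt.1 fun h => hx ⟨r, hr, h⟩
    calc ‖(y : ℂ) - r‖ ≤ ‖(y : ℂ) - x‖ + ‖(x : ℂ) - r‖ := norm_sub_le_norm_sub_add_norm_sub _ _ _
      _ = |y - x| / δ * δ + ‖(x : ℂ) - r‖ := by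
          rw [div_mul_cancel₀ _ hδ.ne', ← Complex.ofReal_sub, Complex.norm_real, Real.norm_eq_abs]
      _ ≤ |y - x| / δ * ‖(x : ℂ) - r‖ + ‖(x : ℂ) - r‖ := by gcongr
      _ = _ := by ring
  calc |p.eval y|
      = |p.leadingCoeff| * ((p.aroots ℂ).map fun r => ‖(y : ℂ) - r‖).prod :=
        abs_eval_eq_prod_aroots p y
    _ ≤ |p.leadingCoeff| *
          ((p.aroots ℂ).map fun r => (1 + |y - x| / δ) * ‖(x : ℂ) - r‖).prod := by
        gcongr
        exact Multiset.prod_map_le_prod_map₀ _ _ (fun _ _ => norm_nonneg _) hfactor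
    _ = _ := by
        rw [Multiset.prod_map_mul, Multiset.map_const', Multiset.prod_replicate,
          card_aroots_complex, abs_eval_eq_prod_aroots p x]
        ring

lemma leadingCoeff_mul_pow_le_of_notMem_nearRoots {p : ℝ[X]} {δ x : ℝ} (hδ : 0 ≤ δ)
    (hx : x ∉ nearRoots p δ) : |p.leadingCoeff| * δ ^ p.natDegree ≤ |p.eval x| := by
  rw [abs_eval_eq_prod_aroots, ← card_aroots_complex, ← Multiset.prod_replicate,
    ← Multiset.map_const']
  gcongr
  exact Multiset.prod_map_le_prod_map₀ _ _ (fun _ _ => hδ)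
    fun r hr => not_lt.1 fun h => hx ⟨r, hr, h⟩

lemma exists_mem_Icc_leadingCoeff_mul_pow_le (p : ℝ[X]) {δ a b : ℝ} (hδ : 0 ≤ δ)
    (hab : 2 * δ * p.natDegree < b - a) :
    ∃ x ∈ Icc a b, |p.leadingCoeff| * δ ^ p.natDegree ≤ |p.eval x| := by
  obtain ⟨x, hx, hxp⟩ : ∃ x ∈ Icc a b, x ∉ nearRoots p δ := by
    refine not_subset.1 fun h => hab.not_ge ?_
    rw [← ENNReal.ofReal_le_ofReal_iff (by positivity), ← Real.volume_Icc]
    exact (measure_mono h).trans (volume_nearRoots_le p hδ)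
  exact ⟨x, hx, leadingCoeff_mul_pow_le_of_notMem_nearRoots hδ hxp⟩

lemma continuous_norm_eval {ι : Type*} [Fintype ι] (p : ι → ℝ[X]) :
    Continuous fun x => ‖fun i => (p i).eval x‖ :=
  (continuous_pi fun i => (p i).continuous).norm

lemma volume_norm_eval_lt_le {ι : Type*} [Fintype ι] {p : ι → ℝ[X]} {D : ℕ}
    (hp : ∀ i, (p i).natDegree ≤ D) {η a b : ℝ} (hη : 0 < η) (hab : a < b)
    (hlarge : ∃ y ∈ Icc a b, 1 ≤ ‖fun i => (p i).eval y‖) :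
    volume {x ∈ Ioo a b | ‖fun i => (p i).eval x‖ < ((1 + 1 / η) ^ D)⁻¹} ≤
      ENNReal.ofReal (2 * D * η) * volume (Ioo a b) := by
  have hpos : 0 < η * (b - a) := mul_pos hη (sub_pos.2 hab)
  obtain ⟨y, hy, hy1⟩ := hlarge
  obtain ⟨i, hi⟩ : ∃ i, 1 ≤ |(p i).eval y| := by
    by_contra! h
    exact hy1.not_gt ((pi_norm_lt_iff one_pos).2 h)
  calc volume {x ∈ Ioo a b | ‖fun i => (p i).eval x‖ < ((1 + 1 / η) ^ D)⁻¹}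
      ≤ volume (nearRoots (p i) (η * (b - a))) := by
        refine measure_mono fun x hx => by_contra fun hfar => hx.2.not_ge ?_
        have hyx : |y - x| / (η * (b - a)) ≤ 1 / η := by
          rw [div_le_div_iff₀ hpos hη, one_mul, mul_comm]
          gcongr
          exact abs_sub_le_of_le_of_le hy.1 hy.2 hx.1.1.le hx.1.2.le
        rw [inv_le_iff_one_le_mul₀' (by positivity)]
        calc 1 ≤ |(p i).eval y| := hi
          _ ≤ (1 + |y - x| / (η * (b - a))) ^ (p i).natDegree * |(p i).eval x| :=
              abs_eval_le_of_notMem_nearRoots hpos hfar y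
          _ ≤ (1 + 1 / η) ^ (p i).natDegree * |(p i).eval x| := by gcongr
          _ ≤ (1 + 1 / η) ^ D * ‖fun i => (p i).eval x‖ := by
              gcongr
              · exact le_add_of_nonneg_right (by positivity)
              · exact hp i
              · exact norm_le_pi_norm (fun i => (p i).eval x) i
    _ ≤ ENNReal.ofReal (2 * (η * (b - a)) * (p i).natDegree) := volume_nearRoots_le _ hpos.le
    _ ≤ ENNReal.ofReal (2 * D * η * (b - a)) := by
        refine ENNReal.ofReal_le_ofReal ?_
        calc 2 * (η * (b - a)) * (p i).natDegree ≤ 2 * (η * (b - a)) * D := by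
              gcongr
              exact hp i
          _ = 2 * D * η * (b - a) := by ring
    _ = ENNReal.ofReal (2 * D * η) * volume (Ioo a b) := by
        rw [Real.volume_Ioo, ENNReal.ofReal_mul (by positivity)]

/-! ### Coverings by intervals of multiplicity two -/

open Classical in
lemma sum_measure_le_mul_of_card_le {Ω ι : Type*} [MeasurableSpace Ω] (μ : Measure Ω)
    {t : Finset ι} {A : ι → Set Ω} {U : Set Ω} {m : ℕ} (hA : ∀ i ∈ t, MeasurableSet (A i))
    (hAU : ∀ i ∈ t, A i ⊆ U) (hcard : ∀ x, {i ∈ t | x ∈ A i}.card ≤ m) :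
    ∑ i ∈ t, μ (A i) ≤ m * μ U := by
  calc ∑ i ∈ t, μ (A i) = ∑ i ∈ t, ∫⁻ x in U, (A i).indicator 1 x ∂μ := by
        refine Finset.sum_congr rfl fun i hi => ?_
        rw [lintegral_indicator_one (hA i hi), Measure.restrict_eq_self _ (hAU i hi)]
    _ = ∫⁻ x in U, ∑ i ∈ t, (A i).indicator 1 x ∂μ :=
        (lintegral_finsetSum' _ fun i hi =>
          (measurable_one.indicator (hA i hi)).aemeasurable).symm
    _ ≤ ∫⁻ _ in U, m ∂μ := by
        refine lintegral_mono fun x => ?_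
        simp only [indicator_apply, Pi.one_apply, Finset.sum_boole]
        exact_mod_cast hcard x
    _ = m * μ U := by rw [setLIntegral_const]

open Classical in
lemma exists_subset_biUnion_Ioo_eq_card_le_two {α ι : Type*} [LinearOrder α] (t : Finset ι)
    (l r : ι → α) : ∃ s ⊆ t, ⋃ i ∈ s, Ioo (l i) (r i) = ⋃ i ∈ t, Ioo (l i) (r i) ∧
      ∀ x, {i ∈ s | x ∈ Ioo (l i) (r i)}.card ≤ 2 := by
  obtain ⟨s, hst, hs, hmin⟩ := exists_minimal_le_of_wellFoundedLT
    (fun s : Finset ι => ⋃ i ∈ s, Ioo (l i) (r i) = ⋃ i ∈ t, Ioo (l i) (r i)) t rfl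
  refine ⟨s, hst, hs, fun x => not_lt.1 fun hcard => ?_⟩
  set u := {i ∈ s | x ∈ Ioo (l i) (r i)} with hu
  obtain ⟨p, hp, hpmin⟩ := u.exists_min_image l (Finset.card_pos.1 (by lia))
  obtain ⟨q, hq, hqmax⟩ := u.exists_max_image r ⟨p, hp⟩
  obtain ⟨k, hk, hkpq⟩ := Finset.exists_mem_notMem_of_card_lt_card
    ((Finset.card_le_two (a := p) (b := q)).trans_lt hcard)
  simp only [Finset.mem_insert, Finset.mem_singleton, not_or] at hkpq
  simp only [hu, Finset.mem_filter] at hp hq hk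
  have hcover : Ioo (l k) (r k) ⊆ Ioo (l p) (r p) ∪ Ioo (l q) (r q) := fun y hy =>
    (le_or_gt y x).imp
      (fun hyx => ⟨(hpmin k (Finset.mem_filter.2 hk)).trans_lt hy.1, hyx.trans_lt hp.2.2⟩)
      (fun hxy => ⟨hq.2.1.trans hxy, hy.2.trans_le (hqmax k (Finset.mem_filter.2 hk))⟩)
  have herase : ⋃ i ∈ s.erase k, Ioo (l i) (r i) = ⋃ i ∈ s, Ioo (l i) (r i) := by
    refine (biUnion_subset_biUnion_left fun i hi => Finset.mem_of_mem_erase hi).antisymm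
      (iUnion₂_subset fun i hi => ?_)
    rcases eq_or_ne i k with rfl | hik
    · exact hcover.trans (union_subset
        (subset_biUnion_of_mem (u := fun i => Ioo (l i) (r i))
          (Finset.mem_erase.2 ⟨Ne.symm hkpq.1, hp.1⟩))
        (subset_biUnion_of_mem (u := fun i => Ioo (l i) (r i))
          (Finset.mem_erase.2 ⟨Ne.symm hkpq.2, hq.1⟩)))
    · exact subset_biUnion_of_mem (u := fun i => Ioo (l i) (r i)) (Finset.mem_erase.2 ⟨hik, hi⟩)
  exact Finset.notMem_erase k s (hmin (herase.trans hs) (Finset.erase_subset k s) hk.1)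

lemma volume_inter_biUnion_Ioo_le {ι : Type*} (t : Finset ι) {l r : ι → ℝ} {E U : Set ℝ}
    {κ : ℝ≥0∞} (hU : ∀ i ∈ t, Ioo (l i) (r i) ⊆ U)
    (hE : ∀ i ∈ t, volume (E ∩ Ioo (l i) (r i)) ≤ κ * volume (Ioo (l i) (r i))) :
    volume (E ∩ ⋃ i ∈ t, Ioo (l i) (r i)) ≤ 2 * κ * volume U := by
  obtain ⟨s, hst, hs, hcard⟩ := exists_subset_biUnion_Ioo_eq_card_le_two t l r
  calc volume (E ∩ ⋃ i ∈ t, Ioo (l i) (r i))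
      = volume (⋃ i ∈ s, E ∩ Ioo (l i) (r i)) := by rw [← hs, inter_iUnion₂]
    _ ≤ ∑ i ∈ s, volume (E ∩ Ioo (l i) (r i)) := measure_biUnion_finset_le _ _
    _ ≤ ∑ i ∈ s, κ * volume (Ioo (l i) (r i)) := Finset.sum_le_sum fun i hi => hE i (hst hi)
    _ = κ * ∑ i ∈ s, volume (Ioo (l i) (r i)) := by rw [Finset.mul_sum]
    _ ≤ κ * ((2 : ℕ) * volume U) := by
        gcongr
        exact sum_measure_le_mul_of_card_le volume (fun _ _ => measurableSet_Ioo)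
          (fun i hi => hU i (hst hi)) fun x => by convert hcard x
    _ = 2 * κ * volume U := by
        push_cast
        ring

lemma volume_le_of_forall_mem_exists_Ioo {E U : Set ℝ} {κ : ℝ≥0∞}
    (h : ∀ x ∈ E, ∃ l r, x ∈ Ioo l r ∧ Ioo l r ⊆ U ∧
      volume (E ∩ Ioo l r) ≤ κ * volume (Ioo l r)) :
    volume E ≤ 2 * κ * volume U := by
  choose! l r hx hU hE using h
  obtain ⟨c, hcE, hc, hcover⟩ := TopologicalSpace.countable_cover_nhdsWithin (s := E)
    (f := fun x => Ioo (l x) (r x)) fun x hxE =>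
      mem_nhdsWithin_of_mem_nhds (isOpen_Ioo.mem_nhds (hx x hxE))
  have := hc.to_subtype
  calc volume E ≤ volume (⋃ t : Finset c, E ∩ ⋃ i ∈ t, Ioo (l i) (r i)) := by
        refine measure_mono fun x hxE => ?_
        obtain ⟨i, hi, hxi⟩ := mem_iUnion₂.1 (hcover hxE)
        exact mem_iUnion.2 ⟨{⟨i, hi⟩}, hxE, mem_iUnion₂.2 ⟨⟨i, hi⟩, by simp, hxi⟩⟩
    _ = ⨆ t : Finset c, volume (E ∩ ⋃ i ∈ t, Ioo (l i) (r i)) := by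
        refine Directed.measure_iUnion (Monotone.directed_le fun _ _ hst => ?_)
        exact inter_subset_inter_right _ (biUnion_subset_biUnion_left hst)
    _ ≤ 2 * κ * volume U := iSup_le fun t =>
        volume_inter_biUnion_Ioo_le t (fun i _ => hU i (hcE i.2)) (fun i _ => hE i (hcE i.2))

/-! ### Quantitative nondivergence for functions indexed by a partially ordered set -/

/-- The interval `(l, r)` is the connected component containing `x` of the set of points of
`(a, b)` at which `f < 1`. -/
structure IsSublevelInterval (f : ℝ → ℝ) (a b x l r : ℝ) : Prop where
  mem : x ∈ Ioo l r
  left_le : a ≤ l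
  le_right : r ≤ b
  lt_one : ∀ y ∈ Ioo l r, f y < 1
  left_eq_or : l = a ∨ 1 ≤ f l
  right_eq_or : r = b ∨ 1 ≤ f r

lemma exists_left_endpoint_sublevel {f : ℝ → ℝ} (hf : Continuous f) {a x : ℝ} (hax : a < x)
    (hfx : f x < 1) :
    ∃ l, a ≤ l ∧ l < x ∧ (∀ y ∈ Ioc l x, f y < 1) ∧ (l = a ∨ 1 ≤ f l) := by
  have hcompact : IsCompact ({a} ∪ {y ∈ Icc a x | 1 ≤ f y}) :=
    isCompact_singleton.union (isCompact_Icc.inter_right (isClosed_le continuous_const hf))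
  obtain ⟨l, hl, hmax⟩ := hcompact.exists_isGreatest (singleton_nonempty a).inl
  have hlarge : l = a ∨ 1 ≤ f l := hl.imp id And.right
  have hal : a ≤ l := hmax (Or.inl rfl)
  refine ⟨l, hal, ?_, fun y hy => ?_, hlarge⟩
  · rcases hl with rfl | ⟨hlx, hfl⟩
    · exact hax
    · exact hlx.2.lt_of_ne fun h => hfx.not_ge (h ▸ hfl)
  · by_contra! hfy
    exact hy.1.not_ge (hmax (Or.inr ⟨⟨hal.trans hy.1.le, hy.2⟩, hfy⟩))

lemma exists_isSublevelInterval {f : ℝ → ℝ} (hf : Continuous f) {a b x : ℝ} (hx : x ∈ Ioo a b)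
    (hfx : f x < 1) : ∃ l r, IsSublevelInterval f a b x l r := by
  obtain ⟨l, hal, hlx, hl, hl'⟩ := exists_left_endpoint_sublevel hf hx.1 hfx
  obtain ⟨r, hbr, hrx, hr, hr'⟩ := exists_left_endpoint_sublevel (hf.comp continuous_neg)
    (neg_lt_neg hx.2) (by simpa using hfx)
  refine ⟨l, -r, ⟨hlx, lt_neg.1 hrx⟩, hal, neg_le.1 hbr, fun y hy => ?_, hl',
    hr'.imp neg_eq_iff_eq_neg.2 id⟩
  rcases le_total y x with hyx | hxy
  · exact hl y ⟨hy.1, hyx⟩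
  · simpa using hr (-y) ⟨lt_neg.1 hy.2, neg_le_neg hxy⟩

lemma IsSublevelInterval.exists_one_le {f g : ℝ → ℝ} {a b x l r l' r' : ℝ}
    (hf : IsSublevelInterval f a b x l r) (hg : IsSublevelInterval g a b x l' r')
    (hlen : r' - l' ≤ r - l) (h : ∃ y ∈ Icc a b, 1 ≤ g y) : ∃ y ∈ Icc l r, 1 ≤ g y := by
  have hlr : l ≤ r := (hf.mem.1.trans hf.mem.2).le
  rcases lt_or_ge l l' with hll | hll
  · exact ⟨l', ⟨hll.le, (hg.mem.1.trans hf.mem.2).le⟩,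
      hg.left_eq_or.resolve_left (hf.left_le.trans_lt hll).ne'⟩
  rcases lt_or_ge r' r with hrr | hrr
  · exact ⟨r', ⟨(hf.mem.1.trans hg.mem.2).le, hrr.le⟩,
      hg.right_eq_or.resolve_left (hrr.trans_le hf.le_right).ne⟩
  obtain rfl : l = l' := by linarith
  obtain rfl : r = r' := by linarith
  rcases hg.left_eq_or with rfl | hl
  · rcases hg.right_eq_or with rfl | hr
    · exact h
    · exact ⟨r, right_mem_Icc.2 hlr, hr⟩
  · exact ⟨l, left_mem_Icc.2 hlr, hl⟩

section Marked

variable {α : Type*} [PartialOrder α] {S : Set α} {ψ : α → ℝ → ℝ} {ε : ℝ} {F : Finset α} {x : ℝ}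

/-- The point `x` is *marked* relative to the chain `F` in `S` if `F` extends to a finite chain in
`S` at whose new elements `ψ · x` lies between `ε` and `1`, while `ψ · x` is at least `1` at all
elements of `S` by which that chain can be extended further. -/
def IsMarked (S : Set α) (ψ : α → ℝ → ℝ) (ε : ℝ) (F : Finset α) (x : ℝ) : Prop :=
  ∃ G : Finset α, F ⊆ G ∧ ↑G ⊆ S ∧ IsChain (· ≤ ·) (G : Set α) ∧
    (∀ s ∈ G, s ∉ F → ψ s x ∈ Icc ε 1) ∧
    ∀ s ∈ S, s ∉ G → IsChain (· ≤ ·) (insert s G : Set α) → 1 ≤ ψ s x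

lemma IsMarked.of_insert [DecidableEq α] {s : α} (h : IsMarked S ψ ε (insert s F) x)
    (hs : ψ s x ∈ Icc ε 1) : IsMarked S ψ ε F x := by
  obtain ⟨G, hFG, hGS, hG, hmid, hlarge⟩ := h
  refine ⟨G, (Finset.subset_insert s F).trans hFG, hGS, hG, fun t ht htF => ?_, hlarge⟩
  rcases eq_or_ne t s with rfl | hts
  · exact hs
  · exact hmid t ht (by simp [hts, htF])

lemma exists_lt_one_of_not_isMarked (hFS : ↑F ⊆ S) (hF : IsChain (· ≤ ·) (F : Set α))
    (h : ¬IsMarked S ψ ε F x) :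
    ∃ s ∈ S, s ∉ F ∧ IsChain (· ≤ ·) (insert s F : Set α) ∧ ψ s x < 1 := by
  by_contra! hlarge
  exact h ⟨F, Finset.Subset.refl F, hFS, hF, fun s hs hsF => absurd hs hsF, hlarge⟩

lemma exists_isSublevelInterval_of_not_isMarked (hS : S.Finite) (hψ : ∀ s, Continuous (ψ s))
    (hFS : ↑F ⊆ S) (hF : IsChain (· ≤ ·) (F : Set α)) {a b : ℝ}
    (hlarge : ∀ s ∈ S, s ∉ F → IsChain (· ≤ ·) (insert s F : Set α) → ∃ y ∈ Icc a b, 1 ≤ ψ s y)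
    (hxab : x ∈ Ioo a b) (hx : ¬IsMarked S ψ ε F x) :
    ∃ s ∈ S, s ∉ F ∧ IsChain (· ≤ ·) (insert s F : Set α) ∧
      ∃ l r, IsSublevelInterval (ψ s) a b x l r ∧
        ∀ t ∈ S, t ∉ F → IsChain (· ≤ ·) (insert t F : Set α) → ∃ y ∈ Icc l r, 1 ≤ ψ t y := by
  choose! l r hlr using fun s (hs : ψ s x < 1) => exists_isSublevelInterval (hψ s) hxab hs
  obtain ⟨s, ⟨hsS, hsF, hchain, hsx⟩, hmax⟩ := exists_max_image
    {s | s ∈ S ∧ s ∉ F ∧ IsChain (· ≤ ·) (insert s F : Set α) ∧ ψ s x < 1} (fun s => r s - l s)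
    (hS.subset fun s hs => hs.1) (exists_lt_one_of_not_isMarked hFS hF hx)
  refine ⟨s, hsS, hsF, hchain, l s, r s, hlr s hsx, fun t htS htF ht => ?_⟩
  by_contra! hlt
  have htx : ψ t x < 1 := hlt x (Ioo_subset_Icc_self (hlr s hsx).mem)
  obtain ⟨y, hy, hty⟩ := (hlr s hsx).exists_one_le (hlr t htx) (hmax t ⟨htS, htF, ht, htx⟩)
    (hlarge t htS htF ht)
  exact (hlt y hy).not_ge hty

/-- The argument of Kleinbock and Margulis: an unmarked point lies in an interval on which some
admissible `ψ s` is less than `1` while every admissible function still reaches `1` on its closure.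
On it induction applies to the chain `insert s F`, and `ψ s` itself is rarely below `ε`. -/
theorem volume_not_isMarked_le {m : ℕ} {η : ℝ≥0∞} (hS : S.Finite) (hψ : ∀ s, Continuous (ψ s))
    (hcard : ∀ G : Finset α, ↑G ⊆ S → IsChain (· ≤ ·) (G : Set α) → G.card ≤ m)
    (hgood : ∀ s ∈ S, ∀ l r, l < r → (∃ y ∈ Icc l r, 1 ≤ ψ s y) →
      volume {y ∈ Ioo l r | ψ s y < ε} ≤ η * volume (Ioo l r)) {j : ℕ} (hj : F.card + j = m)
    (hFS : ↑F ⊆ S) (hF : IsChain (· ≤ ·) (F : Set α)) {a b : ℝ}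
    (hlarge : ∀ s ∈ S, s ∉ F → IsChain (· ≤ ·) (insert s F : Set α) → ∃ y ∈ Icc a b, 1 ≤ ψ s y) :
    volume {x ∈ Ioo a b | ¬IsMarked S ψ ε F x} ≤ 4 ^ j * η * volume (Ioo a b) := by
  classical
  have hins : ∀ s ∈ S, ↑(insert s F) ⊆ S := fun s hs => by simp [insert_subset_iff, hs, hFS]
  induction j generalizing F a b with
  | zero =>
    suffices {x ∈ Ioo a b | ¬IsMarked S ψ ε F x} = ∅ by rw [this, measure_empty]; exact zero_le
    refine eq_empty_of_forall_notMem fun x hx => ?_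
    obtain ⟨s, hsS, hsF, hchain, -⟩ := exists_lt_one_of_not_isMarked hFS hF hx.2
    have := hcard (insert s F) (hins s hsS) (by simpa using hchain)
    rw [Finset.card_insert_of_notMem hsF] at this
    lia
  | succ j ih =>
    suffices volume {x ∈ Ioo a b | ¬IsMarked S ψ ε F x} ≤
        2 * (4 ^ j * η + η) * volume (Ioo a b) by
      have h4 : η ≤ 4 ^ j * η := le_mul_of_one_le_left' (one_le_pow₀ (by norm_num))
      calc _ ≤ 2 * (4 ^ j * η + 4 ^ j * η) * volume (Ioo a b) := this.trans (by gcongr)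
        _ = 4 ^ (j + 1) * η * volume (Ioo a b) := by ring
    refine volume_le_of_forall_mem_exists_Ioo fun x ⟨hxab, hx⟩ => ?_
    obtain ⟨s, hsS, hsF, hchain, l, r, hs, hone⟩ :=
      exists_isSublevelInterval_of_not_isMarked hS hψ hFS hF hlarge hxab hx
    refine ⟨l, r, hs.mem, Ioo_subset_Ioo hs.left_le hs.le_right, ?_⟩
    calc volume ({x ∈ Ioo a b | ¬IsMarked S ψ ε F x} ∩ Ioo l r)
        ≤ volume ({y ∈ Ioo l r | ¬IsMarked S ψ ε (insert s F) y} ∪ {y ∈ Ioo l r | ψ s y < ε}) := by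
          refine measure_mono fun y ⟨⟨_, hy⟩, hys⟩ => ?_
          rcases lt_or_ge (ψ s y) ε with hsmall | hbig
          · exact Or.inr ⟨hys, hsmall⟩
          · exact Or.inl ⟨hys, fun h => hy (h.of_insert ⟨hbig, (hs.lt_one y hys).le⟩)⟩
      _ ≤ 4 ^ j * η * volume (Ioo l r) + η * volume (Ioo l r) := by
          refine (measure_union_le _ _).trans (add_le_add ?_ ?_)
          · refine ih (by rw [Finset.card_insert_of_notMem hsF]; lia) (hins s hsS)
              (by simpa using hchain) (fun t htS ht htchain => ?_)
              (fun t htS => by simp [insert_subset_iff, hsS, htS, hFS])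
            exact hone t htS (fun h => ht (Finset.mem_insert_of_mem h))
              (htchain.mono (insert_subset_insert (by simp)))
          · exact hgood s hsS l r (hs.mem.1.trans hs.mem.2) (hone s hsS hsF hchain)
      _ = (4 ^ j * η + η) * volume (Ioo l r) := by ring

end Marked

/-! ### Maximal minors -/

section Minors

open Matrix

variable {R ι : Type*} [CommRing R] {k : ℕ}

/-- The maximal minors of a matrix with `k` rows, indexed by all `k`-tuples of columns. These are
the coordinates of the exterior product of the rows. -/
def minors (M : Matrix (Fin k) ι R) (c : Fin k → ι) : R := (M.submatrix id c).det

lemma minors_mul (B : Matrix (Fin k) (Fin k) R) (M : Matrix (Fin k) ι R) :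
    minors (B * M) = B.det • minors M := by
  ext c
  rw [Pi.smul_apply, smul_eq_mul, minors, minors, ← det_mul,
    submatrix_mul B M id id c Function.bijective_id, submatrix_id_id]

lemma minors_map {R' : Type*} [CommRing R'] (f : R →+* R') (M : Matrix (Fin k) ι R)
    (c : Fin k → ι) : minors (M.map f) c = f (minors M c) := by
  rw [minors, minors, RingHom.map_det, RingHom.mapMatrix_apply, submatrix_map]

lemma injective_of_minors_ne_zero {M : Matrix (Fin k) ι R} {c : Fin k → ι} (h : minors M c ≠ 0) :
    Function.Injective c := fun i j hij => by
  by_contra hne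
  exact h (det_zero_of_column_eq hne fun l => by simp [hij])

lemma exists_minors_ne_zero {K : Type*} [Field K] [Finite ι] {M : Matrix (Fin k) ι K}
    (hM : LinearIndependent K M.row) : ∃ c, minors M c ≠ 0 := by
  have := Fintype.ofFinite ι
  have hspan := Submodule.exists_fun_fin_finrank_span_eq K (range M.col)
  rw [← rank_eq_finrank_span_cols, hM.rank_matrix, Fintype.card_fin] at hspan
  obtain ⟨f, hf, -, hli⟩ := hspan
  choose c hc using hf
  have hcol : LinearIndependent K (M.submatrix id c).col := by
    rwa [show (M.submatrix id c).col = f from funext hc]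
  rw [linearIndependent_cols_iff_isUnit, isUnit_iff_isUnit_det] at hcol
  exact ⟨c, hcol.ne_zero⟩

lemma norm_minors_vecCons_le [Fintype ι] (v : ι → ℝ) (M : Matrix (Fin k) ι ℝ) :
    ‖minors (of (vecCons v M))‖ ≤ (k + 1) * ‖v‖ * ‖minors M‖ := by
  refine (pi_norm_le_iff_of_nonneg (by positivity)).2 fun c => ?_
  rw [minors, det_succ_row_zero]
  calc _ ≤ ∑ _j : Fin (k + 1), ‖v‖ * ‖minors M‖ := by
        refine norm_sum_le_of_le _ fun j _ => ?_
        rw [norm_mul, norm_mul, norm_pow, norm_neg, norm_one, one_pow, one_mul]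
        exact mul_le_mul (norm_le_pi_norm v (c j)) (norm_le_pi_norm (minors M) (c ∘ j.succAbove))
          (norm_nonneg _) (norm_nonneg _)
    _ = (k + 1) * ‖v‖ * ‖minors M‖ := by
        rw [Finset.sum_const, Finset.card_univ, Fintype.card_fin, nsmul_eq_mul]
        push_cast
        ring

lemma natDegree_minors_le {d : ℕ} {M : Matrix (Fin k) ι R[X]} (hM : ∀ i j, (M i j).natDegree ≤ d)
    (c : Fin k → ι) : (minors M c).natDegree ≤ k * d := by
  rw [minors, det_apply]
  refine natDegree_sum_le_of_forall_le _ _ fun σ _ => (natDegree_smul_le _ _).trans ?_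
  calc _ ≤ ∑ i : Fin k, ((M.submatrix id c) (σ i) i).natDegree := natDegree_prod_le _ _
    _ ≤ ∑ _i : Fin k, d := Finset.sum_le_sum fun i _ => hM _ _
    _ = k * d := by simp

end Minors

/-! ### The matrix of rescaled polynomial values -/

section ValueMatrix

open Matrix

variable {N k : ℕ} {Q : ℝ}

/-- Multiplying a coefficient vector `v` by this matrix from the right gives the polynomial
`Q ^ N * ∑ vⱼ X ^ j` in column `0` and the rescaled coefficient `Q⁻¹ * vᵢ` in every other column
`i`. -/
noncomputable def valueMatrix (N : ℕ) (Q : ℝ) : Matrix (Fin (N + 1)) (Fin (N + 1)) ℝ[X] :=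
  of fun j i => if i = 0 then C (Q ^ N) * X ^ (j : ℕ) else if i = j then C Q⁻¹ else 0

/-- The matrix `valueMatrix N Q` evaluated at `x`. -/
noncomputable def valueMatrixAt (N : ℕ) (Q x : ℝ) : Matrix (Fin (N + 1)) (Fin (N + 1)) ℝ :=
  (valueMatrix N Q).map (evalRingHom x)

lemma valueMatrixAt_apply (x : ℝ) (j i : Fin (N + 1)) : valueMatrixAt N Q x j i =
    if i = 0 then Q ^ N * x ^ (j : ℕ) else if i = j then Q⁻¹ else 0 := by
  simp only [valueMatrixAt, valueMatrix, map_apply, of_apply]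
  split_ifs <;> simp

lemma natDegree_mul_valueMatrix_le (w : Matrix (Fin k) (Fin (N + 1)) ℤ) (i : Fin k)
    (j : Fin (N + 1)) : ((w.map (Int.castRingHom ℝ[X]) * valueMatrix N Q) i j).natDegree ≤ N := by
  rw [mul_apply]
  refine natDegree_sum_le_of_forall_le _ _ fun l _ => natDegree_mul_le.trans ?_
  rw [map_apply, eq_intCast, natDegree_intCast, zero_add, valueMatrix, of_apply]
  split_ifs
  · exact (natDegree_C_mul_X_pow_le _ _).trans (Nat.le_of_lt_succ l.2)
  · simp
  · simp

/-- The (sup norm) covolume of the lattice spanned by the rows of `w` after it is transformed by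
`valueMatrixAt N Q x`. -/
noncomputable def scaledCovolume (Q : ℝ) (w : Matrix (Fin k) (Fin (N + 1)) ℤ) (x : ℝ) : ℝ :=
  ‖minors (w.map (Int.castRingHom ℝ) * valueMatrixAt N Q x)‖

lemma scaledCovolume_eq_norm_eval (w : Matrix (Fin k) (Fin (N + 1)) ℤ) (x : ℝ) :
    scaledCovolume Q w x =
      ‖fun c => (minors (w.map (Int.castRingHom ℝ[X]) * valueMatrix N Q) c).eval x‖ := by
  rw [scaledCovolume]
  congr with c
  rw [← coe_evalRingHom, ← minors_map, Matrix.map_mul, map_map, valueMatrixAt]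
  congr
  ext i
  simp

lemma continuous_scaledCovolume (w : Matrix (Fin k) (Fin (N + 1)) ℤ) :
    Continuous (scaledCovolume Q w) := by
  simp only [funext (scaledCovolume_eq_norm_eval w)]
  exact continuous_norm_eval _

lemma volume_scaledCovolume_lt_le (w : Matrix (Fin k) (Fin (N + 1)) ℤ) (hk : k ≤ N + 1)
    {η a b : ℝ} (hη : 0 < η) (hab : a < b) (h : ∃ y ∈ Icc a b, 1 ≤ scaledCovolume Q w y) :
    volume {x ∈ Ioo a b | scaledCovolume Q w x < ((1 + 1 / η) ^ ((N + 1) * N))⁻¹} ≤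
      ENNReal.ofReal (2 * ((N + 1) * N : ℕ) * η) * volume (Ioo a b) := by
  simp only [scaledCovolume_eq_norm_eval] at h ⊢
  refine volume_norm_eval_lt_le (fun c => ?_) hη hab h
  exact (natDegree_minors_le (natDegree_mul_valueMatrix_le w) c).trans (by gcongr)

lemma scaledCovolume_mul (B : Matrix (Fin k) (Fin k) ℤ) (w : Matrix (Fin k) (Fin (N + 1)) ℤ)
    (x : ℝ) : scaledCovolume Q (B * w) x = |(B.det : ℝ)| * scaledCovolume Q w x := by
  rw [scaledCovolume, scaledCovolume, Matrix.map_mul, Matrix.mul_assoc, minors_mul, norm_smul,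
    ← RingHom.mapMatrix_apply, ← RingHom.map_det, eq_intCast, Real.norm_eq_abs]

lemma scaledCovolume_vecCons_le (v : Fin (N + 1) → ℤ) (w : Matrix (Fin k) (Fin (N + 1)) ℤ)
    (x : ℝ) : scaledCovolume Q (of (vecCons v w)) x ≤
      (k + 1) * ‖(Int.cast ∘ v) ᵥ* valueMatrixAt N Q x‖ * scaledCovolume Q w x := by
  have hmul : (of (vecCons v w)).map (Int.castRingHom ℝ) * valueMatrixAt N Q x =
      of (vecCons ((Int.cast ∘ v) ᵥ* valueMatrixAt N Q x)
        (w.map (Int.castRingHom ℝ) * valueMatrixAt N Q x)) := by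
    ext i j
    cases i using Fin.cases <;> rfl
  rw [scaledCovolume, hmul]
  exact norm_minors_vecCons_le _ _

lemma minors_mul_valueMatrixAt_update (w : Matrix (Fin k) (Fin (N + 1)) ℝ)
    {c : Fin k → Fin (N + 1)} {j₀ : Fin k} (hc : ∀ j ≠ j₀, c j ≠ 0) (x : ℝ) :
    minors (w * valueMatrixAt N Q x) (Function.update c j₀ 0) =
      Q ^ N * Q⁻¹ ^ (k - 1) *
        ∑ t : Fin (N + 1), minors w (Function.update c j₀ t) * x ^ (t : ℕ) := by
  have hsub : (w * valueMatrixAt N Q x).submatrix id (Function.update c j₀ 0) =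
      (Q⁻¹ • w.submatrix id c).updateCol j₀
        (∑ t : Fin (N + 1), (Q ^ N * x ^ (t : ℕ)) • w.col t) := by
    ext i j
    rcases eq_or_ne j j₀ with rfl | hj
    · simp [mul_apply, valueMatrixAt_apply, mul_comm]
    · simp [mul_apply, valueMatrixAt_apply, hj, hc j hj, mul_comm]
  have hcol (t : Fin (N + 1)) :
      (w.submatrix id c).cramer (w.col t) j₀ = minors w (Function.update c j₀ t) := by
    rw [cramer_apply, minors]
    congr
    ext i j
    rcases eq_or_ne j j₀ with rfl | hj
    · simp
    · simp [hj]
  rw [minors, hsub, det_updateCol_smul_left, Fintype.card_fin, ← cramer_apply, map_sum,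
    Finset.sum_apply, Finset.mul_sum, Finset.mul_sum]
  refine Finset.sum_congr rfl fun t _ => ?_
  rw [map_smul, Pi.smul_apply, hcol, smul_eq_mul]
  ring

lemma exists_minors_ne_zero_update_eq_zero {R : Type*} [CommRing R]
    {w : Matrix (Fin (k + 1)) (Fin (N + 1)) R} (hw : ∃ c, minors w c ≠ 0) :
    ∃ c j₀, minors w c ≠ 0 ∧ (∀ j, c j₀ ≤ c j) ∧
      ∀ t, c j₀ < t → minors w (Function.update c j₀ t) = 0 := by
  obtain ⟨c, hc⟩ := (Set.toFinite {c | minors w c ≠ 0}).exists_maximal hw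
  obtain ⟨j₀, hj₀⟩ := Finite.exists_min c
  refine ⟨c, j₀, hc.prop, hj₀, fun t ht => ?_⟩
  by_contra hne
  exact hc.not_gt hne (lt_update_self_iff.2 ht)

lemma add_le_of_injective_of_forall_le {c : Fin (k + 1) → Fin (N + 1)}
    (hc : Function.Injective c) {j₀ : Fin (k + 1)} (hj₀ : ∀ j, c j₀ ≤ c j) :
    k + (c j₀ : ℕ) ≤ N := by
  have hcard : k + 1 ≤ (Finset.Ici (c j₀)).card := by
    simpa using Finset.card_le_card_of_injOn (s := Finset.univ) (t := Finset.Ici (c j₀)) c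
      (by simpa [MapsTo] using hj₀) hc.injOn
  rw [Fin.card_Ici] at hcard
  omega

lemma exists_mem_Icc_mul_pow_le_abs_sum {α : Fin (N + 1) → ℝ} {i : Fin (N + 1)} (hi : α i ≠ 0)
    (hα : ∀ t, i < t → α t = 0) {δ a b : ℝ} (hδ : 0 ≤ δ) (hab : 2 * δ * N < b - a) :
    ∃ y ∈ Icc a b, |α i| * δ ^ (i : ℕ) ≤ |∑ t : Fin (N + 1), α t * y ^ (t : ℕ)| := by
  have hcoeff (t : Fin (N + 1)) : (ofFn (N + 1) α).coeff t = α t := ofFn_coeff_eq_val_of_lt _ t.2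
  have hdeg : (ofFn (N + 1) α).natDegree = i := by
    refine natDegree_eq_of_le_of_coeff_ne_zero (natDegree_le_iff_coeff_eq_zero.2 fun t ht => ?_)
      ((hcoeff i).trans_ne hi)
    rcases lt_or_ge t (N + 1) with htN | htN
    · exact (hcoeff ⟨t, htN⟩).trans (hα _ ht)
    · exact ofFn_coeff_eq_zero_of_ge _ htN
  have hiN : (i : ℝ) ≤ N := mod_cast Nat.le_of_lt_succ i.2
  obtain ⟨y, hy, hle⟩ := exists_mem_Icc_leadingCoeff_mul_pow_le (ofFn (N + 1) α) hδ
    (hdeg ▸ (mul_le_mul_of_nonneg_left hiN (by positivity)).trans_lt hab)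
  rw [leadingCoeff, hdeg, hcoeff, ofFn_eq_sum_monomial, eval_finsetSum] at hle
  simp only [eval_monomial] at hle
  exact ⟨y, hy, hle⟩

lemma exists_one_le_scaledCovolume {w : Matrix (Fin k) (Fin (N + 1)) ℤ} (hw : ∃ c, minors w c ≠ 0)
    {a b : ℝ} (hQ : 1 ≤ Q) (hab : 2 * (N + 1) ≤ Q * (b - a)) :
    ∃ y ∈ Icc a b, 1 ≤ scaledCovolume Q w y := by
  have hQ0 : 0 < Q := by positivity
  suffices h : ∃ y ∈ Icc a b, ∃ c,
      1 ≤ ‖minors (w.map (Int.castRingHom ℝ) * valueMatrixAt N Q y) c‖ from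
    h.imp fun y hy => hy.imp_right fun ⟨c, hc⟩ => hc.trans (norm_le_pi_norm _ c)
  obtain _ | k := k
  · have hab' : a ≤ b := by nlinarith
    exact ⟨a, left_mem_Icc.2 hab', finZeroElim, by simp [minors]⟩
  obtain ⟨c, j₀, hc, hj₀, hmax⟩ := exists_minors_ne_zero_update_eq_zero hw
  have hinj := injective_of_minors_ne_zero hc
  have hkN := add_le_of_injective_of_forall_le hinj hj₀
  obtain ⟨y, hy, hle⟩ := exists_mem_Icc_mul_pow_le_abs_sum (i := c j₀) (a := a) (b := b)
    (α := fun t => minors (w.map (Int.castRingHom ℝ)) (Function.update c j₀ t))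
    (by rwa [Function.update_eq_self, minors_map, eq_intCast, Int.cast_ne_zero])
    (fun t ht => by rw [minors_map, hmax t ht, map_zero])
    (inv_nonneg.2 hQ0.le) (by
      rw [mul_right_comm, ← div_eq_mul_inv, div_lt_iff₀ hQ0]
      linarith)
  refine ⟨y, hy, Function.update c j₀ 0, ?_⟩
  rw [minors_mul_valueMatrixAt_update _ fun j hj h0 =>
    hj (hinj (le_antisymm (h0.trans_le (Fin.zero_le _)) (hj₀ j))), norm_mul]
  rw [Function.update_eq_self, minors_map, eq_intCast] at hle
  have hint : (1 : ℝ) ≤ |((minors w c : ℤ) : ℝ)| := mod_cast Int.one_le_abs hc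
  calc (1 : ℝ) ≤ Q ^ (N - (k + c j₀)) := one_le_pow₀ hQ
    _ = ‖Q ^ N * Q⁻¹ ^ k‖ * (1 * Q⁻¹ ^ (c j₀ : ℕ)) := by
      rw [Real.norm_of_nonneg (by positivity), pow_sub₀ _ hQ0.ne' hkN, pow_add, mul_inv, inv_pow,
        inv_pow, one_mul, mul_assoc]
    _ ≤ _ := mul_le_mul_of_nonneg_left
      ((mul_le_mul_of_nonneg_right hint (by positivity)).trans hle) (norm_nonneg _)

end ValueMatrix

/-! ### Nondivergence -/

lemma exists_mem_insert_bot_isChain_insert_sup {α : Type*} [SemilatticeSup α] [OrderBot α]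
    {G : Finset α} (hG : IsChain (· ≤ ·) (G : Set α)) {p : α} (hp : p ≠ ⊥) :
    ∃ W, (W = ⊥ ∨ W ∈ G) ∧ ¬p ≤ W ∧ IsChain (· ≤ ·) (insert (W ⊔ p) G : Set α) := by
  have hfin : {W | (W = ⊥ ∨ W ∈ G) ∧ ¬p ≤ W}.Finite :=
    (G.finite_toSet.insert ⊥).subset fun W hW => hW.1
  obtain ⟨W, ⟨hWG, hpW⟩, hmax⟩ := hfin.exists_maximal ⟨⊥, Or.inl rfl, fun h => hp (le_bot_iff.1 h)⟩
  have hcomp (W') (hW' : W' ∈ G) : W' ≤ W ∨ W ≤ W' := by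
    rcases hWG with rfl | hWG
    · exact Or.inr bot_le
    · exact hG.total hW' hWG
  refine ⟨W, hWG, hpW, hG.insert fun W' hW' _ => ?_⟩
  by_cases hpW' : p ≤ W'
  · exact Or.inl (sup_le ((hcomp W' hW').resolve_left fun h => hpW (hpW'.trans h)) hpW')
  · exact Or.inr (((hcomp W' hW').elim id (hmax ⟨Or.inr hW', hpW'⟩)).trans le_sup_left)

section RationalSubspaces

open Matrix Module

variable {ι : Type*}

/-- The inclusion of integer vectors into rational vectors. -/
def ratVec (ι : Type*) : (ι → ℤ) →ₗ[ℤ] ι → ℚ := (Algebra.linearMap ℤ ℚ).compLeft ι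

lemma ratVec_injective : Function.Injective (ratVec ι) :=
  fun _ _ h => funext fun i => Int.cast_injective (congrFun h i)

lemma linearIndependent_ratVec_iff {κ : Type*} {w : κ → ι → ℤ} :
    LinearIndependent ℚ (ratVec ι ∘ w) ↔ LinearIndependent ℤ w := by
  rw [← LinearIndependent.iff_fractionRing ℤ ℚ,
    (ratVec ι).linearIndependent_iff (LinearMap.ker_eq_bot.2 ratVec_injective)]

lemma exists_smul_eq_ratVec [Finite ι] (u : ι → ℚ) : ∃ m : ℤ, m ≠ 0 ∧ ∃ v, m • u = ratVec ι v := by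
  obtain ⟨⟨m, hm⟩, hmu⟩ := IsLocalization.exist_integer_multiples_of_finite (nonZeroDivisors ℤ) u
  choose v hv using hmu
  exact ⟨m, nonZeroDivisors.ne_zero hm, v, funext fun i => (hv i).symm⟩

lemma exists_integral_basis [Finite ι] (W : Submodule ℚ (ι → ℚ)) :
    ∃ w : Fin (finrank ℚ W) → ι → ℤ, LinearIndependent ℤ w ∧
      ∀ v, v ∈ Submodule.span ℤ (range w) ↔ ratVec ι v ∈ W := by
  let L : Submodule ℤ (ι → ℤ) := (W.restrictScalars ℤ).comap (ratVec ι)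
  let w : Fin (finrank ℤ L) → ι → ℤ := L.subtype ∘ Module.finBasis ℤ L
  have hli : LinearIndependent ℤ w := (Module.finBasis ℤ L).linearIndependent.map' _ L.ker_subtype
  have hL : Submodule.span ℤ (range w) = L := by
    rw [range_comp, ← Submodule.map_span, Basis.span_eq, Submodule.map_top, Submodule.range_subtype]
  have hW : Submodule.span ℚ (range (ratVec ι ∘ w)) = W := by
    refine le_antisymm (Submodule.span_le.2 (range_subset_iff.2 fun i => ?_)) fun u hu => ?_
    · exact (Module.finBasis ℤ L i).2
    · obtain ⟨m, hm, v, hv⟩ := exists_smul_eq_ratVec u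
      have hvL : ratVec ι v ∈ W := hv ▸ W.smul_of_tower_mem m hu
      have hv' : ratVec ι v ∈ Submodule.span ℚ (range (ratVec ι ∘ w)) := by
        rw [← Submodule.span_span_of_tower ℤ, range_comp, ← Submodule.map_span, hL]
        exact Submodule.subset_span ⟨v, hvL, rfl⟩
      rwa [← hv, ← Int.cast_smul_eq_zsmul ℚ, Submodule.smul_mem_iff _ (mod_cast hm)] at hv'
  have hrank : finrank ℚ W = finrank ℤ L := by
    rw [← hW, finrank_span_eq_card (linearIndependent_ratVec_iff.2 hli), Fintype.card_fin]
  rw [hrank]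
  exact ⟨w, hli, fun v => SetLike.ext_iff.1 hL v⟩

/-- A choice of `ℤ`-basis of the lattice of integer points of a rational subspace `W`. -/
noncomputable def integralBasis [Finite ι] (W : Submodule ℚ (ι → ℚ)) :
    Matrix (Fin (finrank ℚ W)) ι ℤ := of (exists_integral_basis W).choose

lemma linearIndependent_integralBasis [Finite ι] (W : Submodule ℚ (ι → ℚ)) :
    LinearIndependent ℤ (integralBasis W).row := (exists_integral_basis W).choose_spec.1

lemma mem_span_integralBasis [Finite ι] {W : Submodule ℚ (ι → ℚ)} {v : ι → ℤ} :
    v ∈ Submodule.span ℤ (range (integralBasis W).row) ↔ ratVec ι v ∈ W :=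
  (exists_integral_basis W).choose_spec.2 v

lemma exists_minors_int_ne_zero [Finite ι] {k : ℕ} {w : Matrix (Fin k) ι ℤ}
    (hw : LinearIndependent ℤ w.row) : ∃ c, minors w c ≠ 0 := by
  obtain ⟨c, hc⟩ := exists_minors_ne_zero (M := w.map (Int.castRingHom ℚ))
    (linearIndependent_ratVec_iff.2 hw)
  exact ⟨c, fun h => hc (by rw [minors_map, h, map_zero])⟩

end RationalSubspaces

section Nondivergence

open Matrix Module

variable {N : ℕ} {Q : ℝ}

/-- The covolume of the lattice of integer points of a rational subspace `W`, after it is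
transformed by `valueMatrixAt N Q x`. -/
noncomputable def subspaceCovolume (Q : ℝ) (W : Submodule ℚ (Fin (N + 1) → ℚ)) (x : ℝ) : ℝ :=
  scaledCovolume Q (integralBasis W) x

lemma subspaceCovolume_le {W : Submodule ℚ (Fin (N + 1) → ℚ)} {k : ℕ} (hk : finrank ℚ W = k)
    {w : Matrix (Fin k) (Fin (N + 1)) ℤ} (hw : LinearIndependent ℤ w.row)
    (hwW : ∀ i, ratVec _ (w i) ∈ W) (x : ℝ) : subspaceCovolume Q W x ≤ scaledCovolume Q w x := by
  subst hk
  have hspan (i) := (Submodule.mem_span_range_iff_exists_fun ℤ).1 (mem_span_integralBasis.2 (hwW i))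
  choose B hB using hspan
  have hmul : w = of B * integralBasis W := by
    ext i j
    simp [← hB i, mul_apply]
  obtain ⟨c, hc⟩ := exists_minors_int_ne_zero hw
  have hdet : (of B).det ≠ 0 := by
    rw [hmul, minors_mul] at hc
    exact left_ne_zero_of_smul hc
  rw [hmul, scaledCovolume_mul]
  exact le_mul_of_one_le_left (norm_nonneg _) (mod_cast Int.one_le_abs hdet)

lemma subspaceCovolume_bot (x : ℝ) :
    subspaceCovolume Q (⊥ : Submodule ℚ (Fin (N + 1) → ℚ)) x ≤ 1 := by
  refine (subspaceCovolume_le (finrank_bot ℚ _) (w := of vecEmpty) linearIndependent_empty_type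
    finZeroElim x).trans ((pi_norm_le_iff_of_nonneg zero_le_one).2 fun c => ?_)
  simp [minors]

lemma subspaceCovolume_sup_span_le {W : Submodule ℚ (Fin (N + 1) → ℚ)} {v : Fin (N + 1) → ℤ}
    (hv : ratVec _ v ∉ W) (x : ℝ) : subspaceCovolume Q (W ⊔ ℚ ∙ ratVec _ v) x ≤
      (N + 1) * ‖(Int.cast ∘ v) ᵥ* valueMatrixAt N Q x‖ * subspaceCovolume Q W x := by
  have hrank := Submodule.finrank_sup_span_singleton hv
  have hmem (i) : ratVec _ ((integralBasis W).row i) ∈ W :=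
    mem_span_integralBasis.1 (Submodule.subset_span (mem_range_self i))
  have hli : LinearIndependent ℤ (vecCons v (integralBasis W).row) := by
    rw [← linearIndependent_ratVec_iff, vecCons, Fin.comp_cons, linearIndependent_finCons]
    refine ⟨linearIndependent_ratVec_iff.2 (linearIndependent_integralBasis W), fun h => hv ?_⟩
    exact Submodule.span_le.2 (range_subset_iff.2 hmem) h
  have hcons (i) : ratVec _ (vecCons v (integralBasis W).row i) ∈ W ⊔ ℚ ∙ ratVec _ v := by
    cases i using Fin.cases
    · exact Submodule.mem_sup_right (Submodule.mem_span_singleton_self _)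
    · exact Submodule.mem_sup_left (hmem _)
  have hN : (finrank ℚ W : ℝ) ≤ N := by
    have := (W ⊔ ℚ ∙ ratVec _ v).finrank_le
    rw [hrank, finrank_fin_fun] at this
    exact_mod_cast Nat.le_of_succ_le_succ this
  calc _ ≤ scaledCovolume Q (of (vecCons v (integralBasis W))) x :=
        subspaceCovolume_le hrank hli hcons x
    _ ≤ (finrank ℚ W + 1) * ‖(Int.cast ∘ v) ᵥ* valueMatrixAt N Q x‖ * subspaceCovolume Q W x :=
        scaledCovolume_vecCons_le _ _ _
    _ ≤ _ := by
        gcongr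
        exact norm_nonneg _

/-- The rational subspaces spanned by sets of vectors from `X`. -/
def spannedSubspaces (X : Set (Fin (N + 1) → ℤ)) : Set (Submodule ℚ (Fin (N + 1) → ℚ)) :=
  (fun A => Submodule.span ℚ (ratVec _ '' A)) '' 𝒫 X

lemma bot_mem_spannedSubspaces (X : Set (Fin (N + 1) → ℤ)) : ⊥ ∈ spannedSubspaces X :=
  ⟨∅, empty_subset X, by simp⟩

lemma sup_span_mem_spannedSubspaces {X : Set (Fin (N + 1) → ℤ)}
    {W : Submodule ℚ (Fin (N + 1) → ℚ)} (hW : W ∈ spannedSubspaces X) {v : Fin (N + 1) → ℤ}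
    (hv : v ∈ X) : W ⊔ ℚ ∙ ratVec _ v ∈ spannedSubspaces X := by
  obtain ⟨A, hA, rfl⟩ := hW
  exact ⟨A ∪ {v}, union_subset hA (singleton_subset_iff.2 hv), by
    simp only [image_union, image_singleton, Submodule.span_union]⟩

lemma card_le_of_isChain_submodule {K V : Type*} [Field K] [AddCommGroup V] [Module K V]
    [FiniteDimensional K V] {G : Finset (Submodule K V)}
    (hG : IsChain (· ≤ ·) (G : Set (Submodule K V))) : G.card ≤ finrank K V + 1 := by
  rw [← Finset.card_range (finrank K V + 1)]
  refine Finset.card_le_card_of_injOn (fun W => finrank K W)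
    (fun W _ => Finset.mem_coe.2 (Finset.mem_range_succ_iff.2 W.finrank_le)) ?_
  intro W hW W' hW' hrank
  rcases hG.total hW hW' with h | h
  · exact Submodule.eq_of_le_of_finrank_eq h hrank
  · exact (Submodule.eq_of_le_of_finrank_eq h hrank.symm).symm

lemma le_norm_vecMul_valueMatrixAt_of_isMarked {X : Set (Fin (N + 1) → ℤ)} {ε x : ℝ} (hε : ε ≤ 1)
    (hx : IsMarked (spannedSubspaces X) (subspaceCovolume Q) ε ∅ x) {v : Fin (N + 1) → ℤ}
    (hvX : v ∈ X) (hv : v ≠ 0) : ε ≤ (N + 1) * ‖(Int.cast ∘ v) ᵥ* valueMatrixAt N Q x‖ := by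
  obtain ⟨G, -, hGX, hG, hGψ, hlarge⟩ := hx
  obtain ⟨W, hWG, hvW, hchain⟩ := exists_mem_insert_bot_isChain_insert_sup hG
    (Submodule.span_singleton_eq_bot.not.2 ((map_ne_zero_iff _ ratVec_injective).2 hv))
  have hWX : W ∈ spannedSubspaces X :=
    hWG.elim (fun h => h ▸ bot_mem_spannedSubspaces X) fun h => hGX h
  have hW : subspaceCovolume Q W x ≤ 1 := by
    rcases hWG with rfl | hWG
    · exact subspaceCovolume_bot x
    · exact (hGψ W hWG (Finset.notMem_empty W)).2
  have hsup : ε ≤ subspaceCovolume Q (W ⊔ ℚ ∙ ratVec _ v) x := by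
    by_cases hmem : W ⊔ ℚ ∙ ratVec _ v ∈ G
    · exact (hGψ _ hmem (Finset.notMem_empty _)).1
    · exact hε.trans (hlarge _ (sup_span_mem_spannedSubspaces hWX hvX) hmem hchain)
  calc ε ≤ _ := hsup
    _ ≤ (N + 1) * ‖(Int.cast ∘ v) ᵥ* valueMatrixAt N Q x‖ * subspaceCovolume Q W x :=
      subspaceCovolume_sup_span_le (by simpa using hvW) x
    _ ≤ _ := mul_le_of_le_one_right (by positivity) hW

lemma volume_exists_norm_vecMul_lt_le (X : Finset (Fin (N + 1) → ℤ)) {η a b : ℝ} (hη : 0 < η)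
    (hQ : 1 ≤ Q) (hQab : 2 * (N + 1) ≤ Q * (b - a)) :
    volume {x ∈ Ioo a b | ∃ v ∈ X, v ≠ 0 ∧
        (N + 1) * ‖(Int.cast ∘ v) ᵥ* valueMatrixAt N Q x‖ < ((1 + 1 / η) ^ ((N + 1) * N))⁻¹} ≤
      4 ^ (N + 2) * ENNReal.ofReal (2 * ((N + 1) * N : ℕ) * η) * volume (Ioo a b) := by
  have hε : ((1 + 1 / η) ^ ((N + 1) * N))⁻¹ ≤ 1 :=
    inv_le_one_of_one_le₀ (one_le_pow₀ (le_add_of_nonneg_right (by positivity)))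
  have hsup (W : Submodule ℚ (Fin (N + 1) → ℚ)) := exists_one_le_scaledCovolume
    (exists_minors_int_ne_zero (linearIndependent_integralBasis W)) hQ hQab
  refine (measure_mono ?_).trans (volume_not_isMarked_le (F := ∅) (m := N + 2)
    (S := spannedSubspaces (X : Set (Fin (N + 1) → ℤ)))
    (X.finite_toSet.finite_subsets.image _) (fun W => continuous_scaledCovolume (integralBasis W))
    (fun G _ hG => by simpa using card_le_of_isChain_submodule hG)
    (fun W _ l r => volume_scaledCovolume_lt_le _ (by simpa using W.finrank_le) hη)
    (by simp) (by simp) (by simp) (fun W _ _ _ => hsup W))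
  rintro x ⟨hx, v, hvX, hv, hlt⟩
  exact ⟨hx, fun h => hlt.not_ge (le_norm_vecMul_valueMatrixAt_of_isMarked hε h hvX hv)⟩

theorem exists_volume_norm_vecMul_lt_le (N : ℕ) : ∃ ε > 0, ∀ {Q a b : ℝ}, 1 ≤ Q →
    2 * (N + 1) ≤ Q * (b - a) →
    volume {x ∈ Ioo a b | ∃ v : Fin (N + 1) → ℤ, v ≠ 0 ∧
      ‖(Int.cast ∘ v) ᵥ* valueMatrixAt N Q x‖ < ε} ≤ ENNReal.ofReal ((b - a) / 2) := by
  set η : ℝ := (4 ^ (N + 2) * (4 * ((N + 1) * N + 1)))⁻¹ with hη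
  have hη0 : 0 < η := by positivity
  refine ⟨((1 + 1 / η) ^ ((N + 1) * N))⁻¹ / (N + 1), by positivity, fun {Q a b} hQ hQab => ?_⟩
  have hab : a < b := by nlinarith
  let E (X : Finset (Fin (N + 1) → ℤ)) : Set ℝ := {x ∈ Ioo a b | ∃ v ∈ X, v ≠ 0 ∧
    (N + 1) * ‖(Int.cast ∘ v) ᵥ* valueMatrixAt N Q x‖ < ((1 + 1 / η) ^ ((N + 1) * N))⁻¹}
  have hE : {x ∈ Ioo a b | ∃ v : Fin (N + 1) → ℤ, v ≠ 0 ∧ ‖(Int.cast ∘ v) ᵥ* valueMatrixAt N Q x‖ <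
      ((1 + 1 / η) ^ ((N + 1) * N))⁻¹ / (N + 1)} = ⋃ X, E X := by
    ext x
    simp only [E, mem_iUnion, mem_ofPred_eq, lt_div_iff₀' (by positivity : (0 : ℝ) < N + 1)]
    exact ⟨fun ⟨hx, v, hv⟩ => ⟨{v}, hx, v, Finset.mem_singleton_self v, hv⟩,
      fun ⟨_, hx, v, _, hv⟩ => ⟨hx, v, hv⟩⟩
  have hmono : Monotone E := fun X Y hXY x ⟨hx, v, hvX, hv⟩ =>
    ⟨hx, v, Finset.mem_of_subset hXY hvX, hv⟩
  rw [hE, hmono.measure_iUnion]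
  refine iSup_le fun X => (volume_exists_norm_vecMul_lt_le X hη0 hQ hQab).trans ?_
  rw [Real.volume_Ioo, ← ENNReal.ofReal_ofNat, ← ENNReal.ofReal_pow (by norm_num),
    ← ENNReal.ofReal_mul (by positivity), ← ENNReal.ofReal_mul (by positivity)]
  refine ENNReal.ofReal_le_ofReal ?_
  have hconst : 4 ^ (N + 2) * (2 * ((N + 1) * N : ℕ) * η) ≤ 1 / 2 := by
    rw [hη]
    push_cast
    field_simp
    linarith
  linarith [mul_le_mul_of_nonneg_right hconst (sub_nonneg.2 hab.le)]

end Nondivergence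

/-! ### Packing and covering by lattice points -/

section Lattice

open Metric

variable {E : Type*} [NormedAddCommGroup E] [MeasurableSpace E] [BorelSpace E] {μ : Measure E}
  [μ.IsAddHaarMeasure] {L : AddSubgroup E} [Countable L] {F : Set E} {ε : ℝ}

lemma card_mul_measure_ball_le_of_isAddFundamentalDomain {ι : Type*} [Fintype ι]
    (hF : IsAddFundamentalDomain L F μ) {c : ι → E}
    (hc : ∀ i j, ∀ l ∈ L, ‖c i - c j - l‖ < ε → i = j ∧ l = 0) :
    Fintype.card ι * μ (ball 0 (ε / 2)) ≤ μ F := by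
  have hclose {i j : ι} {y z : E} (hy : y ∈ ball (c i) (ε / 2)) (hz : z ∈ ball (c j) (ε / 2))
      (h : z - y ∈ L) : i = j ∧ z - y = 0 := by
    rw [mem_ball_iff_norm'] at hy
    rw [mem_ball_iff_norm] at hz
    obtain ⟨hij, h0⟩ := hc i j (y - z) (by simpa using L.neg_mem h)
      (by rw [show c i - c j - (y - z) = (c i - y) + (z - c j) by abel]
          exact (norm_add_le _ _).trans_lt (by linarith))
    exact ⟨hij, by rw [← neg_sub, h0, neg_zero]⟩
  have hunion : μ (⋃ i, ball (c i) (ε / 2)) = Fintype.card ι * μ (ball 0 (ε / 2)) := by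
    rw [measure_iUnion (fun i j hij => disjoint_left.2 fun y hy hy' =>
      hij (hclose hy hy' (by simp)).1) fun i => measurableSet_ball]
    simp [Measure.addHaar_ball_center, tsum_fintype]
  rw [← hunion]
  by_contra! hlt
  obtain ⟨p, q, hpq, hmeet⟩ := exists_pair_mem_lattice_not_disjoint_vadd hF
    (MeasurableSet.iUnion fun i => measurableSet_ball).nullMeasurableSet hlt
  obtain ⟨_, ⟨y, hy, rfl⟩, z, hz, hzy⟩ := not_disjoint_iff.1 hmeet
  obtain ⟨i, hy⟩ := mem_iUnion.1 hy
  obtain ⟨j, hz⟩ := mem_iUnion.1 hz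
  have hdiff : z - y = ↑(p - q) := by
    have hzy' : (q : E) + z = p + y := hzy
    rw [AddSubgroup.coe_sub, sub_eq_sub_iff_add_eq_add, add_comm z, hzy']
  exact hpq (sub_eq_zero.1 (Subtype.ext (hdiff ▸ (hclose hy hz (hdiff ▸ (p - q).2)).2)))

-- If `τ` were far from `L`, the segment from `0` to `τ` would contain `M` points whose distances
-- to `L` are `0, ε, …, (M - 1) ε`; the balls of radius `ε / 2` around them would pack modulo `L`.
lemma exists_norm_sub_lt_of_isAddFundamentalDomain [NormedSpace ℝ E]
    (hF : IsAddFundamentalDomain L F μ) (hε : 0 < ε) (hL : ∀ l ∈ L, l ≠ 0 → ε ≤ ‖l‖) {M : ℕ}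
    (hM : μ F < M * μ (ball 0 (ε / 2))) (τ : E) : ∃ l ∈ L, ‖τ - l‖ < M * ε := by
  suffices h : infDist τ L < M * ε by
    simpa [dist_eq_norm] using (infDist_lt_iff ⟨0, L.zero_mem⟩).1 h
  by_contra! hfar
  have hpoint (j : Fin M) : ∃ s : ℝ, ‖((s • τ : E) : E ⧸ L)‖ = j * ε := by
    have hcont : Continuous fun s : ℝ => ‖((s • τ : E) : E ⧸ L)‖ := by
      simp only [QuotientAddGroup.norm_mk]
      fun_prop
    obtain ⟨s, -, hs⟩ := intermediate_value_Icc zero_le_one hcont.continuousOn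
      (show (j * ε : ℝ) ∈ _ from ⟨by
        rw [zero_smul, QuotientAddGroup.mk_zero, norm_zero]
        positivity, by
        rw [one_smul, QuotientAddGroup.norm_mk]
        exact (mul_le_mul_of_nonneg_right (mod_cast j.2.le) hε.le).trans hfar⟩)
    exact ⟨s, hs⟩
  choose s hs using hpoint
  refine hM.not_ge ((Fintype.card_fin M).symm ▸
    card_mul_measure_ball_le_of_isAddFundamentalDomain (ε := ε) (c := fun j => s j • τ) hF
      fun i j l hl hlt => ?_)
  have hij : i = j := by
    have hquot : ((s i • τ - s j • τ - l : E) : E ⧸ L) = (s i • τ : E) - (s j • τ : E) := by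
      rw [QuotientAddGroup.mk_sub, QuotientAddGroup.mk_sub, (QuotientAddGroup.eq_zero_iff l).2 hl,
        sub_zero]
    have hdist : |(i : ℝ) - j| * ε < 1 * ε := calc
      |(i : ℝ) - j| * ε = |‖((s i • τ : E) : E ⧸ L)‖ - ‖((s j • τ : E) : E ⧸ L)‖| := by
        rw [hs, hs, ← sub_mul, abs_mul, abs_of_pos hε]
      _ ≤ ‖((s i • τ - s j • τ - l : E) : E ⧸ L)‖ := hquot ▸ abs_norm_sub_norm_le _ _
      _ < 1 * ε := by
        rw [one_mul]
        exact QuotientAddGroup.norm_mk_le_norm.trans_lt hlt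
    have hreal := lt_of_mul_lt_mul_right hdist hε.le
    have hint : |(i : ℤ) - j| < 1 := mod_cast hreal
    exact Fin.ext (by rw [Int.abs_lt_one_iff] at hint; omega)
  subst hij
  rw [sub_self, zero_sub, norm_neg] at hlt
  exact ⟨rfl, by_contra fun h0 => (hL l hl h0).not_gt hlt⟩

open Matrix

lemma exists_norm_sub_vecMul_lt {ι : Type*} [Fintype ι] [DecidableEq ι] {A : Matrix ι ι ℝ}
    (hA : A.det ≠ 0) {ε : ℝ} (hε : 0 < ε)
    (hmin : ∀ v : ι → ℤ, v ≠ 0 → ε ≤ ‖(Int.cast ∘ v) ᵥ* A‖) {M : ℕ}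
    (hM : |A.det| < M * ε ^ Fintype.card ι) (τ : ι → ℝ) :
    ∃ v : ι → ℤ, ‖τ - (Int.cast ∘ v) ᵥ* A‖ < M * ε := by
  classical
  let b : Module.Basis ι ℝ (ι → ℝ) := basisOfPiSpaceOfLinearIndependent
    (linearIndependent_rows_of_det_ne_zero hA)
  have hb : ⇑b = A.row := coe_basisOfPiSpaceOfLinearIndependent _
  have hmem (l : ι → ℝ) : l ∈ Submodule.span ℤ (range b) ↔
      ∃ v : ι → ℤ, (Int.cast ∘ v) ᵥ* A = l := by
    simp only [Submodule.mem_span_range_iff_exists_fun, vecMul_eq_sum, hb, Function.comp_apply,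
      Int.cast_smul_eq_zsmul]
    rfl
  have : Countable (Submodule.span ℤ (range b)).toAddSubgroup :=
    inferInstanceAs (Countable (Submodule.span ℤ (range b)))
  obtain ⟨l, hl, hlt⟩ := exists_norm_sub_lt_of_isAddFundamentalDomain (M := M)
    (ZSpan.isAddFundamentalDomain' b volume) hε (fun l hl h0 => by
      obtain ⟨v, rfl⟩ := (hmem l).1 hl
      exact hmin v fun hv => h0 (by simp [hv])) (by
      rw [ZSpan.volume_fundamentalDomain, hb, Real.volume_pi_ball _ (by positivity),
        mul_div_cancel₀ _ two_ne_zero, ← ENNReal.ofReal_natCast,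
        ← ENNReal.ofReal_mul (by positivity)]
      exact (ENNReal.ofReal_lt_ofReal_iff_of_nonneg (abs_nonneg _)).2 hM) τ
  obtain ⟨v, rfl⟩ := (hmem l).1 hl
  exact ⟨v, hlt⟩

lemma det_valueMatrixAt {N : ℕ} {Q : ℝ} (hQ : Q ≠ 0) (x : ℝ) : (valueMatrixAt N Q x).det = 1 := by
  rw [det_of_isLowerTriangular _ fun j i hij => ?_]
  · simp [valueMatrixAt_apply, Fin.prod_univ_succ, hQ]
  · have hij' : j < i := hij
    simp [valueMatrixAt_apply, hij'.ne', (Fin.zero_le j).trans_lt hij' |>.ne']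

lemma exists_norm_sub_vecMul_valueMatrixAt_le (N : ℕ) {ε : ℝ} (hε : 0 < ε) :
    ∃ R > 0, ∀ {Q x : ℝ}, Q ≠ 0 →
      (∀ v : Fin (N + 1) → ℤ, v ≠ 0 → ε ≤ ‖(Int.cast ∘ v) ᵥ* valueMatrixAt N Q x‖) →
      ∀ τ, ∃ v : Fin (N + 1) → ℤ, ‖τ - (Int.cast ∘ v) ᵥ* valueMatrixAt N Q x‖ ≤ R := by
  obtain ⟨M, hM⟩ := exists_nat_gt (1 / ε ^ (N + 1))
  have hM0 : (0 : ℝ) < M := lt_trans (by positivity) hM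
  rw [div_lt_iff₀ (by positivity)] at hM
  refine ⟨M * ε, by positivity, fun {Q x} hQ hmin τ => ?_⟩
  obtain ⟨v, hv⟩ := exists_norm_sub_vecMul_lt (by simp [det_valueMatrixAt hQ]) hε hmin (M := M)
    (by simpa [det_valueMatrixAt hQ] using hM) τ
  exact ⟨v, hv.le⟩

end Lattice

/-! ### Algebraic integers close to a given point -/

section RealPolynomial

variable {p : ℝ[X]} {n : ℕ} {c t x : ℝ}

lemma abs_eval_le_mul (hp : p.natDegree < n) (hc : ∀ i, |p.coeff i| ≤ c) (ht : |t| ≤ 1) :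
    |p.eval t| ≤ n * c := by
  rw [eval_eq_sum_range' hp]
  calc _ ≤ ∑ i ∈ Finset.range n, |p.coeff i * t ^ i| := Finset.abs_sum_le_sum_abs _ _
    _ ≤ ∑ _i ∈ Finset.range n, c := Finset.sum_le_sum fun i _ => by
      rw [abs_mul, abs_pow]
      exact (mul_le_of_le_one_right (abs_nonneg _) (pow_le_one₀ (abs_nonneg t) ht)).trans (hc i)
    _ = n * c := by simp

lemma abs_eval_derivative_le_mul (hp : p.natDegree < n) (hc : ∀ i ≠ 0, |p.coeff i| ≤ c)
    (ht : |t| ≤ 1) : |p.derivative.eval t| ≤ n * (n * c) := by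
  have hc0 : 0 ≤ c := (abs_nonneg _).trans (hc 1 one_ne_zero)
  refine abs_eval_le_mul ((natDegree_derivative_le p).trans_lt (by omega)) (fun i => ?_) ht
  rw [coeff_derivative]
  rcases lt_or_ge (i + 1) n with hi | hi
  · rw [abs_mul, mul_comm]
    have hin : |(i : ℝ) + 1| ≤ n := by
      rw [abs_of_nonneg (by positivity)]
      exact_mod_cast hi.le
    gcongr
    exact hc _ i.succ_ne_zero
  · rw [coeff_eq_zero_of_natDegree_lt (hp.trans_le hi), zero_mul, abs_zero]
    positivity

lemma abs_coeff_zero_le (hp : p.natDegree < n) (hc : ∀ i ≠ 0, |p.coeff i| ≤ c) (hx : |x| ≤ 1) :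
    |p.coeff 0| ≤ |p.eval x| + n * c := by
  have hdivX : |p.divX.eval x| ≤ n * c :=
    abs_eval_le_mul (p.natDegree_divX_le.trans_lt hp)
      (fun i => by simpa using hc _ i.succ_ne_zero) hx
  have hsplit : p.coeff 0 = p.eval x - p.divX.eval x * x := by
    nth_rw 2 [← divX_mul_X_add p]
    simp
  calc |p.coeff 0| ≤ |p.eval x| + |p.divX.eval x| * |x| := by
        rw [hsplit, ← abs_mul]
        exact abs_sub _ _
    _ ≤ |p.eval x| + n * c := by
        have := (mul_le_of_le_one_right (abs_nonneg _) hx).trans hdivX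
        gcongr

end RealPolynomial

lemma exists_eq_zero_of_le_deriv {f : ℝ → ℝ} (hf : Differentiable ℝ f) {m x δ : ℝ} (hδ : 0 ≤ δ)
    (hderiv : ∀ t ∈ Icc (x - δ) (x + δ), m ≤ deriv f t) (hx : |f x| ≤ m * δ) :
    ∃ γ ∈ Icc (x - δ) (x + δ), f γ = 0 := by
  have hgrowth := (convex_Icc (x - δ) (x + δ)).mul_sub_le_image_sub_of_le_deriv
    hf.continuous.continuousOn hf.differentiableOn fun t ht => hderiv t (interior_subset ht)
  have hleft := hgrowth (x - δ) ⟨le_rfl, by linarith⟩ x ⟨by linarith, by linarith⟩ (by linarith)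
  have hright := hgrowth x ⟨by linarith, by linarith⟩ (x + δ) ⟨by linarith, le_rfl⟩ (by linarith)
  rw [abs_le] at hx
  refine intermediate_value_Icc (by linarith) hf.continuous.continuousOn ⟨?_, ?_⟩ <;> linarith

section Eisenstein

variable {R : Type*} [CommRing R] {π : R} {V : R[X]} {n : ℕ}

lemma natDegree_C_add_C_mul_lt (hV : V.natDegree < n) (a b : R) :
    (C a + C b * V).natDegree < n := by
  rw [natDegree_C_add]
  exact (natDegree_C_mul_le b V).trans_lt hV

lemma monic_X_pow_add_C_add (hV : V.natDegree < n) : (X ^ n + (C π + C (π ^ 2) * V)).Monic :=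
  monic_X_pow_add <|
    degree_le_natDegree.trans_lt (WithBot.coe_lt_coe.2 (natDegree_C_add_C_mul_lt hV _ _))

lemma natDegree_X_pow_add_C_add [Nontrivial R] (hV : V.natDegree < n) :
    (X ^ n + (C π + C (π ^ 2) * V)).natDegree = n := by
  rw [natDegree_add_eq_left_of_natDegree_lt, natDegree_X_pow]
  rw [natDegree_X_pow]
  exact natDegree_C_add_C_mul_lt hV _ _

lemma irreducible_X_pow_add_C_add [IsDomain R] (hπ : Prime π) (hn : n ≠ 0)
    (hV : V.natDegree < n) : Irreducible (X ^ n + (C π + C (π ^ 2) * V)) := by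
  have hmonic : (X ^ n + (C π + C (π ^ 2) * V)).Monic := monic_X_pow_add_C_add hV
  have hdeg : (X ^ n + (C π + C (π ^ 2) * V)).natDegree = n := natDegree_X_pow_add_C_add hV
  have hprime : (Ideal.span {π}).IsPrime := (Ideal.span_singleton_prime hπ.ne_zero).2 hπ
  refine IsEisensteinAt.irreducible ⟨?_, fun {m} hm => ?_, ?_⟩ hprime hmonic.isPrimitive (by omega)
  · rw [hmonic.leadingCoeff, ← Ideal.ne_top_iff_one]
    exact hprime.ne_top
  · rw [hdeg] at hm
    rw [coeff_add, coeff_X_pow, if_neg hm.ne, zero_add, coeff_add, coeff_C, coeff_C_mul,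
      Ideal.mem_span_singleton]
    split_ifs
    · exact dvd_add dvd_rfl ((dvd_pow_self π two_ne_zero).mul_right _)
    · rw [zero_add]
      exact (dvd_pow_self π two_ne_zero).mul_right _
  · rw [coeff_add, coeff_X_pow, if_neg hn.symm, zero_add, coeff_add, coeff_C_zero, coeff_C_mul,
      Ideal.span_singleton_pow, Ideal.mem_span_singleton, dvd_add_left (dvd_mul_right _ _)]
    nth_rw 2 [← pow_one π]
    rw [pow_dvd_pow_iff hπ.ne_zero hπ.not_isUnit]
    norm_num

end Eisenstein

/-- `γ` is a real algebraic integer of degree `n` and height at most `H`. -/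
def IsAlgebraicIntegerOfHeightLE (n : ℕ) (H γ : ℝ) : Prop :=
  ∃ P : ℤ[X], P.Monic ∧ P.natDegree = n ∧ Irreducible (P.map (algebraMap ℤ ℚ)) ∧
    aeval γ P = 0 ∧ ∀ j, |(P.coeff j : ℝ)| ≤ H

lemma IsAlgebraicIntegerOfHeightLE.mono {n : ℕ} {H H' γ : ℝ}
    (h : IsAlgebraicIntegerOfHeightLE n H γ) (hH : H ≤ H') :
    IsAlgebraicIntegerOfHeightLE n H' γ :=
  let ⟨P, hmonic, hdeg, hirr, hroot, hcoeff⟩ := h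
  ⟨P, hmonic, hdeg, hirr, hroot, fun j => (hcoeff j).trans hH⟩

lemma isAlgebraicIntegerOfHeightLE_of_eval_eq_zero {n : ℕ} (hn : n ≠ 0) {V : ℤ[X]}
    (hV : V.natDegree < n) {c γ : ℝ} (hc : ∀ j, |(V.coeff j : ℝ)| ≤ c)
    (hγ : γ ^ n + 2 + 4 * (V.map (Int.castRingHom ℝ)).eval γ = 0) :
    IsAlgebraicIntegerOfHeightLE n (3 + 4 * c) γ := by
  have hmonic := monic_X_pow_add_C_add (π := 2) hV
  refine ⟨_, hmonic, natDegree_X_pow_add_C_add hV,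
    (hmonic.irreducible_iff_irreducible_map_fraction_map).1
      (irreducible_X_pow_add_C_add Int.prime_two hn hV), ?_, fun j => ?_⟩
  · simpa [aeval_def, eval_map, add_assoc] using hγ
  · have hX : |(((X ^ n : ℤ[X]).coeff j : ℤ) : ℝ)| ≤ 1 := by
      rw [coeff_X_pow]
      split_ifs <;> simp
    have hC : |(((C 2 : ℤ[X]).coeff j : ℤ) : ℝ)| ≤ 2 := by
      rw [coeff_C]
      split_ifs <;> simp
    rw [coeff_add, coeff_add, coeff_C_mul]
    push_cast
    have := hc j
    rw [abs_le] at hX hC this ⊢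
    constructor <;> linarith

/-- The polynomial `T` of degree at most one such that `X ^ n + 2 + 4 * T` vanishes at `x` and has
derivative `n * x ^ (n - 1) + 4 * B` there. -/
noncomputable def linearTarget (n : ℕ) (B x : ℝ) : ℝ[X] :=
  C B * X + C (-(x ^ n + 2) / 4 - B * x)

lemma natDegree_linearTarget_le (n : ℕ) (B x : ℝ) : (linearTarget n B x).natDegree ≤ 1 :=
  natDegree_linear_le

section Root

variable {n : ℕ} {Q R δ x : ℝ} {D : ℝ[X]}

lemma exists_eval_linearTarget_sub_eq_zero (hQ : 1 ≤ Q) (hδ : 0 ≤ δ) (hδ' : δ ≤ 1 / 2)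
    (hx : |x| ≤ 1 / 2) (hD : D.natDegree < n) (hDx : |D.eval x| ≤ Q * δ)
    (hDc : ∀ i ≠ 0, |D.coeff i| ≤ R * Q) :
    ∃ γ, |γ - x| ≤ δ ∧
      γ ^ n + 2 + 4 * (linearTarget n ((1 + n + n ^ 2 * R) * Q) x - D).eval γ = 0 := by
  set B : ℝ := (1 + n + n ^ 2 * R) * Q
  let f : ℝ[X] := X ^ n + (C 2 + C 4 * (linearTarget n B x - D))
  have hfx : f.eval x = -(4 * D.eval x) := by
    simp [f, linearTarget]
    ring
  have hderiv : ∀ t ∈ Icc (x - δ) (x + δ), 4 * Q ≤ deriv (fun t => f.eval t) t := fun t ht => by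
    have ht1 : |t| ≤ 1 := by
      rw [abs_le] at hx ⊢
      constructor <;> linarith [ht.1, ht.2]
    have hDt := abs_eval_derivative_le_mul hD hDc ht1
    have hpow : |n * t ^ (n - 1)| ≤ n := by
      rw [abs_mul, Nat.abs_cast, abs_pow]
      exact mul_le_of_le_one_right n.cast_nonneg (pow_le_one₀ (abs_nonneg t) ht1)
    have hformula : f.derivative.eval t = n * t ^ (n - 1) + 4 * (B - D.derivative.eval t) := by
      simp [f, linearTarget, derivative_X_pow]
    have hnQ : (n : ℝ) ≤ n * Q := le_mul_of_one_le_right n.cast_nonneg hQ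
    have hB : B = Q + n * Q + n * (n * (R * Q)) := by
      simp only [B]
      ring
    rw [Polynomial.deriv, hformula]
    linarith [hB, abs_le.1 hDt, abs_le.1 hpow, n.cast_nonneg (α := ℝ)]
  obtain ⟨γ, hγ, hfγ⟩ := exists_eq_zero_of_le_deriv f.differentiable hδ hderiv (by
    rw [hfx, abs_neg, abs_mul, abs_of_pos four_pos, mul_assoc]
    gcongr)
  refine ⟨γ, abs_le.2 ⟨by linarith [hγ.1], by linarith [hγ.2]⟩, ?_⟩
  simpa [f, add_assoc] using hfγ

lemma abs_coeff_linearTarget_le (hQ : 1 ≤ Q) (hx : |x| ≤ 1 / 2) {M : ℝ} (hM : 0 ≤ M) (j : ℕ) :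
    |(linearTarget n (M * Q) x).coeff j| ≤ (1 + M) * Q := by
  have hMQ : 0 ≤ M * Q := by positivity
  have hpow : |x ^ n| ≤ 1 := by
    rw [abs_pow]
    exact pow_le_one₀ (abs_nonneg x) (hx.trans (by norm_num))
  have hMQx : |M * Q * x| ≤ M * Q := by
    rw [abs_mul, abs_of_nonneg hMQ]
    exact mul_le_of_le_one_right hMQ (hx.trans (by norm_num))
  rw [abs_le] at hpow hMQx
  rw [linearTarget, coeff_add, coeff_C_mul, coeff_X, coeff_C, abs_le]
  rcases j with _ | _ | j
  · constructor <;> simp <;> linarith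
  · constructor <;> simp <;> linarith
  · constructor <;> simp <;> linarith

lemma abs_coeff_linearTarget_sub_le (hQ : 1 ≤ Q) (hR : 0 ≤ R) (hδ : δ ≤ 1 / 2)
    (hx : |x| ≤ 1 / 2) (hD : D.natDegree < n) (hDx : |D.eval x| ≤ Q * δ)
    (hDc : ∀ i ≠ 0, |D.coeff i| ≤ R * Q) {M : ℝ} (hM : 0 ≤ M) (j : ℕ) :
    |(linearTarget n (M * Q) x - D).coeff j| ≤ (2 + M + n * R) * Q := by
  have hn : (1 : ℝ) ≤ n := mod_cast hD.pos
  have hDj : |D.coeff j| ≤ (1 + n * R) * Q := by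
    rcases eq_or_ne j 0 with rfl | hj
    · nlinarith [abs_coeff_zero_le hD hDc (hx.trans (by norm_num))]
    · nlinarith [hDc j hj, mul_nonneg hR (zero_le_one.trans hQ)]
  rw [coeff_sub]
  linarith [abs_sub ((linearTarget n (M * Q) x).coeff j) (D.coeff j),
    abs_coeff_linearTarget_le (n := n) hQ hx hM j]

end Root

section Approximation

open Matrix

variable {N : ℕ} {Q R x : ℝ}

lemma coeff_vecMul_valueMatrixAt {p : ℝ[X]} (hp : p.natDegree < N + 1) (i : Fin (N + 1)) :
    ((fun j : Fin (N + 1) => p.coeff j) ᵥ* valueMatrixAt N Q x) i =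
      if i = 0 then Q ^ N * p.eval x else Q⁻¹ * p.coeff i := by
  simp only [vecMul, dotProduct, valueMatrixAt_apply]
  split_ifs with hi
  · rw [eval_eq_sum_range' hp, Finset.mul_sum, ← Fin.sum_univ_eq_sum_range
      (fun j => Q ^ N * (p.coeff j * x ^ j))]
    exact Finset.sum_congr rfl fun j _ => by ring
  · simp [mul_comm]

lemma exists_map_intCast_eq_sub (hQ : 0 < Q)
    (hcover : ∀ τ, ∃ v : Fin (N + 1) → ℤ, ‖τ - (Int.cast ∘ v) ᵥ* valueMatrixAt N Q x‖ ≤ R)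
    {T : ℝ[X]} (hT : T.natDegree < N + 1) :
    ∃ (V : ℤ[X]) (D : ℝ[X]), V.map (Int.castRingHom ℝ) = T - D ∧ V.natDegree < N + 1 ∧
      D.natDegree < N + 1 ∧ Q ^ N * |D.eval x| ≤ R ∧ ∀ i ≠ 0, |D.coeff i| ≤ R * Q := by
  obtain ⟨v, hv⟩ := hcover ((fun j : Fin (N + 1) => T.coeff j) ᵥ* valueMatrixAt N Q x)
  let V : ℤ[X] := ofFn (N + 1) v
  let D : ℝ[X] := T - V.map (Int.castRingHom ℝ)
  have hV : V.natDegree < N + 1 := ofFn_natDegree_lt (by omega) v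
  have hD : D.natDegree < N + 1 :=
    (natDegree_sub_le _ _).trans_lt (max_lt hT (natDegree_map_le.trans_lt hV))
  have hcoeff : (fun j : Fin (N + 1) => D.coeff j) =
      (fun j : Fin (N + 1) => T.coeff j) - Int.cast ∘ v := by
    ext j
    simp [D, V, ofFn_coeff_eq_val_of_lt _ j.2]
  rw [← sub_vecMul, ← hcoeff] at hv
  have hcol (i : Fin (N + 1)) := (norm_le_pi_norm _ i).trans hv
  simp only [coeff_vecMul_valueMatrixAt hD] at hcol
  refine ⟨V, D, (sub_sub_cancel _ _).symm, hV, hD, ?_, fun i hi => ?_⟩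
  · simpa [abs_mul, abs_of_pos hQ, -eval_sub, D] using hcol 0
  · rcases lt_or_ge i (N + 1) with hiN | hiN
    · have hrow := hcol ⟨i, hiN⟩
      rwa [if_neg (by simpa [Fin.ext_iff] using hi), norm_mul, norm_inv, Real.norm_of_nonneg hQ.le,
        inv_mul_le_iff₀ hQ, mul_comm] at hrow
    · rw [coeff_eq_zero_of_natDegree_lt (hD.trans_le hiN), abs_zero]
      exact mul_nonneg ((norm_nonneg _).trans hv) hQ.le

lemma exists_isAlgebraicIntegerOfHeightLE (hN : N ≠ 0) (hR : 0 ≤ R) :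
    ∃ K ≥ 1, ∀ {Q x : ℝ}, 1 ≤ Q → 2 * R ≤ Q ^ (N + 1) → |x| ≤ 1 / 2 →
      (∀ τ, ∃ v : Fin (N + 1) → ℤ, ‖τ - (Int.cast ∘ v) ᵥ* valueMatrixAt N Q x‖ ≤ R) →
      ∃ γ, |γ - x| ≤ R / Q ^ (N + 1) ∧ IsAlgebraicIntegerOfHeightLE (N + 1) (K * Q) γ := by
  set n : ℕ := N + 1 with hn
  set M : ℝ := 1 + n + n ^ 2 * R
  have hnR : 0 ≤ n * R := by positivity
  have hM0 : 0 ≤ M := by positivity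
  refine ⟨3 + 4 * (2 + M + n * R), by linarith, fun {Q x} hQ hRQ hx hcover => ?_⟩
  have hQ0 : 0 < Q := by positivity
  have hδ : R / Q ^ n ≤ 1 / 2 := by
    rw [div_le_iff₀ (by positivity)]
    linarith
  obtain ⟨V, D, hVD, hV, hD, hDx, hDc⟩ := exists_map_intCast_eq_sub hQ0 hcover
    ((natDegree_linearTarget_le n (M * Q) x).trans_lt (by omega))
  replace hDx : |D.eval x| ≤ Q * (R / Q ^ n) := by
    rwa [hn, pow_succ, mul_div_assoc', mul_comm Q, mul_div_mul_right _ _ hQ0.ne',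
      le_div_iff₀' (by positivity)]
  obtain ⟨γ, hγx, hγ⟩ := exists_eval_linearTarget_sub_eq_zero hQ (by positivity) hδ hx hD hDx hDc
  rw [← hVD] at hγ
  have hVc (j : ℕ) : |(V.coeff j : ℝ)| ≤ (2 + M + n * R) * Q := by
    rw [← eq_intCast (Int.castRingHom ℝ), ← coeff_map, hVD]
    exact abs_coeff_linearTarget_sub_le hQ hR hδ hx hD hDx hDc hM0 j
  exact ⟨γ, hγx, (isAlgebraicIntegerOfHeightLE_of_eval_eq_zero N.succ_ne_zero hV hVc hγ).mono
    (by linarith)⟩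

end Approximation

/-! ### Counting separated algebraic integers -/

open Metric in
lemma exists_finset_card_eq_pairwise_lt_abs_sub {Γ : Set ℝ} {ρ δ : ℝ} (hρ : 0 < ρ) (hδ : 0 ≤ δ)
    {m : ℕ} (hm : ENNReal.ofReal (m * (2 * (ρ + δ))) ≤ volume (⋃ γ ∈ Γ, closedBall γ δ)) :
    ∃ S : Finset ℝ, ↑S ⊆ Γ ∧ S.card = m ∧ (S : Set ℝ).Pairwise fun x y => ρ < |x - y| := by
  induction m with
  | zero => exact ⟨∅, by simp⟩
  | succ m ih =>
    have hlt : ENNReal.ofReal (m * (2 * (ρ + δ))) < volume (⋃ γ ∈ Γ, closedBall γ δ) := by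
      refine (ENNReal.ofReal_lt_ofReal_iff (by positivity)).2 ?_ |>.trans_le hm
      push_cast
      linarith
    obtain ⟨S, hSΓ, hcard, hS⟩ := ih hlt.le
    have hcover : volume (⋃ s ∈ S, closedBall s (ρ + δ)) ≤
        ENNReal.ofReal (m * (2 * (ρ + δ))) := by
      refine (measure_biUnion_finset_le _ _).trans_eq ?_
      simp only [Real.volume_closedBall, Finset.sum_const, hcard, nsmul_eq_mul]
      rw [ENNReal.ofReal_mul m.cast_nonneg, ENNReal.ofReal_natCast]
    obtain ⟨x, hxΓ, hxS⟩ := not_subset.1 fun h => (hcover.trans_lt hlt).not_ge (measure_mono h)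
    simp only [mem_iUnion, exists_prop] at hxΓ hxS
    obtain ⟨γ, hγ, hγx⟩ := hxΓ
    have hfar : ∀ s ∈ S, ρ < |γ - s| := fun s hs => by
      by_contra! hle
      refine hxS ⟨s, hs, (dist_triangle x γ s).trans ?_⟩
      rw [add_comm ρ]
      exact add_le_add hγx hle
    have hγS : γ ∉ S := fun h => by simpa using hρ.trans (hfar γ h)
    refine ⟨insert γ S, ?_, by rw [Finset.card_insert_of_notMem hγS, hcard], ?_⟩
    · rw [Finset.coe_insert]
      exact insert_subset hγ hSΓ
    · rw [Finset.coe_insert]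
      exact hS.insert fun s hs _ => ⟨hfar s hs, abs_sub_comm γ s ▸ hfar s hs⟩

open Metric in
lemma exists_finset_lt_card_pairwise_lt_abs_sub {Γ : Set ℝ} {ρ δ V : ℝ} (hρ : 0 < ρ) (hδ : 0 ≤ δ)
    (hV₀ : 0 ≤ V) (hV : ENNReal.ofReal V ≤ volume (⋃ γ ∈ Γ, closedBall γ δ)) :
    ∃ S : Finset ℝ, ↑S ⊆ Γ ∧ V / (2 * (ρ + δ)) < S.card + 1 ∧
      (S : Set ℝ).Pairwise fun x y => ρ < |x - y| := by
  have hfloor : ⌊V / (2 * (ρ + δ))⌋₊ * (2 * (ρ + δ)) ≤ V :=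
    (le_div_iff₀ (by positivity)).1 (Nat.floor_le (by positivity))
  obtain ⟨S, hSΓ, hcard, hS⟩ := exists_finset_card_eq_pairwise_lt_abs_sub hρ hδ
    ((ENNReal.ofReal_le_ofReal hfloor).trans hV)
  exact ⟨S, hSΓ, hcard ▸ Nat.lt_floor_add_one _, hS⟩

lemma exists_le_volume_iUnion_closedBall {N : ℕ} (hN : N ≠ 0) : ∃ R ≥ 0, ∃ K ≥ 1, ∃ B > 0,
    ∀ {Q a b : ℝ}, a < b → Icc a b ⊆ Icc (-(1 / 2)) (1 / 2) → B ≤ Q * (b - a) →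
      ENNReal.ofReal ((b - a) / 2) ≤ volume (Ioo a b ∩
        ⋃ γ ∈ {γ | IsAlgebraicIntegerOfHeightLE (N + 1) (K * Q) γ},
          Metric.closedBall γ (R / Q ^ (N + 1))) := by
  obtain ⟨ε, hε, hbad⟩ := exists_volume_norm_vecMul_lt_le N
  obtain ⟨R, hR, hcover⟩ := exists_norm_sub_vecMul_valueMatrixAt_le N hε
  obtain ⟨K, hK, hnear⟩ := exists_isAlgebraicIntegerOfHeightLE hN hR.le
  refine ⟨R, hR.le, K, hK, 2 * (N + 1) + 2 * R, by positivity, fun {Q a b} hab hI hQ => ?_⟩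
  have ha := (hI (left_mem_Icc.2 hab.le)).1
  have hb := (hI (right_mem_Icc.2 hab.le)).2
  have hQ0 : 0 < Q := pos_of_mul_pos_left (hQ.trans_lt' (by positivity)) (sub_nonneg.2 hab.le)
  have hQ' : 2 * (N + 1) + 2 * R ≤ Q :=
    hQ.trans (mul_le_of_le_one_right hQ0.le (by linarith))
  have hQ1 : 1 ≤ Q := by linarith [N.cast_nonneg (α := ℝ)]
  have hRQ : 2 * R ≤ Q ^ (N + 1) :=
    (le_self_pow₀ hQ1 N.succ_ne_zero).trans' (by linarith [N.cast_nonneg (α := ℝ)])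
  have hIoo : Ioo a b ⊆ (Ioo a b ∩ ⋃ γ ∈ {γ | IsAlgebraicIntegerOfHeightLE (N + 1) (K * Q) γ},
      Metric.closedBall γ (R / Q ^ (N + 1))) ∪ {x ∈ Ioo a b | ∃ v : Fin (N + 1) → ℤ, v ≠ 0 ∧
        ‖Matrix.vecMul (Int.cast ∘ v) (valueMatrixAt N Q x)‖ < ε} := fun x hx => by
    by_cases hgood : ∃ v : Fin (N + 1) → ℤ, v ≠ 0 ∧
        ‖Matrix.vecMul (Int.cast ∘ v) (valueMatrixAt N Q x)‖ < ε
    · exact Or.inr ⟨hx, hgood⟩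
    push Not at hgood
    obtain ⟨γ, hγx, hγ⟩ := hnear hQ1 hRQ (abs_le.2 ⟨by linarith [hx.1], by linarith [hx.2]⟩)
      (hcover hQ0.ne' hgood)
    exact Or.inl ⟨hx, mem_biUnion hγ (Metric.mem_closedBall'.2 hγx)⟩
  have hvol := (measure_mono (μ := volume) hIoo).trans (measure_union_le _ _)
  rw [Real.volume_Ioo, ← add_halves (b - a), ENNReal.ofReal_add (by linarith) (by linarith)] at hvol
  exact (ENNReal.add_le_add_iff_right ENNReal.ofReal_ne_top).1
    (hvol.trans (add_le_add_right (hbad hQ1 (by linarith)) _))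

open Metric in
lemma Ioo_inter_iUnion_closedBall_subset {Γ : Set ℝ} {a b c δ : ℝ} (hδ : δ ≤ c) :
    Ioo (a + c) (b - c) ∩ ⋃ γ ∈ Γ, closedBall γ δ ⊆
      ⋃ γ ∈ {γ | γ ∈ Icc a b ∧ γ ∈ Γ}, closedBall γ δ := by
  rintro x ⟨hx, hxΓ⟩
  simp only [mem_iUnion, exists_prop] at hxΓ ⊢
  obtain ⟨γ, hγ, hxγ⟩ := hxΓ
  obtain ⟨hlo, hhi⟩ := abs_le.1 (hxγ.trans hδ)
  exact ⟨γ, ⟨⟨by linarith [hx.1], by linarith [hx.2]⟩, hγ⟩, hxγ⟩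

lemma exists_finset_isAlgebraicIntegerOfHeightLE {N : ℕ} (hN : N ≠ 0) :
    ∃ K ≥ 1, ∃ B > 0, ∃ κ > 0, ∀ {Q a b : ℝ}, a < b → Icc a b ⊆ Icc (-(1 / 2)) (1 / 2) →
      B ≤ Q * (b - a) → ∃ S : Finset ℝ,
        (∀ γ ∈ S, γ ∈ Icc a b ∧ IsAlgebraicIntegerOfHeightLE (N + 1) (K * Q) γ) ∧
        (S : Set ℝ).Pairwise (fun x y => (Q ^ (N + 1))⁻¹ < |x - y|) ∧
        κ * Q ^ (N + 1) * (b - a) < S.card := by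
  obtain ⟨R, hR, K, hK, B, hB, hvol⟩ := exists_le_volume_iUnion_closedBall hN
  refine ⟨K, hK, 2 * B + 16 * (1 + R), by positivity, (16 * (1 + R))⁻¹, by positivity,
    fun {Q a b} hab hI hQ => ?_⟩
  have hL : 0 < b - a := sub_pos.2 hab
  have hL1 : b - a ≤ 1 := by
    linarith [(hI (left_mem_Icc.2 hab.le)).1, (hI (right_mem_Icc.2 hab.le)).2]
  have hQ0 : 0 < Q := pos_of_mul_pos_left (hQ.trans_lt' (by positivity)) hL.le
  have hQ1 : 1 ≤ Q := by linarith [mul_le_of_le_one_right hQ0.le hL1]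
  have hQq : Q ≤ Q ^ (N + 1) := le_self_pow₀ hQ1 N.succ_ne_zero
  set q := Q ^ (N + 1)
  have hq : 0 < q := hQ0.trans_le hQq
  have hqL : 16 * (1 + R) ≤ q * (b - a) := by
    linarith [mul_le_mul_of_nonneg_right hQq hL.le]
  have hδ : R / q ≤ (b - a) / 4 := (div_le_iff₀ hq).2 (by linarith)
  -- Shrinking `[a, b]` by a quarter on each side keeps the centres of the balls inside it.
  have hinner : Icc (a + (b - a) / 4) (b - (b - a) / 4) ⊆ Icc a b :=
    Icc_subset_Icc (by linarith) (by linarith)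
  have hvolume : ENNReal.ofReal ((b - a) / 4) ≤
      volume (⋃ γ ∈ {γ ∈ Icc a b | IsAlgebraicIntegerOfHeightLE (N + 1) (K * Q) γ},
        Metric.closedBall γ (R / q)) := by
    have hlower := hvol (Q := Q) (by linarith) (hinner.trans hI) (by linarith)
    refine (ENNReal.ofReal_le_ofReal (by linarith)).trans (hlower.trans (measure_mono ?_))
    exact Ioo_inter_iUnion_closedBall_subset hδ
  obtain ⟨S, hSΓ, hcard, hS⟩ := exists_finset_lt_card_pairwise_lt_abs_sub (inv_pos.2 hq)
    (by positivity) (by linarith) hvolume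
  refine ⟨S, fun γ hγ => hSΓ hγ, hS, ?_⟩
  have hZ : (b - a) / 4 / (2 * (q⁻¹ + R / q)) = 2 * ((16 * (1 + R))⁻¹ * q * (b - a)) := by
    field_simp
    norm_num
  have hone : 1 ≤ (16 * (1 + R))⁻¹ * q * (b - a) := by
    rw [mul_assoc, inv_mul_eq_div]
    exact (one_le_div₀ (by positivity)).2 hqL
  linarith

/-- The set of real algebraic integers of degree `n`, with `N(α) = H(α)ⁿ`, forms a
regular system on subintervals of `[-1/2, 1/2]`: there are constants `c₅, c₁₅ > 0`
(depending only on `n`) such that for every interval `I = [a,b] ⊆ [-1/2, 1/2]` of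
positive length and every `T > c₁₅·|I|⁻ⁿ` there are points `γ ∈ I`, each a real
algebraic integer of degree `n` with `H(γ)ⁿ ≤ T`, pairwise at distance `> T⁻¹`,
and numbering more than `c₅·T·|I|`. -/
theorem algebraic_integers_form_regular_system (n : ℕ) (hn : 2 ≤ n) :
    ∃ c₅ > (0 : ℝ), ∃ c₁₅ > (0 : ℝ),
      ∀ a b : ℝ, a < b → Set.Icc a b ⊆ Set.Icc (-(1/2) : ℝ) (1/2) →
        ∀ T : ℝ, c₁₅ * ((b - a) ^ n)⁻¹ < T →
          ∃ S : Finset ℝ,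
            (∀ γ ∈ S, γ ∈ Set.Icc a b ∧
              ∃ P : ℤ[X], P.Monic ∧ P.natDegree = n ∧
                Irreducible (P.map (algebraMap ℤ ℚ)) ∧
                Polynomial.aeval γ P = 0 ∧
                ∀ j, (|P.coeff j| : ℝ) ^ n ≤ T) ∧
            (∀ γ₁ ∈ S, ∀ γ₂ ∈ S, γ₁ ≠ γ₂ → T⁻¹ < |γ₁ - γ₂|) ∧
            c₅ * T * (b - a) < (S.card : ℝ) := by
  obtain ⟨N, rfl⟩ := Nat.exists_eq_add_of_le' (one_le_two.trans hn)
  obtain ⟨K, hK, B, hB, κ, hκ, hcount⟩ :=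
    exists_finset_isAlgebraicIntegerOfHeightLE (N := N) (by omega)
  refine ⟨κ / K ^ (N + 1), by positivity, (K * B) ^ (N + 1), by positivity,
    fun a b hab hI T hT => ?_⟩
  have hL : 0 < b - a := sub_pos.2 hab
  have hT0 : 0 < T := hT.trans' (by positivity)
  obtain ⟨Q, hQ0, rfl⟩ : ∃ Q > 0, (K * Q) ^ (N + 1) = T :=
    ⟨T ^ ((N + 1 : ℕ) : ℝ)⁻¹ / K, by positivity, by
      rw [mul_div_cancel₀ _ (by positivity), Real.rpow_inv_natCast_pow hT0.le N.succ_ne_zero]⟩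
  rw [← inv_pow, ← mul_pow, mul_assoc] at hT
  have hBQ : B * (b - a)⁻¹ < Q :=
    lt_of_mul_lt_mul_left (lt_of_pow_lt_pow_left₀ _ (by positivity) hT) (by positivity)
  obtain ⟨S, hmem, hsep, hcard⟩ := hcount hab hI ((mul_inv_lt_iff₀ hL).1 hBQ).le
  refine ⟨S, fun γ hγ => ?_, fun γ₁ h₁ γ₂ h₂ hne => (hsep h₁ h₂ hne).trans_le' ?_, ?_⟩
  · obtain ⟨hγI, P, hmonic, hdeg, hirr, hroot, hheight⟩ := hmem γ hγ
    exact ⟨hγI, P, hmonic, hdeg, hirr, hroot,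
      fun j => pow_le_pow_left₀ (abs_nonneg _) (hheight j) _⟩
  · gcongr
    exact le_mul_of_one_le_left hQ0.le hK
  · rwa [mul_pow, ← mul_assoc, div_mul_cancel₀ _ (by positivity)]
end

section
/- Let n ≥ 1 and set δ₀ = 2^{-n-8}·n^{-2}. There exist a constant c₁₃ = c₁₃(n) > 0 and Q₀ = Q₀(n) such that for every integer Q > Q₀ and every interval I ⊆ [-1/2, 1/2] with |I| > c₁₃·Q^{-1}, the Lebesgue measure of the set ℒₙ of points x ∈ I for which there exists a nonzero polynomial P ∈ ℤ[t] with deg P ≤ n and H(P) ≤ Q satisfying |P(x)| < Q^{-n} and |P'(x)| < δ₀·Q, is less than |I|/4. -/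
/-!
Fix a small `δ` and split the points `x` of the interval `I` according to whether `|P' x| ≥ δ Q`.

If `|P' x| ≥ δ Q`, work on intervals of length about `1 / Q`. There `P'` is almost constant, because
`P'' = O(Q)`. Fix the coefficients of `P` of degree at least `2`, at most `2 (2 Q) ^ (n - 1)`
choices. About `δ₀ Q` linear coefficients keep `|P'|` below `δ₀ Q`, and for each of them the
constant coefficients together contribute a set of measure `O(Q⁻ⁿ |I|)`. The total is
`2 ^ (n + 4) δ₀ |I|`.

If `|P' x| < δ Q`, the vector `(P x, P' x, p₂, …, pₙ)`, suitably weighted, is a short vector of a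
unimodular lattice depending polynomially on `x`. By the quantitative nondivergence argument of
Kleinbock and Margulis, such vectors exist only for few `x`, provided that no rational subspace has
small covolume on all of `I`. The covolume is measured by minors of the lattice basis, and it
controls the values of a nonzero integer polynomial of degree at most `n`, which are not all small
on `I` because the leading coefficient is at least `1` in absolute value.
-/

open Polynomial

namespace SmallPolynomial

open MeasureTheory Set

section Bisection

variable {μ : Measure ℝ} {E : Set ℝ} {a b K : ℝ}

lemma measure_inter_Icc_le_of_halves (hK : 0 ≤ K) (hab : a ≤ b)
    (left : μ (E ∩ Icc a ((a + b) / 2)) ≤ ENNReal.ofReal (K * ((a + b) / 2 - a)))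
    (right : μ (E ∩ Icc ((a + b) / 2) b) ≤ ENNReal.ofReal (K * (b - (a + b) / 2))) :
    μ (E ∩ Icc a b) ≤ ENNReal.ofReal (K * (b - a)) := by
  have union : Icc a ((a + b) / 2) ∪ Icc ((a + b) / 2) b = Icc a b :=
    Icc_union_Icc_eq_Icc (by linarith) (by linarith)
  calc μ (E ∩ Icc a b)
      ≤ μ (E ∩ Icc a ((a + b) / 2)) + μ (E ∩ Icc ((a + b) / 2) b) := by
        rw [← union, inter_union_distrib_left]; exact measure_union_le _ _
    _ ≤ ENNReal.ofReal (K * ((a + b) / 2 - a)) + ENNReal.ofReal (K * (b - (a + b) / 2)) :=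
        add_le_add left right
    _ = ENNReal.ofReal (K * (b - a)) := by
        rw [← ENNReal.ofReal_add (mul_nonneg hK (by linarith)) (mul_nonneg hK (by linarith))]
        congr 1; ring

variable {p : ℝ → ℝ → Prop}

lemma measure_inter_Icc_le_of_uniform_bisection {r : ℝ} (hK : 0 ≤ K) (hr : 0 < r)
    (half_le : ∀ a b a' b' : ℝ, a < b → ¬ p a b → b' - a' = (b - a) / 2 →
      Icc a' b' ⊆ Icc a b → p a' b' → μ (E ∩ Icc a' b') ≤ ENNReal.ofReal (K * (b' - a')))
    (of_short : ∀ a b, (E ∩ Icc a b).Nonempty → b - a < r → p a b)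
    (hab : a < b) (hp : ¬ p a b) :
    μ (E ∩ Icc a b) ≤ ENNReal.ofReal (K * (b - a)) := by
  obtain ⟨k, hk⟩ : ∃ k : ℕ, b - a < 2 ^ k * r := by
    obtain ⟨k, hk⟩ := pow_unbounded_of_one_lt ((b - a) / r) one_lt_two
    exact ⟨k, (div_lt_iff₀ hr).1 hk⟩
  induction k generalizing a b with
  | zero =>
    have empty : E ∩ Icc a b = ∅ :=
      not_nonempty_iff_eq_empty.1 fun h => hp (of_short a b h (by simpa using hk))
    simp [empty]
  | succ k ih =>
    have half : ∀ a' b' : ℝ, b' - a' = (b - a) / 2 → Icc a' b' ⊆ Icc a b →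
        μ (E ∩ Icc a' b') ≤ ENNReal.ofReal (K * (b' - a')) := by
      intro a' b' hlen hsub
      by_cases hp' : p a' b'
      · exact half_le a b a' b' hab hp hlen hsub hp'
      · exact ih (by linarith) hp' (by rw [pow_succ] at hk; linarith)
    exact measure_inter_Icc_le_of_halves hK hab.le
      (half _ _ (by ring) (Icc_subset_Icc_right (by linarith)))
      (half _ _ (by ring) (Icc_subset_Icc_left (by linarith)))

lemma measure_inter_Icc_le_of_bisection (hK : 0 ≤ K)
    (half_le : ∀ a b a' b' : ℝ, a < b → ¬ p a b → b' - a' = (b - a) / 2 →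
      Icc a' b' ⊆ Icc a b → p a' b' → μ (E ∩ Icc a' b') ≤ ENNReal.ofReal (K * (b' - a')))
    (of_short : ∀ x ∈ E, ∃ r > 0, ∀ a b : ℝ, x ∈ Icc a b → b - a < r → p a b)
    (hab : a < b) (hp : ¬ p a b) :
    μ (E ∩ Icc a b) ≤ ENNReal.ofReal (K * (b - a)) := by
  set F : ℕ → Set ℝ := fun j =>
    {x ∈ E | ∀ a b : ℝ, x ∈ Icc a b → b - a < 1 / ((j : ℝ) + 1) → p a b}
  have exhaust : E ∩ Icc a b = ⋃ j, F j ∩ Icc a b := by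
    rw [← iUnion_inter]
    congr 1
    refine Subset.antisymm (fun x hx => ?_) (iUnion_subset fun j x hx => hx.1)
    obtain ⟨r, hr, h⟩ := of_short x hx
    obtain ⟨j, hj⟩ := exists_nat_one_div_lt hr
    exact mem_iUnion.2 ⟨j, hx, fun a b hx hlt => h a b hx (hlt.trans hj)⟩
  have mono : Monotone fun j => F j ∩ Icc a b := fun i j hij =>
    inter_subset_inter_left _ fun x hx => ⟨hx.1, fun a b hxI hlt =>
      hx.2 a b hxI (hlt.trans_le (Nat.one_div_le_one_div hij))⟩
  rw [exhaust, mono.measure_iUnion]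
  refine iSup_le fun j => measure_inter_Icc_le_of_uniform_bisection hK
    (Nat.one_div_pos_of_nat (n := j)) (fun a b a' b' hab hp hlen hsub hp' => ?_) ?_ hab hp
  · exact (measure_mono (inter_subset_inter_left _ fun x hx => hx.1)).trans
      (half_le a b a' b' hab hp hlen hsub hp')
  · rintro a b ⟨x, hx, hxI⟩ hlt
    exact hx.2 a b hxI hlt

lemma measure_inter_Icc_le_of_short_intervals {l A B : ℝ} (hK : 0 ≤ K) (hl : 0 < l)
    (short : ∀ a b : ℝ, Icc a b ⊆ Icc A B → l ≤ b - a → b - a ≤ 2 * l →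
      μ (E ∩ Icc a b) ≤ ENNReal.ofReal (K * (b - a)))
    (hAB : l ≤ B - A) :
    μ (E ∩ Icc A B) ≤ ENNReal.ofReal (K * (B - A)) := by
  by_cases hlen : B - A ≤ 2 * l
  · exact short A B Subset.rfl hAB hlen
  refine measure_inter_Icc_le_of_uniform_bisection
    (p := fun a b => b - a ≤ 2 * l ∨ ¬ Icc a b ⊆ Icc A B) (r := 2 * l)
    hK (by positivity) ?_ (fun a b _ h => Or.inl h.le) (by linarith) (by simp [hlen])
  intro a b a' b' _ hp hhalf hsub hp'
  obtain ⟨hlong, hAB'⟩ := not_or.1 hp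
  have hsub' : Icc a' b' ⊆ Icc A B := hsub.trans (not_not.1 hAB')
  exact short a' b' hsub' (by linarith) (hp'.resolve_right (not_not.2 hsub'))

end Bisection

/-- `IsGood s f`: for every `η > 0`, the function `f` is below `s η` times its supremum on at most
the proportion `η` of any interval. For `s η = (η / C) ^ (1 / α)` these are the `(C, α)`-good
functions of Kleinbock and Margulis. -/
structure IsGood (s : ℝ → ℝ) (f : ℝ → ℝ) : Prop where
  continuous : Continuous f
  volume_sublevel_le : ∀ η > 0, ∀ a b ρ : ℝ, a < b → 0 < ρ → (∃ y ∈ Icc a b, ρ ≤ f y) →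
    volume {x | x ∈ Icc a b ∧ f x < s η * ρ} ≤ ENNReal.ofReal (η * (b - a))

section Nondivergence

variable {S : Type*} [PartialOrder S] {s : ℝ → ℝ} {ψ : S → ℝ → ℝ} {F : Finset S} {W : S} {x : ℝ}

/-- The elements by which the chain `F` can be properly extended. -/
def chainExtensions (F : Finset S) : Set S :=
  {W | W ∉ F ∧ ∀ Z ∈ F, W ≤ Z ∨ Z ≤ W}

/-- The point `x` is marked, relative to `F`, if some chain `F' ⊇ F` has `ψ W x ∈ [ε, 1]` at each
of its new members and `ψ W x ≥ ε` at each element by which it could still be extended. -/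
def Marked (ψ : S → ℝ → ℝ) (ε : ℝ) (F : Finset S) (x : ℝ) : Prop :=
  ∃ F' : Finset S, F ⊆ F' ∧ IsChain (· ≤ ·) (F' : Set S) ∧
    (∀ W ∈ F', W ∉ F → ε ≤ ψ W x ∧ ψ W x ≤ 1) ∧ ∀ W ∈ chainExtensions F', ε ≤ ψ W x

lemma chainExtensions_insert_subset [DecidableEq S] (F : Finset S) (W : S) :
    chainExtensions (insert W F) ⊆ chainExtensions F := fun _ hZ =>
  ⟨fun h => hZ.1 (Finset.mem_insert_of_mem h), fun Y hY => hZ.2 Y (Finset.mem_insert_of_mem hY)⟩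

lemma isChain_insert_of_mem_chainExtensions [DecidableEq S]
    (hF : IsChain (· ≤ ·) (F : Set S)) (hW : W ∈ chainExtensions F) :
    IsChain (· ≤ ·) ((insert W F : Finset S) : Set S) := by
  rw [Finset.coe_insert]
  exact hF.insert fun Z hZ _ => hW.2 Z hZ

lemma marked_of_forall_le {ε : ℝ} (hF : IsChain (· ≤ ·) (F : Set S))
    (h : ∀ W ∈ chainExtensions F, ε ≤ ψ W x) : Marked ψ ε F x :=
  ⟨F, Finset.Subset.refl F, hF, fun _ hW hW' => absurd hW hW', h⟩

lemma Marked.of_insert [DecidableEq S] {ε ε' : ℝ} (h : Marked ψ ε' (insert W F) x)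
    (hε : ε ≤ ε') (hW : ε ≤ ψ W x) (hW1 : ψ W x ≤ 1) : Marked ψ ε F x := by
  obtain ⟨F', hsub, hchain, hnew, hext⟩ := h
  refine ⟨F', (Finset.subset_insert W F).trans hsub, hchain, fun Z hZ hZF => ?_,
    fun Z hZ => hε.trans (hext Z hZ)⟩
  obtain rfl | hZW := eq_or_ne Z W
  · exact ⟨hW, hW1⟩
  · obtain ⟨hge, hle⟩ := hnew Z hZ (by simp [hZW, hZF])
    exact ⟨hε.trans hge, hle⟩

lemma IsGood.exists_le_on_half {f : ℝ → ℝ} {a b a' b' ρ : ℝ} (hf : IsGood s f) (hab : a < b)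
    (hlen : b' - a' = (b - a) / 2) (hsub : Icc a' b' ⊆ Icc a b) (hρ : 0 < ρ)
    (h : ∃ y ∈ Icc a b, ρ ≤ f y) : ∃ y ∈ Icc a' b', s (1 / 3) * ρ ≤ f y := by
  by_contra! hlt
  have hsub' : Icc a' b' ⊆ {x | x ∈ Icc a b ∧ f x < s (1 / 3) * ρ} :=
    fun y hy => ⟨hsub hy, hlt y hy⟩
  have hvol := (measure_mono hsub').trans
    (hf.volume_sublevel_le (1 / 3) (by norm_num) a b ρ hab hρ h)
  rw [Real.volume_Icc, ENNReal.ofReal_le_ofReal_iff (by linarith)] at hvol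
  linarith

lemma IsGood.volume_not_marked_le_of_insert [DecidableEq S] (hψ : ∀ W, IsGood s (ψ W))
    {a b ε ρ σ θ : ℝ} (hθ : 0 < θ) (hσ : 0 < σ) (hρ : ρ ≤ 1) (hab : a < b)
    (hlt : ∀ y ∈ Icc a b, ψ W y < ρ) (hsup : ∃ y ∈ Icc a b, σ ≤ ψ W y)
    (ih : volume ({x | ¬ Marked ψ ε (insert W F) x} ∩ Icc a b) ≤
      ENNReal.ofReal (θ / 2 * (b - a))) :
    volume ({x | ¬ Marked ψ (min ε (s (θ / 2) * σ)) F x} ∩ Icc a b) ≤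
      ENNReal.ofReal (θ * (b - a)) := by
  have cover : {x | ¬ Marked ψ (min ε (s (θ / 2) * σ)) F x} ∩ Icc a b ⊆
      ({x | ¬ Marked ψ ε (insert W F) x} ∩ Icc a b) ∪
        {x | x ∈ Icc a b ∧ ψ W x < s (θ / 2) * σ} := by
    rintro x ⟨hx, hxI⟩
    by_contra hcon
    simp only [mem_union, mem_inter_iff, mem_ofPred_eq, not_or, not_and, not_lt] at hcon
    have marked : Marked ψ ε (insert W F) x := not_not.1 fun h => hcon.1 h hxI
    exact hx (marked.of_insert (min_le_left _ _) ((min_le_right _ _).trans (hcon.2 hxI))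
      ((hlt x hxI).le.trans hρ))
  have hlen : 0 ≤ θ / 2 * (b - a) := mul_nonneg (by positivity) (by linarith)
  calc volume ({x | ¬ Marked ψ (min ε (s (θ / 2) * σ)) F x} ∩ Icc a b)
      ≤ _ := (measure_mono cover).trans (measure_union_le _ _)
    _ ≤ ENNReal.ofReal (θ / 2 * (b - a)) + ENNReal.ofReal (θ / 2 * (b - a)) :=
        add_le_add ih ((hψ W).volume_sublevel_le _ (by positivity) a b σ hab hσ hsup)
    _ = ENNReal.ofReal (θ * (b - a)) := by
        rw [← ENNReal.ofReal_add hlen hlen]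
        congr 1; ring

/- The bisection stops at intervals on which some `ψ W` with `W` an extension of `F` is below `ρ`:
its parent interval still has `ψ W` large somewhere, so `W` can be added to `F`, and the longer
chain falls under the induction hypothesis. -/
theorem IsGood.exists_volume_not_marked_le (hs : ∀ η > 0, 0 < s η ∧ s η ≤ 1) {N : ℕ}
    (hN : ∀ F : Finset S, IsChain (· ≤ ·) (F : Set S) → F.card ≤ N) (m : ℕ) {θ ρ : ℝ}
    (hθ : 0 < θ) (hρ : 0 < ρ) (hρ1 : ρ ≤ 1) :
    ∃ ε > 0, ε ≤ ρ ∧ ∀ ψ : S → ℝ → ℝ, (∀ W, IsGood s (ψ W)) → ∀ F : Finset S,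
      IsChain (· ≤ ·) (F : Set S) → N ≤ F.card + m → ∀ a b : ℝ, a < b →
      (∀ W ∈ chainExtensions F, ∃ y ∈ Icc a b, ρ ≤ ψ W y) →
      volume ({x | ¬ Marked ψ ε F x} ∩ Icc a b) ≤ ENNReal.ofReal (θ * (b - a)) := by
  classical
  induction m generalizing θ ρ with
  | zero =>
    refine ⟨ρ, hρ, le_rfl, fun ψ _ F hF hcard a b _ _ => ?_⟩
    have marked : ∀ x, Marked ψ ρ F x := fun x => marked_of_forall_le hF fun W hW => by
      have := hN _ (isChain_insert_of_mem_chainExtensions hF hW)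
      rw [Finset.card_insert_of_notMem hW.1] at this
      omega
    simp [marked]
  | succ m ih =>
    obtain ⟨hκ, hκ1⟩ := hs (1 / 3) (by norm_num)
    have hσ : 0 < s (1 / 3) * ρ := mul_pos hκ hρ
    have hσρ : s (1 / 3) * ρ ≤ ρ := mul_le_of_le_one_left hρ.le hκ1
    obtain ⟨ε, hε, hεσ, ih⟩ := ih (half_pos hθ) hσ (hσρ.trans hρ1)
    have hερ : min ε (s (θ / 2) * (s (1 / 3) * ρ)) ≤ ρ := (min_le_left _ _).trans (hεσ.trans hσρ)
    refine ⟨_, lt_min hε (mul_pos (hs _ (half_pos hθ)).1 hσ), hερ,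
      fun ψ hψ F hF hcard a b hab hsup => measure_inter_Icc_le_of_bisection
        (p := fun a b => ∃ W ∈ chainExtensions F, ∀ y ∈ Icc a b, ψ W y < ρ) hθ.le ?_ ?_ hab
        (by push Not; exact hsup)⟩
    · rintro a b a' b' hab hp hlen hsub ⟨W, hW, hlt⟩
      push Not at hp
      have hsup' : ∀ Z ∈ chainExtensions F, ∃ y ∈ Icc a' b', s (1 / 3) * ρ ≤ ψ Z y :=
        fun Z hZ => (hψ Z).exists_le_on_half hab hlen hsub hρ (hp Z hZ)
      refine IsGood.volume_not_marked_le_of_insert hψ hθ hσ hρ1 (by linarith) hlt (hsup' W hW)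
        (ih ψ hψ _ (isChain_insert_of_mem_chainExtensions hF hW) ?_ a' b' (by linarith)
          fun Z hZ => hsup' Z (chainExtensions_insert_subset F W hZ))
      rw [Finset.card_insert_of_notMem hW.1]
      omega
    · intro x hx
      obtain ⟨W, hW, hlt⟩ : ∃ W ∈ chainExtensions F, ψ W x < ρ := by
        by_contra! hge
        exact hx (marked_of_forall_le hF fun W hW => hερ.trans (hge W hW))
      obtain ⟨r, hr, hball⟩ := Metric.eventually_nhds_iff.1
        ((hψ W).continuous.continuousAt.eventually_lt_const hlt)
      refine ⟨r, hr, fun a b hx hlen => ⟨W, hW, fun y hy => hball ?_⟩⟩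
      exact (Real.dist_le_of_mem_Icc hy hx).trans_lt hlen

end Nondivergence

section RootNeighborhood

variable {p : ℝ[X]} {x δ : ℝ}

/-- The real numbers within `δ` of the real part of a complex root of `p`. -/
def rootNeighborhood (p : ℝ[X]) (δ : ℝ) : Set ℝ :=
  ⋃ z ∈ p.rootSet ℂ, Metric.ball z.re δ

lemma volume_rootNeighborhood_le (p : ℝ[X]) (δ : ℝ) :
    volume (rootNeighborhood p δ) ≤ p.natDegree * ENNReal.ofReal (2 * δ) := by
  classical
  have card_le : (p.aroots ℂ).toFinset.card ≤ p.natDegree :=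
    (Multiset.toFinset_card_le _).trans ((card_roots' _).trans natDegree_map_le)
  simp only [rootNeighborhood, rootSet_def, Finset.mem_coe]
  calc volume (⋃ z ∈ (p.aroots ℂ).toFinset, Metric.ball z.re δ)
      ≤ ∑ z ∈ (p.aroots ℂ).toFinset, volume (Metric.ball z.re δ) := measure_biUnion_finset_le _ _
    _ = (p.aroots ℂ).toFinset.card * ENNReal.ofReal (2 * δ) := by simp [Real.volume_ball]
    _ ≤ p.natDegree * ENNReal.ofReal (2 * δ) := by gcongr

lemma abs_eval_eq_leadingCoeff_mul_prod (p : ℝ[X]) (x : ℝ) :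
    |p.eval x| = |p.leadingCoeff| * ((p.aroots ℂ).map fun z => ‖(x : ℂ) - z‖).prod := by
  have h := congrArg norm <| (IsAlgClosed.splits (p.map (algebraMap ℝ ℂ))).eval_eq_prod_roots x
  have heval : (p.map (algebraMap ℝ ℂ)).eval (x : ℂ) = (p.eval x : ℝ) := by
    simpa using eval_map_apply (f := algebraMap ℝ ℂ) (p := p) x
  have hprod : ‖((p.aroots ℂ).map fun z => (x : ℂ) - z).prod‖ =
      ((p.aroots ℂ).map fun z => ‖(x : ℂ) - z‖).prod := by
    simpa [Multiset.map_map, Function.comp_def] using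
      map_multiset_prod (normHom (α := ℂ)) ((p.aroots ℂ).map fun z => (x : ℂ) - z)
  rw [heval, norm_mul, hprod] at h
  simpa using h

lemma card_aroots_complex (p : ℝ[X]) : (p.aroots ℂ).card = p.natDegree := by
  rw [aroots, ← (IsAlgClosed.splits (p.map (algebraMap ℝ ℂ))).natDegree_eq_card_roots,
    natDegree_map]

lemma le_norm_sub_of_notMem_rootNeighborhood (hx : x ∉ rootNeighborhood p δ) {z : ℂ}
    (hz : z ∈ p.aroots ℂ) : δ ≤ ‖(x : ℂ) - z‖ := by
  have hball : x ∉ Metric.ball z.re δ := fun h =>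
    hx (mem_biUnion (by simpa [rootSet_def] using hz) h)
  rw [Metric.mem_ball, Real.dist_eq, not_lt] at hball
  exact hball.trans (by simpa using Complex.abs_re_le_norm ((x : ℂ) - z))

lemma leadingCoeff_mul_pow_le_abs_eval (hδ : 0 ≤ δ) (hx : x ∉ rootNeighborhood p δ) :
    |p.leadingCoeff| * δ ^ p.natDegree ≤ |p.eval x| := by
  rw [abs_eval_eq_leadingCoeff_mul_prod]
  gcongr
  simpa [card_aroots_complex] using Multiset.prod_map_le_prod_map₀ (s := p.aroots ℂ)
    (fun _ => δ) (fun z => ‖(x : ℂ) - z‖) (fun _ _ => hδ)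
    fun z hz => le_norm_sub_of_notMem_rootNeighborhood hx hz

lemma abs_eval_le_of_notMem_rootNeighborhood {y t : ℝ} (ht : 0 ≤ t)
    (hx : x ∉ rootNeighborhood p δ) (hy : |y - x| ≤ t * δ) :
    |p.eval y| ≤ (1 + t) ^ p.natDegree * |p.eval x| := by
  have factor_le : ∀ z ∈ p.aroots ℂ, ‖(y : ℂ) - z‖ ≤ (1 + t) * ‖(x : ℂ) - z‖ := fun z hz => calc
    ‖(y : ℂ) - z‖ ≤ ‖(y : ℂ) - x‖ + ‖(x : ℂ) - z‖ := norm_sub_le_norm_sub_add_norm_sub _ _ _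
    _ ≤ t * ‖(x : ℂ) - z‖ + ‖(x : ℂ) - z‖ := by
      rw [← Complex.ofReal_sub, Complex.norm_real, Real.norm_eq_abs]
      gcongr
      exact hy.trans (by gcongr; exact le_norm_sub_of_notMem_rootNeighborhood hx hz)
    _ = (1 + t) * ‖(x : ℂ) - z‖ := by ring
  have prod_le := Multiset.prod_map_le_prod_map₀ _ _ (fun z _ => norm_nonneg _) factor_le
  rw [Multiset.prod_map_mul, Multiset.map_const', Multiset.prod_replicate,
    card_aroots_complex] at prod_le
  rw [abs_eval_eq_leadingCoeff_mul_prod, abs_eval_eq_leadingCoeff_mul_prod, mul_left_comm]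
  gcongr

lemma exists_leadingCoeff_mul_pow_le_abs_eval {a b : ℝ} (p : ℝ[X]) (hδ : 0 ≤ δ)
    (hab : 2 * p.natDegree * δ < b - a) :
    ∃ x ∈ Icc a b, |p.leadingCoeff| * δ ^ p.natDegree ≤ |p.eval x| := by
  obtain ⟨x, hx, hxp⟩ : ∃ x ∈ Icc a b, x ∉ rootNeighborhood p δ := by
    refine not_subset.1 fun hsub => hab.not_ge ?_
    have hvol := (measure_mono hsub).trans (volume_rootNeighborhood_le p δ)
    rw [Real.volume_Icc, ← ENNReal.ofReal_natCast, ← ENNReal.ofReal_mul (by positivity),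
      ENNReal.ofReal_le_ofReal_iff (by positivity)] at hvol
    linarith
  exact ⟨x, hx, leadingCoeff_mul_pow_le_abs_eval hδ hxp⟩

/-- The function `s` for which the sup norm of a family of real polynomials of degree at most `d`
satisfies `IsGood s`. -/
noncomputable def polynomialModulus (d : ℕ) (η : ℝ) : ℝ := ((1 + 2 * (d + 1) / η) ^ d)⁻¹

lemma polynomialModulus_pos (d : ℕ) {η : ℝ} (hη : 0 < η) : 0 < polynomialModulus d η := by
  unfold polynomialModulus; positivity

lemma polynomialModulus_le_one (d : ℕ) {η : ℝ} (hη : 0 < η) : polynomialModulus d η ≤ 1 :=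
  inv_le_one_of_one_le₀ (one_le_pow₀ (le_add_of_nonneg_right (by positivity)))

lemma volume_sublevel_eval_le {d : ℕ} {a b y η : ℝ} (hp : p.natDegree ≤ d) (hη : 0 < η)
    (hab : a < b) (hy : y ∈ Icc a b) :
    volume {x | x ∈ Icc a b ∧ |p.eval x| < polynomialModulus d η * |p.eval y|} ≤
      ENNReal.ofReal (η * (b - a)) := by
  have hlen : 0 < b - a := sub_pos.2 hab
  set δ := η / (2 * (d + 1)) * (b - a) with hδ
  have hδ' : 2 * (d + 1) / η * δ = b - a := by rw [hδ]; field_simp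
  have sublevel_subset : {x | x ∈ Icc a b ∧ |p.eval x| < polynomialModulus d η * |p.eval y|} ⊆
      rootNeighborhood p δ := by
    rintro x ⟨hx, hlt⟩
    by_contra hxp
    have hle := abs_eval_le_of_notMem_rootNeighborhood (y := y) (t := 2 * (d + 1) / η)
      (by positivity) hxp (hδ' ▸ Real.dist_le_of_mem_Icc hy hx)
    have hpow : (1 + 2 * (d + 1) / η) ^ p.natDegree ≤ (1 + 2 * (d + 1) / η) ^ d :=
      pow_le_pow_right₀ (le_add_of_nonneg_right (by positivity)) hp
    rw [polynomialModulus, inv_mul_eq_div, lt_div_iff₀' (by positivity)] at hlt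
    exact (hle.trans (by gcongr)).not_gt hlt
  refine (measure_mono sublevel_subset).trans ((volume_rootNeighborhood_le p δ).trans ?_)
  rw [← ENNReal.ofReal_natCast, ← ENNReal.ofReal_mul (by positivity)]
  refine ENNReal.ofReal_le_ofReal ?_
  calc (p.natDegree : ℝ) * (2 * δ) ≤ (d + 1) * (2 * δ) := by
        gcongr; exact_mod_cast hp.trans d.le_succ
    _ = η * (b - a) := by rw [hδ]; field_simp

lemma isGood_norm_eval {ι : Type*} [Fintype ι] {d : ℕ} {p : ι → ℝ[X]}
    (hp : ∀ i, (p i).natDegree ≤ d) :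
    IsGood (polynomialModulus d) fun x => ‖fun i => (p i).eval x‖ where
  continuous := (continuous_pi fun i => (p i).continuous).norm
  volume_sublevel_le := by
    rintro η hη a b ρ hab hρ ⟨y, hy, hρy⟩
    obtain ⟨i, hi⟩ : ∃ i, ρ ≤ |(p i).eval y| := by
      by_contra! hlt
      exact hρy.not_gt ((pi_norm_lt_iff hρ).2 hlt)
    refine (measure_mono ?_).trans (volume_sublevel_eval_le (hp i) hη hab hy)
    refine fun x hx => ⟨hx.1, ?_⟩
    calc |(p i).eval x| ≤ ‖fun i => (p i).eval x‖ := norm_le_pi_norm (fun i => (p i).eval x) i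
      _ < polynomialModulus d η * ρ := hx.2
      _ ≤ polynomialModulus d η * |(p i).eval y| :=
        mul_le_mul_of_nonneg_left hi (polynomialModulus_pos d hη).le

end RootNeighborhood

section MaximalMinors

variable {κ ι : Type*} [Fintype κ] [DecidableEq κ]

lemma det_mul_eq_sum_prod_mul_minor [Fintype ι] {R : Type*} [CommRing R] (M : Matrix κ ι R)
    (N : Matrix ι κ R) :
    (M * N).det = ∑ f : κ → ι, (∏ l, N (f l) l) * (M.submatrix id f).det := by
  classical
  simp only [Matrix.det_apply', Matrix.mul_apply, Finset.prod_univ_sum, Finset.mul_sum,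
    Fintype.piFinset_univ]
  rw [Finset.sum_comm]
  refine Finset.sum_congr rfl fun f _ => Finset.sum_congr rfl fun σ _ => ?_
  simp only [Finset.prod_mul_distrib, Matrix.submatrix_apply, id]
  ring

lemma exists_minor_ne_zero [Finite ι] {K : Type*} [Field K] {M : Matrix κ ι K}
    (hM : LinearIndependent K M) : ∃ f : κ → ι, (M.submatrix id f).det ≠ 0 := by
  classical
  cases nonempty_fintype ι
  by_contra! hzero
  obtain ⟨N, hN⟩ : ∃ N : Matrix ι κ K, M * N = 1 := by
    rw [← Matrix.mulVec_surjective_iff_exists_right_inverse, ← Matrix.coe_mulVecLin,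
      ← LinearMap.range_eq_top]
    refine Submodule.eq_top_of_finrank_eq ?_
    rw [Module.finrank_fintype_fun_eq_card]
    exact LinearIndependent.rank_matrix hM
  have hdet := congrArg Matrix.det hN
  simp [det_mul_eq_sum_prod_mul_minor, hzero] at hdet

variable [Fintype ι]

/-- The sup norm of the vector of maximal minors of a real matrix, one for each choice of columns.
For the matrix of a basis of a discrete subgroup it is the covolume up to bounded factors. -/
noncomputable def maxMinor (M : Matrix κ ι ℝ) : ℝ :=
  ‖fun f : κ → ι => (M.submatrix id f).det‖

lemma maxMinor_nonneg (M : Matrix κ ι ℝ) : 0 ≤ maxMinor M := norm_nonneg _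

lemma abs_minor_le_maxMinor (M : Matrix κ ι ℝ) (f : κ → ι) :
    |(M.submatrix id f).det| ≤ maxMinor M :=
  norm_le_pi_norm (fun f : κ → ι => (M.submatrix id f).det) f

lemma maxMinor_mul (T : Matrix κ κ ℝ) (M : Matrix κ ι ℝ) :
    maxMinor (T * M) = |T.det| * maxMinor M := by
  have smul : (fun f : κ → ι => ((T * M).submatrix id f).det) =
      T.det • fun f : κ → ι => (M.submatrix id f).det := by
    funext f
    rw [Pi.smul_apply, smul_eq_mul, ← Matrix.det_mul]
    rfl
  rw [maxMinor, smul, norm_smul, Real.norm_eq_abs, maxMinor]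

lemma maxMinor_le_of_abs_row_zero_le {k : ℕ} {M : Matrix (Fin (k + 1)) ι ℝ} {B : ℝ}
    (hB0 : 0 ≤ B) (hB : ∀ j, |M 0 j| ≤ B) :
    maxMinor M ≤ (k + 1) * B * maxMinor (M.submatrix Fin.succ id) := by
  have hnonneg := maxMinor_nonneg (M.submatrix Fin.succ id)
  refine (pi_norm_le_iff_of_nonneg (by positivity)).2 fun f => ?_
  rw [Real.norm_eq_abs, Matrix.det_succ_row_zero]
  calc _ ≤ ∑ j : Fin (k + 1), |(-1) ^ (j : ℕ) * (M.submatrix id f) 0 j *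
        ((M.submatrix id f).submatrix Fin.succ j.succAbove).det| := Finset.abs_sum_le_sum_abs _ _
    _ ≤ ∑ _j : Fin (k + 1), B * maxMinor (M.submatrix Fin.succ id) := by
        gcongr with j
        rw [abs_mul, abs_mul, abs_neg_one_pow, one_mul]
        exact mul_le_mul (hB _) (abs_minor_le_maxMinor (M.submatrix Fin.succ id)
          (f ∘ j.succAbove)) (abs_nonneg _) hB0
    _ = (k + 1) * B * maxMinor (M.submatrix Fin.succ id) := by simp; ring

lemma abs_det_mul_le (M : Matrix κ ι ℝ) {N : Matrix ι κ ℝ} {b : κ → ℝ}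
    (hN : ∀ i l, |N i l| ≤ b l) :
    |(M * N).det| ≤ Fintype.card ι ^ Fintype.card κ * (∏ l, b l) * maxMinor M := by
  classical
  rw [det_mul_eq_sum_prod_mul_minor]
  calc _ ≤ ∑ f : κ → ι, |(∏ l, N (f l) l) * (M.submatrix id f).det| :=
        Finset.abs_sum_le_sum_abs _ _
    _ ≤ ∑ _f : κ → ι, (∏ l, b l) * maxMinor M := by
        gcongr with f
        rw [abs_mul, Finset.abs_prod]
        exact mul_le_mul (Finset.prod_le_prod (fun _ _ => abs_nonneg _) fun l _ => hN _ l)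
          (abs_minor_le_maxMinor M f) (abs_nonneg _)
          (Finset.prod_nonneg fun l _ => (abs_nonneg _).trans (hN (f l) l))
    _ = Fintype.card ι ^ Fintype.card κ * (∏ l, b l) * maxMinor M := by simp; ring

end MaximalMinors

section IntegerPoints

open Module

variable {κ ι : Type*}

/-- The embedding of `ℤ^ι` into `ℚ^ι`. -/
def intVectorCast (ι : Type*) : (ι → ℤ) →ₗ[ℤ] (ι → ℚ) :=
  (Int.castAddHom ℚ).toIntLinearMap.compLeft ι

lemma ker_intVectorCast : LinearMap.ker (intVectorCast ι) = ⊥ :=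
  LinearMap.ker_eq_bot.2 fun _ _ h => funext fun i => Int.cast_injective (congrFun h i)

lemma linearIndependent_intVectorCast_iff {v : κ → ι → ℤ} :
    LinearIndependent ℚ (intVectorCast ι ∘ v) ↔ LinearIndependent ℤ v :=
  (LinearIndependent.iff_fractionRing ℤ ℚ).symm.trans
    (LinearMap.linearIndependent_iff _ ker_intVectorCast)

/-- The subgroup `W ∩ ℤ^ι` of a rational subspace `W`. -/
def integerPoints (W : Submodule ℚ (ι → ℚ)) : Submodule ℤ (ι → ℤ) :=
  (W.restrictScalars ℤ).comap (intVectorCast ι)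

lemma mem_integerPoints {W : Submodule ℚ (ι → ℚ)} {v : ι → ℤ} :
    v ∈ integerPoints W ↔ intVectorCast ι v ∈ W := Iff.rfl

lemma det_ne_zero_of_linearIndependent_mul [Fintype κ] [DecidableEq κ] {T : Matrix κ κ ℤ}
    {A : Matrix κ ι ℤ} (h : LinearIndependent ℤ (T * A)) : T.det ≠ 0 := by
  intro hdet
  obtain ⟨c, hc, hcT⟩ := Matrix.exists_vecMul_eq_zero_iff.2 hdet
  refine hc (Matrix.vecMul_injective_iff.2 h ?_)
  simp [← Matrix.vecMul_vecMul, hcT]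

lemma abs_det_intCast_ge_one [Fintype κ] [DecidableEq κ] {T : Matrix κ κ ℤ}
    (hT : T.det ≠ 0) : 1 ≤ |(T.map (Int.castRingHom ℝ)).det| := by
  rw [← RingHom.mapMatrix_apply, ← RingHom.map_det, eq_intCast, ← Int.cast_abs]
  exact_mod_cast Int.one_le_abs hT

section Basis

variable [Finite ι]

lemma exists_int_minor_ne_zero [Fintype κ] [DecidableEq κ] {A : Matrix κ ι ℤ}
    (hA : LinearIndependent ℤ A) : ∃ f : κ → ι, (A.submatrix id f).det ≠ 0 := by
  obtain ⟨f, hf⟩ := exists_minor_ne_zero (M := A.map (Int.castRingHom ℚ))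
    (linearIndependent_intVectorCast_iff.2 hA)
  refine ⟨f, fun h => hf ?_⟩
  rw [Matrix.submatrix_map, ← RingHom.mapMatrix_apply, ← RingHom.map_det, h, map_zero]

lemma exists_intVectorCast_eq_smul (w : ι → ℚ) :
    ∃ d : ℤ, d ≠ 0 ∧ ∃ v : ι → ℤ, intVectorCast ι v = (d : ℚ) • w := by
  obtain ⟨d, hd⟩ := IsLocalization.exist_integer_multiples_of_finite (nonZeroDivisors ℤ) w
  choose v hv using hd
  refine ⟨d, nonZeroDivisors.coe_ne_zero d, v, funext fun i => ?_⟩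
  rw [Int.cast_smul_eq_zsmul]
  exact hv i

lemma span_intVectorCast_eq_of_span_eq {W : Submodule ℚ (ι → ℚ)} {v : κ → ι → ℤ}
    (hv : Submodule.span ℤ (range v) = integerPoints W) :
    Submodule.span ℚ (range (intVectorCast ι ∘ v)) = W := by
  have cast_mem : Submodule.span ℤ (range v) ≤
      integerPoints (Submodule.span ℚ (range (intVectorCast ι ∘ v))) := by
    refine Submodule.span_le.2 ?_
    rintro _ ⟨k, rfl⟩
    exact mem_integerPoints.2 (Submodule.subset_span (mem_range_self k))
  refine le_antisymm (Submodule.span_le.2 ?_) fun w hw => ?_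
  · rintro _ ⟨k, rfl⟩
    exact mem_integerPoints.1 (hv ▸ Submodule.subset_span (mem_range_self k))
  · obtain ⟨d, hd, u, hu⟩ := exists_intVectorCast_eq_smul w
    have hdw : (d : ℚ) • w ∈ W := W.smul_mem _ hw
    rw [← Submodule.smul_mem_iff _ (Int.cast_ne_zero.2 hd : (d : ℚ) ≠ 0), ← hu]
    rw [← hu, ← mem_integerPoints, ← hv] at hdw
    exact cast_mem hdw

lemma exists_basis_integerPoints (W : Submodule ℚ (ι → ℚ)) :
    ∃ A : Matrix (Fin (finrank ℚ W)) ι ℤ,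
      LinearIndependent ℤ A ∧ Submodule.span ℤ (range A) = integerPoints W := by
  obtain ⟨k, b⟩ := Submodule.basisOfPid (Pi.basisFun ℤ ι) (integerPoints W)
  have hli : LinearIndependent ℤ fun j => (b j : ι → ℤ) :=
    b.linearIndependent.map' (integerPoints W).subtype (Submodule.ker_subtype _)
  have hspan : Submodule.span ℤ (range fun j => (b j : ι → ℤ)) = integerPoints W := by
    have := congrArg (Submodule.map (integerPoints W).subtype) b.span_eq
    rwa [Submodule.map_span, ← range_comp, Submodule.map_subtype_top] at this
  obtain rfl : finrank ℚ W = k := by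
    rw [← span_intVectorCast_eq_of_span_eq hspan,
      finrank_span_eq_card (linearIndependent_intVectorCast_iff.2 hli), Fintype.card_fin]
  exact ⟨fun j => b j, hli, hspan⟩

/-- The matrix whose rows form a `ℤ`-basis of `W ∩ ℤ^ι`. -/
noncomputable def basisMatrix (W : Submodule ℚ (ι → ℚ)) : Matrix (Fin (finrank ℚ W)) ι ℤ :=
  (exists_basis_integerPoints W).choose

lemma linearIndependent_basisMatrix (W : Submodule ℚ (ι → ℚ)) :
    LinearIndependent ℤ (basisMatrix W) :=
  (exists_basis_integerPoints W).choose_spec.1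

lemma span_basisMatrix (W : Submodule ℚ (ι → ℚ)) :
    Submodule.span ℤ (range (basisMatrix W)) = integerPoints W :=
  (exists_basis_integerPoints W).choose_spec.2

lemma exists_eq_mul_basisMatrix {W : Submodule ℚ (ι → ℚ)} {B : Matrix κ ι ℤ}
    (hB : ∀ k, B k ∈ integerPoints W) : ∃ T : Matrix κ (Fin (finrank ℚ W)) ℤ,
      B = T * basisMatrix W := by
  have hspan : ∀ k, ∃ c : Fin (finrank ℚ W) → ℤ, ∑ j, c j • basisMatrix W j = B k := fun k =>
    (Submodule.mem_span_range_iff_exists_fun ℤ).1 (span_basisMatrix W ▸ hB k)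
  choose T hT using hspan
  refine ⟨Matrix.of T, Matrix.ext fun k i => ?_⟩
  simp [← hT k, Matrix.mul_apply]

end Basis

variable {ι' : Type*} [Fintype ι] [Fintype ι']

/-- The size, measured by maximal minors, of the lattice of integer points of `W` after applying
the linear map with matrix `H` (acting on row vectors). -/
noncomputable def covolume (W : Submodule ℚ (ι → ℚ)) (H : Matrix ι ι' ℝ) : ℝ :=
  maxMinor ((basisMatrix W).map (Int.castRingHom ℝ) * H)

lemma covolume_nonneg (W : Submodule ℚ (ι → ℚ)) (H : Matrix ι ι' ℝ) : 0 ≤ covolume W H :=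
  maxMinor_nonneg _

lemma covolume_le {W : Submodule ℚ (ι → ℚ)} {k : ℕ} {B : Matrix (Fin k) ι ℤ}
    (hB : LinearIndependent ℤ B) (hBW : Submodule.span ℚ (range (intVectorCast ι ∘ B)) = W)
    (H : Matrix ι ι' ℝ) : covolume W H ≤ maxMinor (B.map (Int.castRingHom ℝ) * H) := by
  obtain rfl : finrank ℚ W = k := by
    rw [← hBW, finrank_span_eq_card (linearIndependent_intVectorCast_iff.2 hB), Fintype.card_fin]
  obtain ⟨T, rfl⟩ : ∃ T, B = T * basisMatrix W := exists_eq_mul_basisMatrix fun i =>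
    mem_integerPoints.2 (hBW ▸ Submodule.subset_span (mem_range_self i))
  rw [Matrix.map_mul, Matrix.mul_assoc, maxMinor_mul]
  exact le_mul_of_one_le_left (covolume_nonneg W H)
    (abs_det_intCast_ge_one (det_ne_zero_of_linearIndependent_mul hB))

lemma covolume_eq_one_of_finrank_eq_zero {W : Submodule ℚ (ι → ℚ)} (hW : finrank ℚ W = 0)
    (H : Matrix ι ι' ℝ) : covolume W H = 1 := by
  have : IsEmpty (Fin (finrank ℚ W)) := by rw [hW]; infer_instance
  simp [covolume, maxMinor, Matrix.det_isEmpty, Pi.norm_def]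

lemma abs_det_le_covolume [DecidableEq ι] {W : Submodule ℚ (ι → ℚ)} (e : Fin (finrank ℚ W) ≃ ι)
    (H : Matrix ι ι ℝ) : |H.det| ≤ covolume W H := by
  have hdet : ((basisMatrix W).submatrix id e).det ≠ 0 := by
    refine det_ne_zero_of_linearIndependent_mul
      (A := (1 : Matrix ι ι ℤ).submatrix e id) ?_
    rw [Matrix.submatrix_mul_equiv, Matrix.mul_one]
    exact linearIndependent_basisMatrix W
  refine le_trans ?_ (abs_minor_le_maxMinor _ e)
  rw [← Matrix.submatrix_mul_equiv _ _ id e e, Matrix.det_mul, abs_mul,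
    Matrix.det_submatrix_equiv_self, Matrix.submatrix_map]
  exact le_mul_of_one_le_left (abs_nonneg _) (abs_det_intCast_ge_one hdet)

lemma covolume_sup_span_le {W : Submodule ℚ (ι → ℚ)} {v : ι → ℤ} (hv : intVectorCast ι v ∉ W)
    {H : Matrix ι ι' ℝ} {τ : ℝ} (hτ : 0 ≤ τ) (hvH : ∀ j, |∑ i, (v i : ℝ) * H i j| ≤ τ) :
    covolume (W ⊔ Submodule.span ℚ {intVectorCast ι v}) H ≤
      (finrank ℚ W + 1) * τ * covolume W H := by
  set C : Matrix (Fin (finrank ℚ W + 1)) ι ℤ := Fin.cons v (basisMatrix W)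
  have hcast : intVectorCast ι ∘ C =
      Fin.cons (intVectorCast ι v) (intVectorCast ι ∘ basisMatrix W) := Fin.comp_cons _ _ _
  have hspan := span_intVectorCast_eq_of_span_eq (span_basisMatrix W)
  have hCli : LinearIndependent ℤ C := by
    rw [← linearIndependent_intVectorCast_iff, hcast, linearIndependent_finCons, hspan]
    exact ⟨linearIndependent_intVectorCast_iff.2 (linearIndependent_basisMatrix W), hv⟩
  have hCspan : Submodule.span ℚ (range (intVectorCast ι ∘ C)) =
      W ⊔ Submodule.span ℚ {intVectorCast ι v} := by
    rw [hcast, Fin.range_cons, Submodule.span_insert, hspan, sup_comm]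
  refine (covolume_le hCli hCspan H).trans (maxMinor_le_of_abs_row_zero_le hτ fun j => ?_)
  exact hvH j

end IntegerPoints

section MinorPolynomial

variable {R κ : Type*} [CommRing R] [Fintype κ] [DecidableEq κ] {N : ℕ}

/-- The polynomial whose `i`-th coefficient is the minor of `A` on the columns `f`, with the column
`f l` replaced by the column `i`. Its value at `x` is the minor on the columns `f`, with the column
`f l` replaced by `A` applied to the moment vector `(x ^ i)ᵢ`. -/
noncomputable def minorPolynomial (A : Matrix κ (Fin N) R) (f : κ → Fin N) (l : κ) : R[X] :=
  ∑ i : Fin N, C (A.submatrix id (Function.update f l i)).det * X ^ (i : ℕ)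

lemma coeff_minorPolynomial (A : Matrix κ (Fin N) R) (f : κ → Fin N) (l : κ) (i : Fin N) :
    (minorPolynomial A f l).coeff i = (A.submatrix id (Function.update f l i)).det := by
  simp [minorPolynomial, coeff_X_pow, Fin.val_inj]

lemma map_minorPolynomial {S : Type*} [CommRing S] (φ : R →+* S) (A : Matrix κ (Fin N) R)
    (f : κ → Fin N) (l : κ) :
    (minorPolynomial A f l).map φ = minorPolynomial (A.map φ) f l := by
  simp only [minorPolynomial, Polynomial.map_sum, Polynomial.map_mul, map_C, Polynomial.map_pow,
    map_X, map_C, φ.map_det]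
  rfl

lemma eval_minorPolynomial (A : Matrix κ (Fin N) R) (f : κ → Fin N) (l : κ) (x : R) :
    (minorPolynomial A f l).eval x = (A *
      ((1 : Matrix (Fin N) (Fin N) R).submatrix id f).updateCol l fun i => x ^ (i : ℕ)).det := by
  have hcol : ∀ i, (A.submatrix id (Function.update f l i)).det =
      (A.submatrix id f).cramer (fun r => A r i) l := by
    intro i
    rw [Matrix.cramer_apply]
    congr 1
    ext r j
    obtain rfl | hj := eq_or_ne j l <;> simp [*]
  have hmul : (A.mulVec fun i : Fin N => x ^ (i : ℕ)) =
      ∑ i : Fin N, x ^ (i : ℕ) • fun r => A r i := by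
    ext r
    simp [Matrix.mulVec, dotProduct, mul_comm]
  have hsub : A * (1 : Matrix (Fin N) (Fin N) R).submatrix id f = A.submatrix id f := by
    ext r j
    simp [Matrix.mul_apply, Matrix.one_apply]
  rw [Matrix.mul_updateCol, hsub, ← Matrix.cramer_apply, hmul, map_sum, Finset.sum_apply,
    minorPolynomial, eval_finsetSum]
  refine Finset.sum_congr rfl fun i _ => ?_
  rw [eval_C_mul, eval_pow, eval_X, hcol, map_smul, Pi.smul_apply, smul_eq_mul, mul_comm]

lemma exists_minorPolynomial_ne_zero [Nonempty κ] {A : Matrix κ (Fin N) R}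
    (hA : ∃ f : κ → Fin N, (A.submatrix id f).det ≠ 0) :
    ∃ f l, minorPolynomial A f l ≠ 0 ∧
      (minorPolynomial A f l).natDegree ≤ N - Fintype.card κ := by
  classical
  obtain ⟨f, hf, hmax⟩ := Set.exists_max_image {f : κ → Fin N | (A.submatrix id f).det ≠ 0}
    (fun f => ∑ l, (f l : ℕ)) (toFinite _) hA
  have hinj : Function.Injective f := by
    intro l l' hll
    by_contra hne
    exact hf (Matrix.det_zero_of_column_eq hne fun r => by simp [hll])
  obtain ⟨l, hl⟩ := Finite.exists_min f
  have hfl : (f l : ℕ) ≤ N - Fintype.card κ := by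
    have := Finset.card_le_card (Finset.image_subset_iff.2 fun j _ => Finset.mem_Ici.2 (hl j) :
      Finset.univ.image f ⊆ Finset.Ici (f l))
    rw [Finset.card_image_of_injective _ hinj, Finset.card_univ, Fin.card_Ici] at this
    omega
  have coeff_eq_zero : ∀ i : Fin N, f l < i → (A.submatrix id (Function.update f l i)).det = 0 := by
    intro i hi
    by_contra hne
    refine (hmax _ hne).not_gt (Finset.sum_lt_sum (fun j _ => ?_) ⟨l, Finset.mem_univ l, ?_⟩)
    · obtain rfl | hj := eq_or_ne j l <;> simp [*, hi.le]
    · simpa using hi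
  refine ⟨f, l, fun h => hf ?_, (natDegree_sum_le_of_forall_le _ _ fun i _ => ?_).trans hfl⟩
  · rw [← Function.update_eq_self l f, ← coeff_minorPolynomial, h, coeff_zero]
  · obtain hi | hi := le_or_gt i (f l)
    · exact (natDegree_C_mul_X_pow_le _ _).trans hi
    · simp [coeff_eq_zero i hi]

lemma abs_eval_minorPolynomial_le {A : Matrix κ (Fin N) ℝ} {H G : Matrix (Fin N) (Fin N) ℝ}
    (hHG : H * G = 1) {x ε β : ℝ} (hG : ∀ i j, |G i j| ≤ β)
    (hGx : ∀ i, |G.mulVec (fun j => x ^ (j : ℕ)) i| ≤ ε) (f : κ → Fin N) (l : κ) :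
    |(minorPolynomial A f l).eval x| ≤
      N ^ Fintype.card κ * (ε * β ^ (Fintype.card κ - 1)) * maxMinor (A * H) := by
  set V := ((1 : Matrix (Fin N) (Fin N) ℝ).submatrix id f).updateCol l fun i => x ^ (i : ℕ) with hV
  have hfactor : A * V = A * H * (G * V) := by
    rw [Matrix.mul_assoc, ← Matrix.mul_assoc H, hHG, Matrix.one_mul]
  have hGV : ∀ i j, |(G * V) i j| ≤ Function.update (fun _ => β) l ε j := by
    intro i j
    rw [hV, Matrix.mul_updateCol]
    obtain rfl | hj := eq_or_ne j l
    · simpa using hGx i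
    · simpa [hj, Matrix.mul_apply, Matrix.one_apply] using hG i (f j)
  have hprod : ∏ j, Function.update (fun _ => β) l ε j = ε * β ^ (Fintype.card κ - 1) := by
    rw [Finset.prod_update_of_mem (Finset.mem_univ l), Finset.prod_const,
      Finset.card_sdiff_of_subset (Finset.subset_univ _), Finset.card_singleton, Finset.card_univ]
  rw [eval_minorPolynomial, ← hV, hfactor, ← hprod]
  simpa using abs_det_mul_le (A * H) hGV

end MinorPolynomial

section JetMatrix

open Module

variable {m : ℕ}

/-- The matrix of the linear map sending the coefficient vector `(pᵢ)` of a polynomial `p` of degree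
at most `m + 1` to `(p, p', p₂, …, pₘ₊₁)`. -/
noncomputable def jetMatrix (m : ℕ) : Matrix (Fin (m + 2)) (Fin (m + 2)) ℝ[X] := fun i j =>
  if j = 0 then X ^ (i : ℕ) else if j = 1 then derivative (X ^ (i : ℕ)) else if i = j then 1 else 0

lemma sum_C_coeff_mul_jetMatrix {p : ℝ[X]} (hp : p.natDegree ≤ m + 1) (j : Fin (m + 2)) :
    ∑ i : Fin (m + 2), C (p.coeff i) * jetMatrix m i j =
      if j = 0 then p else if j = 1 then derivative p else C (p.coeff j) := by
  have hsum : ∑ i : Fin (m + 2), C (p.coeff i) * X ^ (i : ℕ) = p := by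
    rw [Fin.sum_univ_eq_sum_range fun i => C (p.coeff i) * X ^ i]
    exact (as_sum_range_C_mul_X_pow' p (by omega)).symm
  unfold jetMatrix
  split_ifs
  · exact hsum
  · conv_rhs => rw [← hsum, derivative_sum]
    simp only [derivative_C_mul]
  · simp

lemma det_jetMatrix (m : ℕ) : (jetMatrix m).det = 1 := by
  rw [Matrix.det_of_isLowerTriangular]
  · refine Finset.prod_eq_one fun j _ => ?_
    unfold jetMatrix
    split_ifs with h0 h1 h2
    · simp [h0]
    · simp [h1]
    · rfl
    · exact absurd rfl h2
  · intro i j (hij : i < j)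
    unfold jetMatrix
    split_ifs with h0 h1 h2
    · simp [h0] at hij
    · obtain rfl : i = 0 := (Fin.lt_one_iff i).1 (h1 ▸ hij)
      simp
    · exact absurd h2 hij.ne
    · rfl

lemma natDegree_jetMatrix_le (i j : Fin (m + 2)) : (jetMatrix m i j).natDegree ≤ m + 1 := by
  have hi := natDegree_X_pow_le (R := ℝ) (i : ℕ)
  unfold jetMatrix
  split_ifs
  · omega
  · exact (natDegree_derivative_le _).trans (by omega)
  · simp
  · simp

lemma exists_one_le_forall_abs_eval_le {ι : Type*} [Finite ι] (p : ι → ℝ[X]) {s : Set ℝ}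
    (hs : IsCompact s) : ∃ B ≥ 1, ∀ i, ∀ x ∈ s, |(p i).eval x| ≤ B := by
  cases nonempty_fintype ι
  obtain ⟨B, hB⟩ := hs.exists_bound_of_continuousOn
    (continuous_pi fun i => (p i).continuous).continuousOn
  exact ⟨max B 1, le_max_right _ _, fun i x hx =>
    (norm_le_pi_norm (fun i => (p i).eval x) i).trans ((hB x hx).trans (le_max_left _ _))⟩

/-- The real matrix of `p ↦ (w₀ p(x), w₁ p'(x), w₂ p₂, …)`. -/
noncomputable def weightedJet (w : Fin (m + 2) → ℝ) (x : ℝ) :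
    Matrix (Fin (m + 2)) (Fin (m + 2)) ℝ :=
  (evalRingHom x).mapMatrix (jetMatrix m) * Matrix.diagonal w

lemma sum_coeff_mul_weightedJet {p : ℝ[X]} (hp : p.natDegree ≤ m + 1) (w : Fin (m + 2) → ℝ) (x : ℝ)
    (j : Fin (m + 2)) : ∑ i : Fin (m + 2), p.coeff i * weightedJet w x i j =
      (if j = 0 then p.eval x else if j = 1 then (derivative p).eval x else p.coeff j) * w j := by
  have heval := congrArg (eval x) (sum_C_coeff_mul_jetMatrix hp j)
  simp only [eval_finsetSum, eval_C_mul] at heval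
  simp only [weightedJet, Matrix.mul_diagonal, RingHom.mapMatrix_apply, Matrix.map_apply,
    coe_evalRingHom, ← mul_assoc, ← Finset.sum_mul, heval]
  split_ifs <;> simp

lemma det_weightedJet (w : Fin (m + 2) → ℝ) (x : ℝ) : (weightedJet w x).det = ∏ j, w j := by
  rw [weightedJet, Matrix.det_mul, ← RingHom.map_det, det_jetMatrix, map_one, one_mul,
    Matrix.det_diagonal]

/-- The inverse of `weightedJet` for nonzero weights, as `jetMatrix m` has determinant `1`. -/
noncomputable def weightedJetInv (w : Fin (m + 2) → ℝ) (x : ℝ) :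
    Matrix (Fin (m + 2)) (Fin (m + 2)) ℝ :=
  Matrix.diagonal w⁻¹ * (evalRingHom x).mapMatrix (jetMatrix m).adjugate

lemma weightedJet_mul_weightedJetInv {w : Fin (m + 2) → ℝ} (hw : ∀ j, w j ≠ 0) (x : ℝ) :
    weightedJet w x * weightedJetInv w x = 1 := by
  have hdiag : Matrix.diagonal w * Matrix.diagonal w⁻¹ = 1 := by
    rw [Matrix.diagonal_mul_diagonal, ← Matrix.diagonal_one]
    exact congrArg _ (funext fun j => mul_inv_cancel₀ (hw j))
  rw [weightedJet, weightedJetInv, Matrix.mul_assoc, ← Matrix.mul_assoc (Matrix.diagonal w), hdiag,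
    Matrix.one_mul, ← map_mul, Matrix.mul_adjugate, det_jetMatrix, one_smul, map_one]

lemma weightedJetInv_mulVec_pow (w : Fin (m + 2) → ℝ) (x : ℝ) :
    (weightedJetInv w x).mulVec (fun j => x ^ (j : ℕ)) = Pi.single 0 (w 0)⁻¹ := by
  have hpow : (fun j : Fin (m + 2) => x ^ (j : ℕ)) =
      ((evalRingHom x).mapMatrix (jetMatrix m)).mulVec (Pi.single 0 1) := by
    ext j
    simp [jetMatrix]
  rw [hpow, weightedJetInv, Matrix.mulVec_mulVec, Matrix.mul_assoc, ← map_mul,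
    Matrix.adjugate_mul, det_jetMatrix, one_smul, map_one, Matrix.mul_one]
  ext j
  obtain rfl | hj := eq_or_ne j 0 <;> simp [*, Matrix.mulVec_diagonal]

end JetMatrix

section CovolumeBounds

open Module

variable {m : ℕ} {W : Submodule ℚ (Fin (m + 2) → ℚ)} {w : Fin (m + 2) → ℝ}

lemma natDegree_det_le {R κ : Type*} [CommRing R] [Fintype κ] [DecidableEq κ] {d : ℕ}
    {M : Matrix κ κ R[X]} (hM : ∀ i j, (M i j).natDegree ≤ d) :
    M.det.natDegree ≤ Fintype.card κ * d := by
  rw [Matrix.det_apply]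
  refine natDegree_sum_le_of_forall_le _ _ fun σ _ => (natDegree_smul_le _ _).trans ?_
  exact (natDegree_prod_le _ _).trans
    ((Finset.sum_le_card_nsmul _ _ d fun i _ => hM _ _).trans_eq (by simp))

lemma isGood_covolume_weightedJet (W : Submodule ℚ (Fin (m + 2) → ℚ)) (w : Fin (m + 2) → ℝ) :
    IsGood (polynomialModulus ((m + 2) * (m + 1))) fun x => covolume W (weightedJet w x) := by
  set M : Matrix (Fin (finrank ℚ W)) (Fin (m + 2)) ℝ[X] :=
    (basisMatrix W).map (Int.castRingHom ℝ[X]) * jetMatrix m * Matrix.diagonal fun j => C (w j)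
    with hM
  have natDegree_le : ∀ i j, (M i j).natDegree ≤ m + 1 := by
    intro i j
    rw [hM, Matrix.mul_diagonal, Matrix.mul_apply]
    refine (natDegree_mul_C_le _ _).trans (natDegree_sum_le_of_forall_le _ _ fun l _ => ?_)
    rw [Matrix.map_apply, eq_intCast, ← C_eq_intCast]
    exact (natDegree_C_mul_le _ _).trans (natDegree_jetMatrix_le l j)
  have eval_M : ∀ x, M.map (evalRingHom x) =
      (basisMatrix W).map (Int.castRingHom ℝ) * weightedJet w x := by
    intro x
    rw [hM, weightedJet, ← Matrix.mul_assoc, Matrix.map_mul, Matrix.map_mul, Matrix.map_map,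
      Matrix.diagonal_map (map_zero _)]
    simp [Function.comp_def]
  have hgood := isGood_norm_eval (p := fun f => (M.submatrix id f).det)
    (d := (m + 2) * (m + 1)) fun f =>
      (natDegree_det_le fun i j => natDegree_le i (f j)).trans
        (Nat.mul_le_mul_right _ (by simpa using Submodule.finrank_le W))
  convert hgood using 3 with x
  rw [covolume, maxMinor, ← eval_M]
  congr
  funext f
  rw [← coe_evalRingHom, RingHom.map_det]
  rfl

lemma prod_le_covolume_weightedJet (hW : finrank ℚ W = m + 2) (w : Fin (m + 2) → ℝ) (x : ℝ) :
    ∏ j, w j ≤ covolume W (weightedJet w x) := by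
  rw [← det_weightedJet w x]
  exact (le_abs_self _).trans (abs_det_le_covolume (finCongr hW) _)

lemma exists_pow_le_covolume_weightedJet (hW : finrank ℚ W ≠ 0) (hw : ∀ j, 0 < w j)
    {a b δ β : ℝ} (hδ : 0 < δ) (hδ1 : δ ≤ 1) (hab : 2 * (m + 2) * δ ≤ b - a)
    (hβ : ∀ x ∈ Icc a b, ∀ i j, |weightedJetInv w x i j| ≤ β) :
    ∃ x ∈ Icc a b, δ ^ (m + 2 - finrank ℚ W) ≤ (m + 2) ^ finrank ℚ W *
      ((w 0)⁻¹ * β ^ (finrank ℚ W - 1)) * covolume W (weightedJet w x) := by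
  have : Nonempty (Fin (finrank ℚ W)) := ⟨⟨0, Nat.pos_of_ne_zero hW⟩⟩
  obtain ⟨f, l, hne, hdeg⟩ := exists_minorPolynomial_ne_zero
    (exists_int_minor_ne_zero (linearIndependent_basisMatrix W))
  rw [Fintype.card_fin] at hdeg
  set p := minorPolynomial (basisMatrix W) f l with hp
  have hinj : Function.Injective (Int.castRingHom ℝ) := Int.cast_injective
  have natDegree_map : (p.map (Int.castRingHom ℝ)).natDegree = p.natDegree :=
    natDegree_map_eq_of_injective hinj p
  have hlt : (p.natDegree : ℝ) < m + 2 := by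
    exact_mod_cast (show p.natDegree < m + 2 by omega)
  obtain ⟨x, hx, hle⟩ := exists_leadingCoeff_mul_pow_le_abs_eval (p.map (Int.castRingHom ℝ)) hδ.le
    (a := a) (b := b) (by rw [natDegree_map]; nlinarith)
  refine ⟨x, hx, ?_⟩
  have one_le_leadingCoeff : 1 ≤ |(p.map (Int.castRingHom ℝ)).leadingCoeff| := by
    rw [leadingCoeff_map_of_injective hinj, eq_intCast, ← Int.cast_abs]
    exact_mod_cast Int.one_le_abs (leadingCoeff_ne_zero.2 hne)
  calc δ ^ (m + 2 - finrank ℚ W) ≤ δ ^ p.natDegree := pow_le_pow_of_le_one hδ.le hδ1 hdeg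
    _ ≤ |(p.map (Int.castRingHom ℝ)).eval x| := by
        rw [natDegree_map] at hle
        exact (le_mul_of_one_le_left (by positivity) one_le_leadingCoeff).trans hle
    _ ≤ _ := by
        have hsingle : ∀ i, |(weightedJetInv w x).mulVec (fun j => x ^ (j : ℕ)) i| ≤ (w 0)⁻¹ := by
          intro i
          rw [weightedJetInv_mulVec_pow]
          obtain rfl | hi := eq_or_ne i 0 <;> simp [*, abs_of_pos, (hw 0).le]
        rw [hp, map_minorPolynomial]
        simpa [covolume] using abs_eval_minorPolynomial_le
          (A := (basisMatrix W).map (Int.castRingHom ℝ))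
          (weightedJet_mul_weightedJetInv (fun j => (hw j).ne') x) (hβ x hx) hsingle f l

end CovolumeBounds

section MarkedPoints

open Module

variable {ι ι' : Type*} [Fintype ι] [Fintype ι']

lemma card_le_of_isChain_submodule {K V : Type*} [DivisionRing K] [AddCommGroup V] [Module K V]
    [FiniteDimensional K V] {F : Finset (Submodule K V)}
    (hF : IsChain (· ≤ ·) (F : Set (Submodule K V))) : F.card ≤ finrank K V + 1 := by
  refine (Finset.card_le_card_of_injOn (fun W : Submodule K V => finrank K W)
    (t := Finset.range (finrank K V + 1)) (fun W _ => ?_) fun W hW Z hZ hWZ => ?_).trans_eq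
      (Finset.card_range _)
  · exact Finset.mem_coe.2 (Finset.mem_range_succ_iff.2 W.finrank_le)
  · obtain h | h := hF.total hW hZ
    · exact Submodule.eq_of_le_of_finrank_eq h hWZ
    · exact (Submodule.eq_of_le_of_finrank_eq h hWZ.symm).symm

lemma exists_sup_span_singleton_mem_chainExtensions {K V : Type*} [DivisionRing K] [AddCommGroup V]
    [Module K V] {F : Finset (Submodule K V)} (hF : IsChain (· ≤ ·) (F : Set (Submodule K V)))
    {q : V} (hq : q ≠ 0) : ∃ W, (W = ⊥ ∨ W ∈ F) ∧ q ∉ W ∧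
      (W ⊔ Submodule.span K {q} ∈ F ∨ W ⊔ Submodule.span K {q} ∈ chainExtensions F) := by
  classical
  obtain ⟨W, hW, hmax⟩ := ((insert ⊥ F).filter (q ∉ ·)).exists_maximal ⟨⊥, by simpa using hq⟩
  simp only [Finset.mem_filter, Finset.mem_insert, and_imp] at hW hmax
  refine ⟨W, hW.1, hW.2, or_iff_not_imp_left.2 fun hsup => ⟨hsup, fun Z hZ => ?_⟩⟩
  have hcomp : Z ≤ W ∨ W ≤ Z := by
    obtain rfl | hWF := hW.1
    · exact .inr bot_le
    · exact hF.total hZ hWF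
  obtain hZW | hWZ := hcomp
  · exact .inr (hZW.trans le_sup_left)
  · by_cases hqZ : q ∈ Z
    · exact .inl (sup_le hWZ ((Submodule.span_singleton_le_iff_mem q Z).2 hqZ))
    · exact .inr ((hmax (.inr hZ) hqZ hWZ).trans le_sup_left)

lemma not_marked_covolume {x ε τ : ℝ} {H : ℝ → Matrix ι ι' ℝ} (hτ : 0 ≤ τ)
    (hτε : Fintype.card ι * τ < ε) {v : ι → ℤ} (hv : v ≠ 0)
    (hvH : ∀ j, |∑ i, (v i : ℝ) * H x i j| ≤ τ) :
    ¬ Marked (fun W x => covolume W (H x)) ε ∅ x := by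
  rintro ⟨F, -, hF, hmem, hext⟩
  have hv' : intVectorCast ι v ≠ 0 := fun h =>
    hv (LinearMap.ker_eq_bot.1 ker_intVectorCast (h.trans (map_zero _).symm))
  obtain ⟨W, hW, hvW, hsup⟩ := exists_sup_span_singleton_mem_chainExtensions hF hv'
  have covolume_le_one : covolume W (H x) ≤ 1 := by
    obtain rfl | hWF := hW
    · exact (covolume_eq_one_of_finrank_eq_zero (finrank_bot _ _) _).le
    · exact (hmem W hWF (Finset.notMem_empty W)).2
  have le_covolume : ε ≤ covolume (W ⊔ Submodule.span ℚ {intVectorCast ι v}) (H x) :=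
    hsup.elim (fun h => (hmem _ h (Finset.notMem_empty _)).1) (hext _)
  have hrank : (finrank ℚ W + 1 : ℝ) ≤ Fintype.card ι := by
    have hlt : finrank ℚ W < finrank ℚ (ι → ℚ) :=
      Submodule.finrank_lt fun h => hvW (h ▸ Submodule.mem_top)
    rw [finrank_fintype_fun_eq_card] at hlt
    exact_mod_cast hlt
  refine hτε.not_ge (le_covolume.trans ((covolume_sup_span_le hvW hτ hvH).trans ?_))
  calc (finrank ℚ W + 1) * τ * covolume W (H x) ≤ Fintype.card ι * τ * 1 := by
        gcongr
        exact covolume_nonneg W (H x)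
    _ = Fintype.card ι * τ := mul_one _

end MarkedPoints

section JetWeight

open Module

variable {m : ℕ} {τ Q : ℝ}

/-- The weights for which `|p(x)| < Q⁻ⁿ`, `|p'(x)| < τⁿ⁺¹ Q` and `|pⱼ| ≤ Q`, with `n = m + 1`,
become bounds by `τ` for the entries of the weighted jet of `p`, and for which its matrix has
determinant `1`. -/
noncomputable def jetWeight (m : ℕ) (τ Q : ℝ) (j : Fin (m + 2)) : ℝ :=
  if j = 0 then τ * Q ^ (m + 1) else if j = 1 then τ / (τ ^ (m + 2) * Q) else τ / Q

lemma jetWeight_pos (hτ : 0 < τ) (hQ : 0 < Q) (j : Fin (m + 2)) : 0 < jetWeight m τ Q j := by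
  unfold jetWeight
  split_ifs <;> positivity

lemma inv_jetWeight_le (hτ : 0 < τ) (hτ1 : τ ≤ 1) (hQ : 1 ≤ Q) (j : Fin (m + 2)) :
    (jetWeight m τ Q j)⁻¹ ≤ Q / τ := by
  have hQ0 : 0 < Q := by linarith
  rw [← inv_div τ Q]
  refine inv_anti₀ (by positivity) ?_
  unfold jetWeight
  split_ifs
  · rw [div_eq_mul_inv]
    gcongr
    exact (inv_le_one_of_one_le₀ hQ).trans (one_le_pow₀ hQ)
  · gcongr
    exact mul_le_of_le_one_left hQ0.le (pow_le_one₀ hτ.le hτ1)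
  · rfl

lemma prod_jetWeight (m : ℕ) (hτ : τ ≠ 0) (hQ : Q ≠ 0) : ∏ j, jetWeight m τ Q j = 1 := by
  have h0 : jetWeight m τ Q 0 = τ * Q ^ (m + 1) := rfl
  have h1 : jetWeight m τ Q (Fin.succ 0) = τ / (τ ^ (m + 2) * Q) := rfl
  have h2 : ∀ j : Fin m, jetWeight m τ Q j.succ.succ = τ / Q := fun j => by
    rw [jetWeight, if_neg (Fin.succ_ne_zero _), if_neg (Fin.succ_succ_ne_one _)]
  simp only [Fin.prod_univ_succ, h0, h1, h2, Finset.prod_const, Finset.card_univ, Fintype.card_fin,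
    div_pow]
  field_simp
  ring

lemma pow_mul_inv_jetWeight_le {B : ℝ} {k : ℕ} (hτ : 0 < τ) (hQ : 0 < Q) (hB : 1 ≤ B)
    (hk : k ≠ 0) (hkm : k ≤ m + 2) :
    (m + 2) ^ k * ((jetWeight m τ Q 0)⁻¹ * (Q / τ * B) ^ (k - 1)) ≤
      ((m + 2) * B / τ) ^ k / Q ^ (m + 2 - k) := by
  obtain ⟨j, rfl⟩ := Nat.exists_eq_succ_of_ne_zero hk
  obtain ⟨i, hi⟩ := Nat.exists_eq_add_of_le (Nat.succ_le_succ_iff.1 hkm)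
  have h0 : jetWeight m τ Q 0 = τ * Q ^ (j + i) := by rw [← hi]; rfl
  rw [h0, show m + 2 - j.succ = i by omega, Nat.succ_sub_one]
  calc ((m : ℝ) + 2) ^ (j + 1) * ((τ * Q ^ (j + i))⁻¹ * (Q / τ * B) ^ j)
      = ((m + 2) / τ) ^ (j + 1) * B ^ j / Q ^ i := by
        simp only [mul_pow, div_pow, pow_add]
        field_simp
    _ ≤ ((m + 2) / τ) ^ (j + 1) * B ^ (j + 1) / Q ^ i := by
        gcongr
        exact j.le_succ
    _ = ((m + 2) * B / τ) ^ (j + 1) / Q ^ i := by rw [← mul_pow]; ring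

lemma abs_weightedJetInv_jetWeight_le {B x : ℝ} {i j : Fin (m + 2)} (hτ : 0 < τ) (hτ1 : τ ≤ 1)
    (hQ : 1 ≤ Q) (hadj : |((jetMatrix m).adjugate i j).eval x| ≤ B) :
    |weightedJetInv (jetWeight m τ Q) x i j| ≤ Q / τ * B := by
  rw [weightedJetInv, Matrix.diagonal_mul, abs_mul, Pi.inv_apply,
    abs_of_pos (inv_pos.2 (jetWeight_pos hτ (by linarith) i))]
  exact mul_le_mul (inv_jetWeight_le hτ hτ1 hQ i) hadj (abs_nonneg _) (by positivity)

lemma one_le_covolume_weightedJet {B a b : ℝ} (hτ : 0 < τ) (hτ1 : τ ≤ 1) (hB : 1 ≤ B)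
    (hadj : ∀ x ∈ Icc a b, ∀ i j, |((jetMatrix m).adjugate i j).eval x| ≤ B)
    (hQ : ((m + 2) * B / τ) ^ (m + 2) ≤ Q)
    (hab : 2 * (m + 2) * (((m + 2) * B / τ) ^ (m + 2) / Q) ≤ b - a)
    (W : Submodule ℚ (Fin (m + 2) → ℚ)) :
    ∃ x ∈ Icc a b, 1 ≤ covolume W (weightedJet (jetWeight m τ Q) x) := by
  have base_ge_one : 1 ≤ (m + 2) * B / τ := by
    rw [one_le_div₀ hτ]
    nlinarith [(m.cast_nonneg : (0 : ℝ) ≤ m)]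
  set L := ((m + 2) * B / τ) ^ (m + 2)
  have hL1 : 1 ≤ L := one_le_pow₀ base_ge_one
  have hQ0 : 0 < Q := by linarith
  have hle : a ≤ b := sub_nonneg.1 (le_trans (by positivity) hab)
  have hrank : finrank ℚ W ≤ m + 2 := by simpa using W.finrank_le
  obtain h0 | h0 := eq_or_ne (finrank ℚ W) 0
  · exact ⟨a, left_mem_Icc.2 hle, (covolume_eq_one_of_finrank_eq_zero h0 _).ge⟩
  obtain htop | hlt := hrank.eq_or_lt
  · exact ⟨a, left_mem_Icc.2 hle, (prod_jetWeight m hτ.ne' hQ0.ne').ge.trans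
      (prod_le_covolume_weightedJet htop _ a)⟩
  obtain ⟨x, hx, hbound⟩ := exists_pow_le_covolume_weightedJet h0 (jetWeight_pos hτ hQ0)
    (div_pos (by linarith) hQ0) ((div_le_one hQ0).2 hQ) hab
    fun x hx i j => abs_weightedJetInv_jetWeight_le hτ hτ1 (hL1.trans hQ) (hadj x hx i j)
  refine ⟨x, hx, ?_⟩
  have hpos : 0 < L / Q ^ (m + 2 - finrank ℚ W) := by positivity
  refine le_of_mul_le_mul_left ?_ hpos
  calc L / Q ^ (m + 2 - finrank ℚ W) * 1 ≤ (L / Q) ^ (m + 2 - finrank ℚ W) := by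
        rw [mul_one, div_pow]
        gcongr
        exact le_self_pow₀ hL1 (by omega)
    _ ≤ _ := hbound
    _ ≤ L / Q ^ (m + 2 - finrank ℚ W) * _ := by
        refine mul_le_mul_of_nonneg_right
          ((pow_mul_inv_jetWeight_le hτ hQ0 hB h0 hrank).trans ?_) (covolume_nonneg W _)
        gcongr
        exact pow_le_pow_right₀ base_ge_one hrank

end JetWeight

/-- The points `x` at which some nonzero integer polynomial `P` of degree at most `n` and height at
most `Q` satisfies `|P x| < Q⁻ⁿ` and `|P' x| ∈ s`. -/
def smallValueSet (n Q : ℕ) (s : Set ℝ) : Set ℝ :=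
  {x | ∃ P : ℤ[X], P ≠ 0 ∧ P.natDegree ≤ n ∧ (∀ j, |P.coeff j| ≤ (Q : ℤ)) ∧
    |aeval x P| < ((Q : ℝ) ^ n)⁻¹ ∧ |aeval x (derivative P)| ∈ s}

section TinyDerivative

variable {m : ℕ}

lemma abs_coeff_mul_weightedJet_le {P : ℤ[X]} {Q : ℕ} {τ x : ℝ} (hP : P.natDegree ≤ m + 1)
    (hQ : 0 < Q) (hτ : 0 < τ) (hcoeff : ∀ j, |P.coeff j| ≤ (Q : ℤ))
    (hx : |aeval x P| < ((Q : ℝ) ^ (m + 1))⁻¹)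
    (hx' : |aeval x (derivative P)| < τ ^ (m + 2) * Q) (j : Fin (m + 2)) :
    |∑ i : Fin (m + 2), (P.coeff i : ℝ) * weightedJet (jetWeight m τ Q) x i j| ≤ τ := by
  have hQ' : (0 : ℝ) < Q := Nat.cast_pos.2 hQ
  have hj : |(P.coeff j : ℝ)| ≤ Q := by exact_mod_cast hcoeff j
  have hsum := sum_coeff_mul_weightedJet (p := P.map (Int.castRingHom ℝ))
    (natDegree_map_le.trans hP) (jetWeight m τ Q) x j
  simp only [coeff_map, eq_intCast, derivative_map, eval_map, ← algebraMap_int_eq,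
    ← aeval_def] at hsum
  rw [hsum, abs_mul, abs_of_pos (jetWeight_pos hτ hQ' j), ← le_div_iff₀ (jetWeight_pos hτ hQ' j),
    jetWeight]
  split_ifs
  · rw [← div_div, div_self hτ.ne', one_div]
    exact hx.le
  · rw [div_div_cancel₀ hτ.ne']
    exact hx'.le
  · rwa [div_div_cancel₀ hτ.ne']

theorem exists_volume_smallValueSet_Iio_le (m : ℕ) (R : ℝ) {θ : ℝ} (hθ : 0 < θ) :
    ∃ δ > (0 : ℝ), ∃ c > (0 : ℝ), ∀ Q : ℕ, c ≤ Q → ∀ a b : ℝ, Icc a b ⊆ Icc (-R) R → c / Q ≤ b - a →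
      volume (smallValueSet (m + 1) Q (Iio (δ * Q)) ∩ Icc a b) ≤ ENNReal.ofReal (θ * (b - a)) := by
  obtain ⟨B, hB, hadj⟩ := exists_one_le_forall_abs_eval_le
    (fun ij : Fin (m + 2) × Fin (m + 2) => (jetMatrix m).adjugate ij.1 ij.2)
    (isCompact_Icc (a := -R) (b := R))
  obtain ⟨ε, hε, hε1, hvol⟩ := IsGood.exists_volume_not_marked_le
    (S := Submodule ℚ (Fin (m + 2) → ℚ)) (N := m + 3)
    (fun η hη => ⟨polynomialModulus_pos ((m + 2) * (m + 1)) hη, polynomialModulus_le_one _ hη⟩)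
    (fun F hF => by simpa using card_le_of_isChain_submodule hF) (m + 3) hθ one_pos le_rfl
  set τ : ℝ := ε / (m + 3) with hτ
  have hτ0 : 0 < τ := by positivity
  have hτε : (m + 2) * τ < ε := by
    rw [hτ, mul_div_assoc', div_lt_iff₀ (by positivity)]
    linarith
  have hτ1 : τ ≤ 1 :=
    div_le_one_of_le₀ (by linarith [(m.cast_nonneg : (0 : ℝ) ≤ m)]) (by positivity)
  set L : ℝ := ((m + 2) * B / τ) ^ (m + 2)
  have hL0 : 0 < L := by positivity
  have hLc : L ≤ 2 * (m + 2) * L :=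
    le_mul_of_one_le_left hL0.le (by linarith [(m.cast_nonneg : (0 : ℝ) ≤ m)])
  refine ⟨τ ^ (m + 2), by positivity, 2 * (m + 2) * L, by positivity, fun Q hQ a b hR hab => ?_⟩
  have hQ0 : (0 : ℝ) < Q := hL0.trans_le (hLc.trans hQ)
  have hlt : a < b := sub_pos.1 (lt_of_lt_of_le (by positivity) hab)
  have hsup (W : Submodule ℚ (Fin (m + 2) → ℚ)) := one_le_covolume_weightedJet hτ0 hτ1 hB
    (fun x hx i j => hadj (i, j) x (hR hx)) (hLc.trans hQ) (mul_div_assoc _ L _ ▸ hab) W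
  refine (measure_mono (inter_subset_inter_left _ ?_)).trans (hvol
    (fun W x => covolume W (weightedJet (jetWeight m τ Q) x))
    (fun W => isGood_covolume_weightedJet W _) ∅ (by simp) (by simp) a b hlt fun W _ => hsup W)
  rintro x ⟨P, hP0, hP, hcoeff, hx, hx'⟩
  refine not_marked_covolume hτ0.le (by simpa using hτε) (v := fun i => P.coeff i) (fun h => hP0 ?_)
    (abs_coeff_mul_weightedJet_le hP (Nat.cast_pos.1 hQ0) hτ0 hcoeff hx hx')
  ext j
  obtain hj | hj := lt_or_ge j (m + 2)
  · exact congrFun h ⟨j, hj⟩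
  · exact coeff_eq_zero_of_natDegree_lt (by omega)

end TinyDerivative

section Counting

lemma measure_iUnion_int_le {α : Type*} [MeasurableSpace α] {μ : Measure α} {s : ℤ → Set α}
    {L K : ℝ} (hL : 0 ≤ L) (hK : 0 ≤ K)
    (hsub : ∀ i j, (s i).Nonempty → (s j).Nonempty → (i : ℝ) - j ≤ L)
    (hμ : ∀ i, μ (s i) ≤ ENNReal.ofReal K) :
    μ (⋃ i, s i) ≤ ENNReal.ofReal ((L + 1) * K) := by
  by_cases hne : ∃ i, (s i).Nonempty
  · obtain ⟨j, hj⟩ := hne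
    have hfloor (i k : ℤ) (hi : (s i).Nonempty) (hk : (s k).Nonempty) : i - k ≤ ⌊L⌋ :=
      Int.le_floor.2 (by exact_mod_cast hsub i k hi hk)
    obtain ⟨k, hk, hleast⟩ := Int.exists_least_of_bdd (P := fun i => (s i).Nonempty)
      ⟨j - ⌊L⌋, fun i hi => by linarith [hfloor j i hj hi]⟩ ⟨j, hj⟩
    have hcover : ⋃ i, s i ⊆ ⋃ i ∈ Finset.Icc k (k + ⌊L⌋), s i := by
      refine iUnion_subset fun i x hx => mem_biUnion (x := i) ?_ hx
      exact Finset.mem_coe.2 (Finset.mem_Icc.2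
        ⟨hleast i ⟨x, hx⟩, by linarith [hfloor i k ⟨x, hx⟩ hk]⟩)
    have hcard : ((Finset.Icc k (k + ⌊L⌋)).card : ℝ) ≤ L + 1 := by
      have hnonneg := Int.floor_nonneg.2 hL
      have hcard' : ((Finset.Icc k (k + ⌊L⌋)).card : ℤ) = ⌊L⌋ + 1 := by
        rw [Int.card_Icc]
        lia
      calc ((Finset.Icc k (k + ⌊L⌋)).card : ℝ) = ⌊L⌋ + 1 := by exact_mod_cast hcard'
        _ ≤ L + 1 := by gcongr; exact Int.floor_le L
    calc μ (⋃ i, s i) ≤ ∑ i ∈ Finset.Icc k (k + ⌊L⌋), μ (s i) :=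
          (measure_mono hcover).trans (measure_biUnion_finset_le _ _)
      _ ≤ ∑ _i ∈ Finset.Icc k (k + ⌊L⌋), ENNReal.ofReal K := Finset.sum_le_sum fun i _ => hμ i
      _ = ENNReal.ofReal ((Finset.Icc k (k + ⌊L⌋)).card * K) := by
          rw [Finset.sum_const, nsmul_eq_mul, ENNReal.ofReal_mul (by positivity),
            ENNReal.ofReal_natCast]
      _ ≤ ENNReal.ofReal ((L + 1) * K) := by gcongr
  · push Not at hne
    simp [hne]

variable {f f' : ℝ → ℝ} {a b D E r M : ℝ}

lemma exists_sub_eq_mul_of_hasDerivAt (hf : ∀ x, HasDerivAt f (f' x) x) {x y : ℝ}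
    (hx : x ∈ Icc a b) (hy : y ∈ Icc a b) :
    ∃ z ∈ Icc a b, f x - f y = f' z * (x - y) := by
  obtain ⟨z, hz, h⟩ := domain_mvt (fun x _ => (hf x).hasFDerivAt.hasFDerivWithinAt)
    (convex_Icc a b) hy hx
  exact ⟨z, (convex_Icc a b).segment_subset hy hx hz, by simpa [mul_comm] using h⟩

lemma volume_setOf_abs_lt_le_of_le_abs_deriv (hf : ∀ x, HasDerivAt f (f' x) x) (hM : 0 < M)
    (hf' : ∀ x ∈ Icc a b, M ≤ |f' x|) :
    volume ({x | |f x| < r} ∩ Icc a b) ≤ ENNReal.ofReal (2 * r / M) := by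
  refine (Real.volume_le_diam _).trans (Metric.ediam_le ?_)
  rintro x ⟨hxr, hx⟩ y ⟨hyr, hy⟩
  obtain ⟨z, hz, hxy⟩ := exists_sub_eq_mul_of_hasDerivAt hf hx hy
  rw [edist_dist, Real.dist_eq]
  refine ENNReal.ofReal_le_ofReal ((le_div_iff₀ hM).2 ?_)
  calc |x - y| * M ≤ |x - y| * |f' z| := by gcongr; exact hf' z hz
    _ = |f x - f y| := by rw [hxy, abs_mul, mul_comm]
    _ ≤ |f x| + |f y| := abs_sub _ _
    _ ≤ 2 * r := by linarith [hxr.out, hyr.out]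

lemma int_sub_int_le_of_near (hf : ∀ x, HasDerivAt f (f' x) x) (hf' : ∀ x ∈ Icc a b, |f' x| ≤ M)
    {k l : ℤ} (hk : ({x | |f x + k| < r} ∩ Icc a b).Nonempty)
    (hl : ({x | |f x + l| < r} ∩ Icc a b).Nonempty) :
    (k : ℝ) - l ≤ M * (b - a) + 2 * r := by
  obtain ⟨u, hur, hu⟩ := hk
  obtain ⟨v, hvr, hv⟩ := hl
  obtain ⟨z, hz, huv⟩ := exists_sub_eq_mul_of_hasDerivAt hf hv hu
  have hdiff : f v - f u ≤ M * (b - a) := by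
    refine (le_abs_self _).trans ?_
    rw [huv, abs_mul]
    exact mul_le_mul (hf' z hz) (Real.dist_le_of_mem_Icc hv hu) (abs_nonneg _)
      ((abs_nonneg _).trans (hf' z hz))
  linarith [(abs_lt.1 hur.out).2, (abs_lt.1 hvr.out).1]

/-- If `|f'|` is close to `Y` throughout, then `f` meets about `Y (b - a)` integers, and is within
`r` of each of them on a set of measure about `r / Y`. -/
lemma volume_near_int_le (hf : ∀ x, HasDerivAt f (f' x) x) (hD : 0 < D) (hr : 0 < r) (hr1 : r ≤ 1)
    (hDab : 12 ≤ D * (b - a))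
    (hosc : ∀ x ∈ Icc a b, ∀ y ∈ Icc a b, |f' x - f' y| ≤ D / 4) :
    volume ({x | D ≤ |f' x| ∧ ∃ k : ℤ, |f x + k| < r} ∩ Icc a b) ≤
      ENNReal.ofReal (4 * r * (b - a)) := by
  obtain hempty | ⟨y, ⟨hDy, -⟩, hy⟩ :=
    ({x | D ≤ |f' x| ∧ ∃ k : ℤ, |f x + k| < r} ∩ Icc a b).eq_empty_or_nonempty
  · simp [hempty]
  set Y := |f' y|
  have hY : 0 < Y := hD.trans_le hDy
  have hab : 0 < b - a := pos_of_mul_pos_right (by linarith : 0 < D * (b - a)) hD.le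
  have hlower (x) (hx : x ∈ Icc a b) : 3 * Y / 4 ≤ |f' x| := by
    linarith [hosc y hy x hx, abs_sub_abs_le_abs_sub (f' y) (f' x)]
  have hupper (x) (hx : x ∈ Icc a b) : |f' x| ≤ 5 * Y / 4 := by
    linarith [hosc x hx y hy, abs_sub_abs_le_abs_sub (f' x) (f' y)]
  have hcover : {x | D ≤ |f' x| ∧ ∃ k : ℤ, |f x + k| < r} ∩ Icc a b ⊆
      ⋃ k : ℤ, {x | |f x + k| < r} ∩ Icc a b := by
    rintro x ⟨⟨-, k, hk⟩, hx⟩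
    exact mem_iUnion.2 ⟨k, hk, hx⟩
  calc _ ≤ volume (⋃ k : ℤ, {x | |f x + k| < r} ∩ Icc a b) := measure_mono hcover
    _ ≤ ENNReal.ofReal ((5 * Y / 4 * (b - a) + 2 * r + 1) * (2 * r / (3 * Y / 4))) :=
        measure_iUnion_int_le (by positivity) (by positivity)
          (fun _ _ => int_sub_int_le_of_near hf hupper) fun k =>
          volume_setOf_abs_lt_le_of_le_abs_deriv (fun x => (hf x).add_const _) (by positivity)
            hlower
    _ ≤ ENNReal.ofReal (3 / 2 * (Y * (b - a)) * (2 * r / (3 * Y / 4))) := by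
        gcongr
        linarith [mul_le_mul_of_nonneg_right hDy hab.le]
    _ = ENNReal.ofReal (4 * r * (b - a)) := by
        congr 1
        field_simp

/-- Only about `2 E` of the integers `k` keep `|f' + k|` below `E`. -/
lemma volume_near_int_mul_add_int_le (hf : ∀ x, HasDerivAt f (f' x) x) (hD : 0 < D) (hE : 1 ≤ E)
    (hr : 0 < r) (hr1 : r ≤ 1) (hDab : 12 ≤ D * (b - a))
    (hosc : ∀ x ∈ Icc a b, ∀ y ∈ Icc a b, |f' x - f' y| ≤ D / 4) :
    volume ({x | ∃ k l : ℤ, |f x + k * x + l| < r ∧ |f' x + k| ∈ Ico D E} ∩ Icc a b) ≤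
      ENNReal.ofReal (4 * E * (4 * r * (b - a))) := by
  obtain hempty | ⟨x, ⟨k, l, -, hlower, hupper⟩, -⟩ :=
    ({x | ∃ k l : ℤ, |f x + k * x + l| < r ∧ |f' x + k| ∈ Ico D E} ∩ Icc a b).eq_empty_or_nonempty
  · rw [hempty, measure_empty]
    exact zero_le
  have hab : 0 < b - a := pos_of_mul_pos_right (by linarith : 0 < D * (b - a)) hD.le
  set s : ℤ → Set ℝ := fun k =>
    {x | ∃ l : ℤ, |f x + k * x + l| < r ∧ |f' x + k| ∈ Ico D E} ∩ Icc a b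
  have hcover : {x | ∃ k l : ℤ, |f x + k * x + l| < r ∧ |f' x + k| ∈ Ico D E} ∩ Icc a b ⊆
      ⋃ k, s k := by
    rintro x ⟨⟨k, hk⟩, hx⟩
    exact mem_iUnion.2 ⟨k, hk, hx⟩
  have hspread (k l : ℤ) (hk : (s k).Nonempty) (hl : (s l).Nonempty) :
      (k : ℝ) - l ≤ 2 * E + D / 4 := by
    obtain ⟨x, ⟨-, -, -, hxE⟩, hx⟩ := hk
    obtain ⟨y, ⟨-, -, -, hyE⟩, hy⟩ := hl
    linarith [(abs_lt.1 hxE).2, (abs_lt.1 hyE).1, (abs_le.1 (hosc y hy x hx)).2]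
  have hvol (k : ℤ) : volume (s k) ≤ ENNReal.ofReal (4 * r * (b - a)) := by
    refine (measure_mono ?_).trans (volume_near_int_le (f := fun x => f x + k * x)
      (f' := fun x => f' x + k) (fun x => ?_) hD hr hr1 hDab (by simpa using hosc))
    · rintro x ⟨⟨l, hl, hx'⟩, hx⟩
      exact ⟨⟨hx'.1, l, hl⟩, hx⟩
    · simpa using (hf x).fun_add ((hasDerivAt_id x).const_mul (k : ℝ))
  calc _ ≤ volume (⋃ k, s k) := measure_mono hcover
    _ ≤ ENNReal.ofReal ((2 * E + D / 4 + 1) * (4 * r * (b - a))) :=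
        measure_iUnion_int_le (by positivity) (by positivity) hspread hvol
    _ ≤ ENNReal.ofReal (4 * E * (4 * r * (b - a))) := by
        gcongr
        linarith [hlower.trans_lt hupper]

end Counting

section LargerDerivative

variable {p : ℝ[X]} {n m Q : ℕ} {H R x y : ℝ}

lemma abs_eval_le (hp : p.natDegree ≤ n) (hcoeff : ∀ j, |p.coeff j| ≤ H) (hx : |x| ≤ R) :
    |p.eval x| ≤ H * ∑ i ∈ Finset.range (n + 1), R ^ i := by
  have hH : 0 ≤ H := (abs_nonneg _).trans (hcoeff 0)
  rw [eval_eq_sum_range' (Nat.lt_succ_of_le hp), Finset.mul_sum]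
  refine (Finset.abs_sum_le_sum_abs _ _).trans (Finset.sum_le_sum fun i _ => ?_)
  rw [abs_mul, abs_pow]
  gcongr
  exact hcoeff i

lemma abs_coeff_derivative_le (hp : p.natDegree ≤ n) (hcoeff : ∀ j, |p.coeff j| ≤ H) (j : ℕ) :
    |p.derivative.coeff j| ≤ n * H := by
  have hH : 0 ≤ H := (abs_nonneg _).trans (hcoeff 0)
  obtain hj | hj := lt_or_ge j n
  · rw [coeff_derivative, abs_mul, mul_comm, abs_of_nonneg (by positivity)]
    exact mul_le_mul (by exact_mod_cast hj) (hcoeff _) (abs_nonneg _) (by positivity)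
  · rw [coeff_derivative, coeff_eq_zero_of_natDegree_lt (by omega), zero_mul, abs_zero]
    positivity

lemma abs_eval_derivative_sub_le (hp : p.natDegree ≤ n) (hcoeff : ∀ j, |p.coeff j| ≤ H)
    (hx : |x| ≤ R) (hy : |y| ≤ R) :
    |p.derivative.eval x - p.derivative.eval y| ≤
      n * (n * H) * (∑ i ∈ Finset.range (n + 1), R ^ i) * |x - y| := by
  have hp' : p.derivative.natDegree ≤ n := (natDegree_derivative_le p).trans (by omega)
  have hp'' : p.derivative.derivative.natDegree ≤ n :=
    (natDegree_derivative_le _).trans (by omega)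
  obtain ⟨z, hz, h⟩ := exists_sub_eq_mul_of_hasDerivAt (fun x => p.derivative.hasDerivAt x)
    (abs_le.1 hx) (abs_le.1 hy)
  rw [h, abs_mul]
  gcongr
  exact abs_eval_le hp'' (abs_coeff_derivative_le hp' (abs_coeff_derivative_le hp hcoeff))
    (abs_le.2 hz)

lemma two_mul_add_one_pow_le {q : ℝ} (hm : (m : ℝ) ≤ q) :
    (2 * q + 1) ^ m ≤ 2 * (2 * q) ^ m := by
  have hq : 0 ≤ q := m.cast_nonneg.trans hm
  have hpos : 0 < 2 * q + 1 := by linarith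
  have hle : (2 * q + 1)⁻¹ ≤ 1 := inv_le_one_of_one_le₀ (by linarith)
  have hbernoulli := one_add_mul_le_pow (a := -(2 * q + 1)⁻¹) (by linarith) m
  have hbase : 1 + -(2 * q + 1)⁻¹ = 2 * q / (2 * q + 1) := by
    field_simp
    ring
  have hhalf : m * (2 * q + 1)⁻¹ ≤ 1 / 2 := by
    rw [← div_eq_mul_inv, div_le_iff₀ hpos]
    linarith
  rw [hbase, div_pow, mul_neg] at hbernoulli
  have h : 1 / 2 ≤ (2 * q) ^ m / (2 * q + 1) ^ m := by linarith
  rw [le_div_iff₀ (by positivity)] at h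
  linarith

/-- The polynomial `∑ uᵢ X ^ (i + 2)`: an integer polynomial without its affine part. -/
noncomputable def higherPart (u : Fin m → ℤ) : ℝ[X] :=
  ∑ i : Fin m, monomial ((i : ℕ) + 2) (u i : ℝ)

lemma natDegree_higherPart_le (u : Fin m → ℤ) : (higherPart u).natDegree ≤ m + 1 :=
  natDegree_sum_le_of_forall_le _ _ fun i _ => (natDegree_monomial_le _).trans (by omega)

lemma abs_coeff_higherPart_le {u : Fin m → ℤ} (hu : ∀ i, |u i| ≤ (Q : ℤ)) (j : ℕ) :
    |(higherPart u).coeff j| ≤ Q := by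
  simp only [higherPart, finsetSum_coeff, coeff_monomial]
  by_cases hj : ∃ i : Fin m, (i : ℕ) + 2 = j
  · obtain ⟨i, rfl⟩ := hj
    simp only [add_left_inj, Fin.val_inj, Finset.sum_ite_eq', Finset.mem_univ, if_true]
    exact_mod_cast hu i
  · push Not at hj
    simp [hj]

lemma abs_eval_derivative_higherPart_sub_le {u : Fin m → ℤ} {δ a b : ℝ}
    (hu : ∀ i, |u i| ≤ (Q : ℤ)) (hR : Icc a b ⊆ Icc (-R) R)
    (hosc : (m + 1) * (m + 1) * (∑ i ∈ Finset.range (m + 2), R ^ i) * (b - a) ≤ δ / 4)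
    (hx : x ∈ Icc a b) (hy : y ∈ Icc a b) :
    |(derivative (higherPart u)).eval x - (derivative (higherPart u)).eval y| ≤ δ * Q / 4 := by
  have hR0 : 0 ≤ R := (abs_nonneg x).trans (abs_le.2 (hR hx))
  calc _ ≤ ((m + 1 : ℕ) : ℝ) * ((m + 1 : ℕ) * Q) *
        (∑ i ∈ Finset.range (m + 2), R ^ i) * |x - y| :=
        abs_eval_derivative_sub_le (natDegree_higherPart_le u) (abs_coeff_higherPart_le hu)
          (abs_le.2 (hR hx)) (abs_le.2 (hR hy))
    _ ≤ ((m + 1 : ℕ) : ℝ) * ((m + 1 : ℕ) * Q) *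
        (∑ i ∈ Finset.range (m + 2), R ^ i) * (b - a) := by
        gcongr
        exact Real.dist_le_of_mem_Icc hx hy
    _ ≤ δ * Q / 4 := by
        push_cast
        linarith [mul_le_mul_of_nonneg_right hosc (Q.cast_nonneg : (0 : ℝ) ≤ Q)]

lemma map_eq_higherPart_add {P : ℤ[X]} (hP : P.natDegree ≤ m + 1) :
    P.map (Int.castRingHom ℝ) = higherPart (fun i : Fin m => P.coeff (i + 2)) +
      C (P.coeff 1 : ℝ) * X + C (P.coeff 0 : ℝ) := by
  conv_lhs => rw [as_sum_range' P (m + 2) (by omega)]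
  rw [Finset.sum_range_succ', Finset.sum_range_succ', Finset.sum_range]
  simp [higherPart, Polynomial.map_sum, ← C_mul_X_pow_eq_monomial]

lemma card_piFinset_Icc_le (hm : m ≤ Q) :
    ((Fintype.piFinset fun _ : Fin m => Finset.Icc (-(Q : ℤ)) Q).card : ℝ) ≤
      2 * (2 * (Q : ℝ)) ^ m := by
  have hcard : (Finset.Icc (-(Q : ℤ)) Q).card = 2 * Q + 1 := by
    rw [Int.card_Icc]
    omega
  rw [Fintype.card_piFinset_const, hcard]
  push_cast
  exact two_mul_add_one_pow_le (by exact_mod_cast hm)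

lemma smallValueSet_subset_iUnion_higherPart (m Q : ℕ) (s : Set ℝ) :
    smallValueSet (m + 1) Q s ⊆
      ⋃ u ∈ Fintype.piFinset fun _ : Fin m => Finset.Icc (-(Q : ℤ)) Q,
        {x | ∃ k l : ℤ, |(higherPart u).eval x + k * x + l| < ((Q : ℝ) ^ (m + 1))⁻¹ ∧
          |(derivative (higherPart u)).eval x + k| ∈ s} := by
  rintro x ⟨P, -, hP, hcoeff, hx, hx'⟩
  refine mem_biUnion (x := fun i : Fin m => P.coeff (i + 2))
    (Fintype.mem_piFinset.2 fun i => Finset.mem_Icc.2 (abs_le.1 (hcoeff _)))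
    ⟨P.coeff 1, P.coeff 0, ?_, ?_⟩
  · rw [aeval_def, algebraMap_int_eq, ← eval_map, map_eq_higherPart_add hP] at hx
    simpa using hx
  · rw [aeval_def, algebraMap_int_eq, ← eval_map, ← derivative_map,
      map_eq_higherPart_add hP] at hx'
    simpa using hx'

theorem volume_smallValueSet_Ico_le {δ δ₀ a b : ℝ} (hδ : 0 < δ) (hQ : 0 < Q) (hm : m ≤ Q)
    (hδ₀ : 1 ≤ δ₀ * Q) (hR : Icc a b ⊆ Icc (-R) R) (hab : 12 ≤ δ * Q * (b - a))
    (hosc : (m + 1) * (m + 1) * (∑ i ∈ Finset.range (m + 2), R ^ i) * (b - a) ≤ δ / 4) :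
    volume (smallValueSet (m + 1) Q (Ico (δ * Q) (δ₀ * Q)) ∩ Icc a b) ≤
      ENNReal.ofReal (2 ^ (m + 1 + 4) * δ₀ * (b - a)) := by
  have hba : 0 < b - a := pos_of_mul_pos_right (by linarith : 0 < δ * Q * (b - a)) (by positivity)
  set r : ℝ := ((Q : ℝ) ^ (m + 1))⁻¹ with hr
  have hr1 : r ≤ 1 := inv_le_one_of_one_le₀ (one_le_pow₀ (by exact_mod_cast hQ))
  set U := Fintype.piFinset fun _ : Fin m => Finset.Icc (-(Q : ℤ)) Q
  set s : (Fin m → ℤ) → Set ℝ := fun u =>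
    {x | ∃ k l : ℤ, |(higherPart u).eval x + k * x + l| < r ∧
      |(derivative (higherPart u)).eval x + k| ∈ Ico (δ * Q) (δ₀ * Q)} ∩ Icc a b
  have hcover : smallValueSet (m + 1) Q (Ico (δ * Q) (δ₀ * Q)) ∩ Icc a b ⊆ ⋃ u ∈ U, s u := by
    rw [← iUnion₂_inter]
    exact inter_subset_inter_left _ (smallValueSet_subset_iUnion_higherPart m Q _)
  have hvol (u) (hu : u ∈ U) :
      volume (s u) ≤ ENNReal.ofReal (4 * (δ₀ * Q) * (4 * r * (b - a))) := by
    have hu' (i) : |u i| ≤ (Q : ℤ) := abs_le.2 (Finset.mem_Icc.1 (Fintype.mem_piFinset.1 hu i))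
    exact volume_near_int_mul_add_int_le (fun x => (higherPart u).hasDerivAt x) (by positivity) hδ₀
      (by positivity) hr1 hab
      fun x hx y hy => abs_eval_derivative_higherPart_sub_le hu' hR hosc hx hy
  calc _ ≤ ∑ u ∈ U, volume (s u) := (measure_mono hcover).trans (measure_biUnion_finset_le _ _)
    _ ≤ ∑ _u ∈ U, ENNReal.ofReal (4 * (δ₀ * Q) * (4 * r * (b - a))) := Finset.sum_le_sum hvol
    _ = ENNReal.ofReal (U.card * (4 * (δ₀ * Q) * (4 * r * (b - a)))) := by
        rw [Finset.sum_const, nsmul_eq_mul, ENNReal.ofReal_mul (p := U.card) (by positivity),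
          ENNReal.ofReal_natCast]
    _ ≤ ENNReal.ofReal (2 * (2 * (Q : ℝ)) ^ m * (4 * (δ₀ * Q) * (4 * r * (b - a)))) := by
        gcongr
        exact card_piFinset_Icc_le hm
    _ = ENNReal.ofReal (2 ^ (m + 1 + 4) * δ₀ * (b - a)) := by
        congr 1
        rw [hr]
        field_simp
        ring

end LargerDerivative

section ShortIntervals

lemma smallValueSet_Iio_subset_union (n Q : ℕ) (A B : ℝ) :
    smallValueSet n Q (Iio B) ⊆ smallValueSet n Q (Iio A) ∪ smallValueSet n Q (Ico A B) := by
  rintro x ⟨P, hP0, hP, hcoeff, hx, hx'⟩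
  obtain h | h := lt_or_ge |aeval x (derivative P)| A
  · exact .inl ⟨P, hP0, hP, hcoeff, hx, h⟩
  · exact .inr ⟨P, hP0, hP, hcoeff, hx, h, hx'⟩

open Filter in
theorem exists_volume_smallValueSet_Iio_le_of_short (m : ℕ) (R : ℝ) {δ₀ θ : ℝ} (hδ₀ : 0 < δ₀)
    (hθ : 0 < θ) :
    ∃ c > (0 : ℝ), ∃ Q₀ : ℕ, ∀ Q : ℕ, Q₀ ≤ Q → ∀ a b : ℝ, Icc a b ⊆ Icc (-R) R →
      c / Q ≤ b - a → b - a ≤ 2 * (c / Q) →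
      volume (smallValueSet (m + 1) Q (Iio (δ₀ * Q)) ∩ Icc a b) ≤
        ENNReal.ofReal ((2 ^ (m + 1 + 4) * δ₀ + θ) * (b - a)) := by
  obtain ⟨δ, hδ, c₀, hc₀, htiny⟩ := exists_volume_smallValueSet_Iio_le m R hθ
  set c : ℝ := max c₀ (12 / δ)
  have hc : 0 < c := lt_max_of_lt_left hc₀
  have hcδ : 12 ≤ δ * c := (div_le_iff₀' hδ).1 (le_max_right _ _)
  set K : ℝ := (m + 1) * (m + 1) * ∑ i ∈ Finset.range (m + 2), R ^ i
  have hlarge (C : ℝ) : ∀ᶠ Q : ℕ in atTop, C ≤ Q :=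
    tendsto_natCast_atTop_atTop.eventually_ge_atTop C
  obtain ⟨Q₀, hQ₀⟩ := eventually_atTop.1 <| (hlarge c₀).and <| (eventually_ge_atTop m).and <|
    (hlarge (1 / δ₀)).and (hlarge (8 * c * |K| / δ))
  refine ⟨c, hc, Q₀, fun Q hQ a b hR hlong hshort => ?_⟩
  obtain ⟨hQc, hQm, hQδ₀, hQK⟩ := hQ₀ Q hQ
  have hQ0 : (0 : ℝ) < Q := hc₀.trans_le hQc
  have hlen : 0 ≤ b - a := (by positivity : 0 ≤ c / Q).trans hlong
  have hIio := htiny Q hQc a b hR (le_trans (by gcongr; exact le_max_left _ _) hlong)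
  have hIco := volume_smallValueSet_Ico_le hδ (Nat.cast_pos.1 hQ0) hQm
    ((div_le_iff₀' hδ₀).1 hQδ₀) hR
    (calc 12 ≤ δ * Q * (c / Q) := by rwa [mul_assoc, mul_div_cancel₀ _ hQ0.ne']
      _ ≤ δ * Q * (b - a) := by gcongr)
    (calc K * (b - a) ≤ |K| * (2 * (c / Q)) := by gcongr; exact le_abs_self K
      _ = 8 * c * |K| / Q / 4 := by ring
      _ ≤ δ / 4 := by gcongr; exact (div_le_comm₀ hδ hQ0).1 hQK)
  calc _ ≤ volume (smallValueSet (m + 1) Q (Iio (δ * Q)) ∩ Icc a b) +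
        volume (smallValueSet (m + 1) Q (Ico (δ * Q) (δ₀ * Q)) ∩ Icc a b) := by
        refine (measure_mono ?_).trans (measure_union_le _ _)
        rw [← union_inter_distrib_right]
        exact inter_subset_inter_left _ (smallValueSet_Iio_subset_union _ _ _ _)
    _ ≤ ENNReal.ofReal ((2 ^ (m + 1 + 4) * δ₀ + θ) * (b - a)) := by
        rw [add_mul, add_comm, ENNReal.ofReal_add (by positivity) (by positivity)]
        exact add_le_add hIco hIio

end ShortIntervals

end SmallPolynomial

open SmallPolynomial MeasureTheory Set in
theorem measure_of_small_polynomial_small_derivative_set_general {n : ℕ} (hn : 1 ≤ n) (R : ℝ)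
    {δ₀ θ : ℝ} (hδ₀ : 0 < δ₀) (hθ : 2 ^ (n + 4) * δ₀ < θ) :
    ∃ c > (0 : ℝ), ∃ Q₀ : ℕ, ∀ Q : ℕ, Q₀ < Q → ∀ a b : ℝ, Icc a b ⊆ Icc (-R) R → c / Q < b - a →
      volume (Icc a b ∩ smallValueSet n Q (Iio (δ₀ * Q))) < ENNReal.ofReal (θ * (b - a)) := by
  obtain ⟨m, rfl⟩ := Nat.exists_eq_add_of_le' hn
  obtain ⟨θ', hθ', hθ'θ⟩ := exists_between hθ
  obtain ⟨c, hc, Q₀, hshort⟩ :=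
    exists_volume_smallValueSet_Iio_le_of_short m R hδ₀ (sub_pos.2 hθ')
  refine ⟨c, hc, Q₀, fun Q hQ a b hR hab => ?_⟩
  have hcQ : 0 < c / Q := div_pos hc (Nat.cast_pos.2 (Q₀.zero_le.trans_lt hQ))
  have hθ'0 : 0 < θ' := lt_trans (by positivity) hθ'
  calc volume (Icc a b ∩ smallValueSet (m + 1) Q (Iio (δ₀ * Q)))
      ≤ ENNReal.ofReal (θ' * (b - a)) := by
        rw [inter_comm]
        refine measure_inter_Icc_le_of_short_intervals hθ'0.le hcQ (fun u v huv hlong hle => ?_)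
          hab.le
        simpa using hshort Q hQ.le u v (huv.trans hR) hlong hle
    _ < ENNReal.ofReal (θ * (b - a)) := by
        have hba := hcQ.trans hab
        exact (ENNReal.ofReal_lt_ofReal_iff (mul_pos (hθ'0.trans hθ'θ) hba)).2 (by gcongr)

/-- For `n ≥ 1` and `δ₀ = 2^{-n-8}·n^{-2}`, there are `c₁₃ > 0` and `Q₀` such that for
every integer `Q > Q₀` and every interval `I = [a,b] ⊆ [-1/2, 1/2]` with `|I| > c₁₃·Q⁻¹`,
the set of `x ∈ I` admitting a nonzero `P ∈ ℤ[t]`, `deg P ≤ n`, `H(P) ≤ Q`, with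
`|P(x)| < Q⁻ⁿ` and `|P'(x)| < δ₀·Q`, has Lebesgue measure less than `|I|/4`. -/
theorem measure_of_small_polynomial_small_derivative_set (n : ℕ) (hn : 1 ≤ n) :
    ∃ c₁₃ > (0 : ℝ), ∃ Q₀ : ℕ, ∀ Q : ℕ, Q₀ < Q →
      ∀ a b : ℝ, Set.Icc a b ⊆ Set.Icc (-(1/2) : ℝ) (1/2) →
        c₁₃ / (Q : ℝ) < b - a →
        MeasureTheory.volume
          {x : ℝ | x ∈ Set.Icc a b ∧ ∃ P : ℤ[X], P ≠ 0 ∧ P.natDegree ≤ n ∧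
            (∀ j, |P.coeff j| ≤ (Q : ℤ)) ∧
            |Polynomial.aeval x P| < ((Q : ℝ) ^ n)⁻¹ ∧
            |Polynomial.aeval x (derivative P)| < ((2 : ℝ) ^ (n + 8) * (n : ℝ) ^ 2)⁻¹ * (Q : ℝ)}
        < ENNReal.ofReal ((b - a) / 4) := by
  have hn' : (1 : ℝ) ≤ (n : ℝ) ^ 2 := one_le_pow₀ (by exact_mod_cast hn)
  have hδ₀ : (2 : ℝ) ^ (n + 4) * ((2 : ℝ) ^ (n + 8) * (n : ℝ) ^ 2)⁻¹ < 1 / 4 :=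
    calc (2 : ℝ) ^ (n + 4) * ((2 : ℝ) ^ (n + 8) * (n : ℝ) ^ 2)⁻¹
        = 1 / 16 * ((n : ℝ) ^ 2)⁻¹ := by rw [pow_add, pow_add]; field_simp; norm_num
      _ < 1 / 4 := by linarith [inv_le_one_of_one_le₀ hn']
  simp only [div_eq_inv_mul (_ - _) (4 : ℝ), inv_eq_one_div (4 : ℝ)]
  exact measure_of_small_polynomial_small_derivative_set_general hn (1 / 2) (by positivity) hδ₀
end
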